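/- Fix ε > 0 and an integer k ≥ 1. There exists an integer Δ_ε such that for every planar simple graph G with maximum degree Δ(G) ≥ max{Δ_ε, k⁴}, we have λ^l_{k,1}(G) ≤ (3/2 + ε)·Δ(G). -/

import Mathlib

open SimpleGraph

/-- A drawing of a simple graph in the plane: vertices are mapped to distinct points,
edges to arcs (injective continuous curves parametrised on `[0,1]`) joining the images of
their endpoints, whose interiors avoid the vertex points and each other. -/
structure PlaneEmbedding {V : Type*} (G : SimpleGraph V) where
  pos : V → ℝ × ℝ
  inj : Function.Injective pos
  arc : G.edgeSet → ℝ → ℝ × ℝ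
  arc_cont : ∀ e, ContinuousOn (arc e) (Set.Icc 0 1)
  arc_inj : ∀ e, Set.InjOn (arc e) (Set.Icc 0 1)
  arc_ends : ∀ e : G.edgeSet, ∃ u v : V, (e : Sym2 V) = s(u, v) ∧
      arc e 0 = pos u ∧ arc e 1 = pos v
  arc_avoid : ∀ e : G.edgeSet, ∀ t ∈ Set.Ioo (0:ℝ) 1, arc e t ∉ Set.range pos
  arc_disjoint : ∀ e f : G.edgeSet, e ≠ f → ∀ s ∈ Set.Ioo (0:ℝ) 1, ∀ t ∈ Set.Ioo (0:ℝ) 1,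
      arc e s ≠ arc f t

/-- A graph is planar if it admits a drawing in the plane. -/
def SimpleGraph.IsPlanar {V : Type*} (G : SimpleGraph V) : Prop :=
  Nonempty (PlaneEmbedding G)

/-- An `L(p,q)`-labelling: labels of adjacent vertices differ by at least `p`, and labels
of vertices at distance exactly two differ by at least `q`. -/
def SimpleGraph.IsLpqLabelling {V : Type*} (G : SimpleGraph V) (p q : ℕ) (f : V → ℤ) : Prop :=
  (∀ u v, G.Adj u v → (p : ℤ) ≤ |f u - f v|) ∧
  (∀ u v, u ≠ v → ¬ G.Adj u v → (∃ w, G.Adj u w ∧ G.Adj w v) → (q : ℤ) ≤ |f u - f v|)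

/-- The list version `λ^l_{p,q}(G)`: the least `t` such that for every assignment of lists
of `t` integers to the vertices there is an `L(p,q)`-labelling from the lists. -/
noncomputable def SimpleGraph.lambdaListNumber {V : Type*} (G : SimpleGraph V) (p q : ℕ) : ℕ :=
  sInf {t : ℕ | ∀ L : V → Finset ℤ, (∀ v, (L v).card = t) →
    ∃ f : V → ℤ, G.IsLpqLabelling p q f ∧ ∀ v, f v ∈ L v}

/-! ### Winding of planar paths and the non-planarity of `K₃,₃` -/

section Winding

open Complex

/-- Two continuous logarithms of the same function on a line have the same increments. -/
lemma exp_lift_increment_eq {F F' : ℝ → ℂ} (hF : Continuous F) (hF' : Continuous F')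
    (h : ∀ t, exp (F t) = exp (F' t)) (s t : ℝ) : F t - F s = F' t - F' s := by
  have key := Complex.isCoveringMap_exp.eq_of_comp_eq (A := ℝ) (g₁ := F)
    (g₂ := fun t => F' t + (F s - F' s)) hF (by fun_prop) ?_ s (by simp)
  · have := congrFun key t
    rw [this]; ring
  · ext t
    have h1 : exp (F s - F' s) = 1 := by
      rw [exp_sub, h s, div_self (exp_ne_zero _)]
    simp [exp_add, h1, h t]

/-- `HasTurn h x` says that the argument of the nowhere zero curve `h` increases by `x`
between times `0` and `1`. -/
def HasTurn (h : ℝ → ℂ) (x : ℝ) : Prop :=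
  ∃ F : ℝ → ℂ, Continuous F ∧ (∀ t, exp (F t) = h t) ∧ x = (F 1 - F 0).im

lemma HasTurn.unique {h : ℝ → ℂ} {x y : ℝ} (hx : HasTurn h x) (hy : HasTurn h y) : x = y := by
  obtain ⟨F, hF, hFh, rfl⟩ := hx
  obtain ⟨F', hF', hFh', rfl⟩ := hy
  rw [exp_lift_increment_eq hF hF' (fun t => by rw [hFh, hFh'])]

lemma HasTurn.neg {h : ℝ → ℂ} {x : ℝ} (hx : HasTurn h x) : HasTurn (fun t => - h t) x := by
  obtain ⟨F, hF, hFh, rfl⟩ := hx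
  exact ⟨fun t => F t + Real.pi * I, by fun_prop, fun t => by simp [exp_add, hFh], by simp⟩

lemma HasTurn.exists_int {h : ℝ → ℂ} {x : ℝ} (hx : HasTurn h x) :
    ∃ n : ℤ, x = arg (h 1) - arg (h 0) + 2 * Real.pi * n := by
  obtain ⟨F, hF, hFh, rfl⟩ := hx
  have key : ∀ t, ∃ n : ℤ, (F t).im = arg (h t) + n * (2 * Real.pi) := by
    intro t
    have hne : h t ≠ 0 := by rw [← hFh]; exact exp_ne_zero _
    have : exp (F t) = exp (log (h t)) := by rw [exp_log hne, hFh]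
    obtain ⟨n, hn⟩ := exp_eq_exp_iff_exists_int.1 this
    refine ⟨n, ?_⟩
    rw [hn]
    simp [log_im]
  obtain ⟨m, hm⟩ := key 1
  obtain ⟨n, hn⟩ := key 0
  refine ⟨m - n, ?_⟩
  rw [sub_im, hm, hn]
  push_cast
  ring

/-- The increments of the argument along the boundary of a square cancel. -/
lemma exists_hasTurn_square {γ γ' : ℝ → ℂ} (hγ : Continuous γ) (hγ' : Continuous γ')
    (hne : ∀ s t, γ s ≠ γ' t) :
    ∃ a b c d : ℝ, HasTurn (fun s => γ s - γ' 0) a ∧ HasTurn (fun t => γ' t - γ 1) b ∧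
      HasTurn (fun s => γ s - γ' 1) c ∧ HasTurn (fun t => γ' t - γ 0) d ∧ a + b - c - d = 0 := by
  have hsc : IsSimplyConnected (Set.univ : Set (ℝ × ℝ)) := by
    have : ContractibleSpace (Set.univ : Set (ℝ × ℝ)) :=
      (convex_univ (𝕜 := ℝ)).contractibleSpace Set.univ_nonempty
    exact SimplyConnectedSpace.ofContractible _
  obtain ⟨f, hfc, hf⟩ := exists_continuousOn_eqOn_exp_comp (X := ℝ × ℝ) hsc isOpen_univ
    (g := fun z => γ z.1 - γ' z.2) (by fun_prop)
    (by rintro ⟨z, -, hz⟩; exact hne z.1 z.2 (sub_eq_zero.1 hz))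
  rw [continuousOn_univ] at hfc
  have hf' : ∀ s t, exp (f (s, t)) = γ s - γ' t := fun s t => hf (Set.mem_univ (s, t))
  have h2 : HasTurn (fun t => γ' t - γ 1) (f (1, 1) - f (1, 0)).im := by
    have : HasTurn (fun t => γ 1 - γ' t) (f (1, 1) - f (1, 0)).im :=
      ⟨fun t => f (1, t), by fun_prop, fun t => hf' 1 t, rfl⟩
    simpa using this.neg
  have h4 : HasTurn (fun t => γ' t - γ 0) (f (0, 1) - f (0, 0)).im := by
    have : HasTurn (fun t => γ 0 - γ' t) (f (0, 1) - f (0, 0)).im :=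
      ⟨fun t => f (0, t), by fun_prop, fun t => hf' 0 t, rfl⟩
    simpa using this.neg
  refine ⟨(f (1, 0) - f (0, 0)).im, _, (f (1, 1) - f (0, 1)).im, _,
    ⟨fun s => f (s, 0), by fun_prop, fun s => hf' s 0, rfl⟩, h2,
    ⟨fun s => f (s, 1), by fun_prop, fun s => hf' s 1, rfl⟩, h4, ?_⟩
  simp only [sub_im]
  ring

/-- The arguments of opposite numbers differ by `π` up to sign. -/
lemma exists_arg_sub_arg_neg {z : ℂ} (hz : z ≠ 0) :
    ∃ n : ℤ, arg z - arg (-z) = Real.pi * (2 * n + 1) := by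
  rcases lt_trichotomy z.im 0 with h | h | h
  · exact ⟨-1, by rw [arg_neg_eq_arg_add_pi_of_im_neg h]; push_cast; ring⟩
  · have hre : z.re ≠ 0 := fun h' => hz (Complex.ext h' h)
    have hz' : z = (z.re : ℂ) := Complex.ext rfl (by simp [h])
    rcases lt_or_gt_of_ne hre with h' | h'
    · refine ⟨0, ?_⟩
      rw [hz', arg_ofReal_of_neg h', ← ofReal_neg, arg_ofReal_of_nonneg (by linarith)]
      simp
    · refine ⟨-1, ?_⟩
      rw [hz', arg_ofReal_of_nonneg h'.le, ← ofReal_neg, arg_ofReal_of_neg (by linarith)]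
      push_cast; ring
  · exact ⟨0, by rw [arg_neg_eq_arg_sub_pi_of_im_pos h]; push_cast; ring⟩

/-- The parity obstruction behind the non-planarity of `K₃,₃`. -/
lemma square_system_inconsistent (a b c : Fin 3 → Fin 3 → ℤ) (m n : Fin 3 → Fin 3 → Fin 3 → ℤ)
    (hb : ∀ j j', j ≠ j' → b j j' + b j' j = -1)
    (h : ∀ i i' j j', i ≠ i' → j ≠ j' →
      c i' j - c i j' + a i i' + b j j' + 1 + (m i' i j + n j i' j' - n j' i j - m i i' j') = 0) :
    False := by
  have b01 := hb 0 1 (by decide)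
  have b02 := hb 0 2 (by decide)
  have b12 := hb 1 2 (by decide)
  have e1 := h 0 1 0 1 (by decide) (by decide)
  have e2 := h 0 1 0 2 (by decide) (by decide)
  have e3 := h 0 1 1 2 (by decide) (by decide)
  have e4 := h 0 1 1 0 (by decide) (by decide)
  have e5 := h 0 1 2 0 (by decide) (by decide)
  have e6 := h 0 1 2 1 (by decide) (by decide)
  have f1 := h 0 2 0 1 (by decide) (by decide)
  have f2 := h 0 2 0 2 (by decide) (by decide)
  have f3 := h 0 2 1 2 (by decide) (by decide)
  have f4 := h 0 2 1 0 (by decide) (by decide)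
  have f5 := h 0 2 2 0 (by decide) (by decide)
  have f6 := h 0 2 2 1 (by decide) (by decide)
  have g1 := h 1 2 0 1 (by decide) (by decide)
  have g2 := h 1 2 0 2 (by decide) (by decide)
  have g3 := h 1 2 1 2 (by decide) (by decide)
  have g4 := h 1 2 1 0 (by decide) (by decide)
  have g5 := h 1 2 2 0 (by decide) (by decide)
  have g6 := h 1 2 2 1 (by decide) (by decide)
  have key : 2 * (2 * (c 2 0 + c 2 1 + c 2 2) - 2 * (c 0 0 + c 0 1 + c 0 2) +
      3 * (a 0 1 + a 0 2 + a 1 2) +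
      (m 1 0 0 + m 1 0 1 + m 1 0 2 - m 0 1 0 - m 0 1 1 - m 0 1 2) +
      (m 2 0 0 + m 2 0 1 + m 2 0 2 - m 0 2 0 - m 0 2 1 - m 0 2 2) +
      (m 2 1 0 + m 2 1 1 + m 2 1 2 - m 1 2 0 - m 1 2 1 - m 1 2 2) +
      (n 0 2 1 + n 0 2 2 + n 1 2 0 + n 1 2 2 + n 2 2 0 + n 2 2 1) -
      (n 0 0 1 + n 0 0 2 + n 1 0 0 + n 1 0 2 + n 2 0 0 + n 2 0 1)) = -9 := by
    linear_combination e1 + e2 + e3 + e4 + e5 + e6 + f1 + f2 + f3 + f4 + f5 + f6 +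
      g1 + g2 + g3 + g4 + g5 + g6 - 3 * (b01 + b02 + b12)
  omega

/-- There is no family of nine paths in the plane that looks like a drawing of `K₃,₃`. -/
theorem not_exists_paths_K33 (γ : Fin 3 → Fin 3 → ℝ → ℂ) (p q : Fin 3 → ℂ)
    (hγ : ∀ i j, Continuous (γ i j)) (h0 : ∀ i j, γ i j 0 = p i) (h1 : ∀ i j, γ i j 1 = q j)
    (hdisj : ∀ i i' j j', i ≠ i' → j ≠ j' → ∀ s t, γ i j s ≠ γ i' j' t) : False := by
  have hne : ∀ i : Fin 3, ∃ i', i ≠ i' := by decide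
  have hpp : ∀ i i', i ≠ i' → p i ≠ p i' := by
    intro i i' hi
    rw [← h0 i 0, ← h0 i' 1]
    exact hdisj i i' 0 1 hi (by decide) 0 0
  have hqq : ∀ j j', j ≠ j' → q j ≠ q j' := by
    intro j j' hj
    rw [← h1 0 j, ← h1 1 j']
    exact hdisj 0 1 j j' (by decide) hj 1 1
  have hpq : ∀ i j, q j ≠ p i := by
    intro i j
    obtain ⟨i', hi⟩ := hne i
    obtain ⟨j', hj⟩ := hne j
    rw [← h1 i' j, ← h0 i j']
    exact hdisj i' i j j' hi.symm hj 1 0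
  have hturn : ∀ i i' j j', i ≠ i' → j ≠ j' → ∃ n : ℤ, ∀ x,
      HasTurn (fun t => γ i j t - p i') x →
        x = arg (q j - p i') - arg (p i - p i') + 2 * Real.pi * n := by
    intro i i' j j' hi hj
    obtain ⟨x, _, _, _, hx, -⟩ := exists_hasTurn_square (hγ i j) (hγ i' j')
      (hdisj i i' j j' hi hj)
    rw [h0] at hx
    obtain ⟨n, hn⟩ := hx.exists_int
    refine ⟨n, fun y hy => ?_⟩
    rw [hy.unique hx, hn, h0, h1]
  have hturn' : ∀ i i' j j', i ≠ i' → j ≠ j' → ∃ n : ℤ, ∀ x,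
      HasTurn (fun t => γ i j t - q j') x →
        x = arg (q j - q j') - arg (p i - q j') + 2 * Real.pi * n := by
    intro i i' j j' hi hj
    obtain ⟨_, _, x, _, _, _, hx, -⟩ := exists_hasTurn_square (hγ i j) (hγ i' j')
      (hdisj i i' j j' hi hj)
    rw [h1] at hx
    obtain ⟨n, hn⟩ := hx.exists_int
    refine ⟨n, fun y hy => ?_⟩
    rw [hy.unique hx, hn, h0, h1]
  have hm : ∀ i' i j, ∃ n : ℤ, i ≠ i' → ∀ x,
      HasTurn (fun t => γ i j t - p i') x →
        x = arg (q j - p i') - arg (p i - p i') + 2 * Real.pi * n := by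
    intro i' i j
    obtain ⟨j', hj⟩ := hne j
    by_cases hi : i = i'
    · exact ⟨0, fun h => absurd hi h⟩
    · obtain ⟨n, hn⟩ := hturn i i' j j' hi hj
      exact ⟨n, fun _ => hn⟩
  have hn : ∀ j' i j, ∃ n : ℤ, j ≠ j' → ∀ x,
      HasTurn (fun t => γ i j t - q j') x →
        x = arg (q j - q j') - arg (p i - q j') + 2 * Real.pi * n := by
    intro j' i j
    obtain ⟨i', hi⟩ := hne i
    by_cases hj : j = j'
    · exact ⟨0, fun h => absurd hj h⟩
    · obtain ⟨n, hn⟩ := hturn' i i' j j' hi hj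
      exact ⟨n, fun _ => hn⟩
  choose m hm using hm
  choose n hn using hn
  have ha : ∀ i i', ∃ a : ℤ, i ≠ i' → arg (p i' - p i) - arg (p i - p i') =
      Real.pi * (2 * a + 1) := by
    intro i i'
    by_cases hi : i = i'
    · exact ⟨0, fun h => absurd hi h⟩
    · obtain ⟨a, ha⟩ := exists_arg_sub_arg_neg (sub_ne_zero.2 (hpp i i' hi).symm)
      rw [neg_sub] at ha
      exact ⟨a, fun _ => ha⟩
  have hb : ∀ j j', ∃ a : ℤ, j ≠ j' → arg (q j' - q j) - arg (q j - q j') =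
      Real.pi * (2 * a + 1) := by
    intro i i'
    by_cases hi : i = i'
    · exact ⟨0, fun h => absurd hi h⟩
    · obtain ⟨a, ha⟩ := exists_arg_sub_arg_neg (sub_ne_zero.2 (hqq i i' hi).symm)
      rw [neg_sub] at ha
      exact ⟨a, fun _ => ha⟩
  have hc : ∀ i j, ∃ a : ℤ, arg (q j - p i) - arg (p i - q j) = Real.pi * (2 * a + 1) := by
    intro i j
    obtain ⟨a, ha⟩ := exists_arg_sub_arg_neg (sub_ne_zero.2 (hpq i j))
    rw [neg_sub] at ha
    exact ⟨a, ha⟩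
  choose a ha using ha
  choose b hb using hb
  choose c hc using hc
  have hpi := Real.pi_pos
  refine square_system_inconsistent a b c m n ?_ ?_
  · intro i i' hi
    have h1 := hb i i' hi
    have h2 := hb i' i hi.symm
    have : Real.pi * ((b i i' + b i' i + 1 : ℝ)) = 0 := by linarith
    have := (mul_eq_zero.1 this).resolve_left hpi.ne'
    have : b i i' + b i' i + 1 = 0 := by exact_mod_cast this
    linarith
  · intro i i' j j' hi hj
    obtain ⟨x, y, z, w, hx, hy, hz, hw, hsum⟩ := exists_hasTurn_square (hγ i j) (hγ i' j')
      (hdisj i i' j j' hi hj)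
    rw [h0] at hx hw
    rw [h1] at hy hz
    have hx := hm i' i j hi x hx
    have hy := hn j i' j' hj.symm y hy
    have hz := hn j' i j hj z hz
    have hw := hm i i' j' hi.symm w hw
    have h1 := ha i i' hi
    have h2 := hb j j' hj
    have h3 := hc i' j
    have h4 := hc i j'
    have : Real.pi * ((c i' j - c i j' + a i i' + b j j' + 1 +
        (m i' i j + n j i' j' - n j' i j - m i i' j') : ℝ)) = 0 := by
      linarith
    exact_mod_cast (mul_eq_zero.1 this).resolve_left hpi.ne'

end Winding

/-! ### Minors -/

section Minors

open Relation

/-- A nonempty set of vertices inside which any two vertices are joined by a path. -/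
def SimpleGraph.ConnIn {V : Type} (G : SimpleGraph V) (S : Set V) : Prop :=
  S.Nonempty ∧ ∀ u ∈ S, ∀ v ∈ S, ReflTransGen (fun a b => G.Adj a b ∧ b ∈ S) u v

/-- `Q` is a minor of `G`: its vertices are modelled by disjoint connected sets. -/
def SimpleGraph.IsMinor {I V : Type} (Q : SimpleGraph I) (G : SimpleGraph V) : Prop :=
  ∃ β : I → Set V, (∀ i, G.ConnIn (β i)) ∧ (∀ i j, i ≠ j → Disjoint (β i) (β j)) ∧
    ∀ i j, Q.Adj i j → ∃ u ∈ β i, ∃ v ∈ β j, G.Adj u v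

variable {V I J : Type}

lemma connIn_singleton (G : SimpleGraph V) (v : V) : G.ConnIn {v} :=
  ⟨⟨v, rfl⟩, fun _ hu _ hw => by rw [hu, hw]⟩

lemma SimpleGraph.ConnIn.mono_path {G : SimpleGraph V} {S T : Set V} (hST : S ⊆ T) {u v : V}
    (h : ReflTransGen (fun a b => G.Adj a b ∧ b ∈ S) u v) :
    ReflTransGen (fun a b => G.Adj a b ∧ b ∈ T) u v :=
  Relation.ReflTransGen.mono (fun _ _ hab => ⟨hab.1, hST hab.2⟩) _ _ h

/-- Gluing connected sets along a connected set of indices. -/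
lemma connIn_biUnion {G : SimpleGraph V} {H : SimpleGraph J} {S : Set J} {α : J → Set V}
    (hS : H.ConnIn S) (hα : ∀ j ∈ S, G.ConnIn (α j))
    (hadj : ∀ j ∈ S, ∀ j' ∈ S, H.Adj j j' → ∃ u ∈ α j, ∃ v ∈ α j', G.Adj u v) :
    G.ConnIn (⋃ j ∈ S, α j) := by
  have hsub : ∀ j ∈ S, α j ⊆ ⋃ j ∈ S, α j := fun j hj => Set.subset_biUnion_of_mem hj
  refine ⟨?_, ?_⟩
  · obtain ⟨j, hj⟩ := hS.1
    obtain ⟨v, hv⟩ := (hα j hj).1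
    exact ⟨v, hsub j hj hv⟩
  · intro u hu v hv
    simp only [Set.mem_iUnion] at hu hv
    obtain ⟨j, hj, hu⟩ := hu
    obtain ⟨j', hj', hv⟩ := hv
    have key : ∀ k, ReflTransGen (fun a b => H.Adj a b ∧ b ∈ S) j k → k ∈ S ∧ ∀ x ∈ α k,
        ReflTransGen (fun a b => G.Adj a b ∧ b ∈ ⋃ j ∈ S, α j) u x := by
      intro k hk
      induction hk with
      | refl => exact ⟨hj, fun x hx => SimpleGraph.ConnIn.mono_path (hsub j hj) ((hα j hj).2 u hu x hx)⟩
      | @tail b c _ hbc ih =>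
        refine ⟨hbc.2, fun x hx => ?_⟩
        obtain ⟨y, hy, z, hz, hyz⟩ := hadj b ih.1 c hbc.2 hbc.1
        exact ((ih.2 y hy).tail ⟨hyz, hsub c hbc.2 hz⟩).trans
          (SimpleGraph.ConnIn.mono_path (hsub c hbc.2) ((hα c hbc.2).2 z hz x hx))
    exact (key j' (hS.2 j hj j' hj')).2 v hv

lemma connIn_pair {G : SimpleGraph V} {S T : Set V} (hS : G.ConnIn S) (hT : G.ConnIn T)
    (h : ∃ u ∈ S, ∃ v ∈ T, G.Adj u v) : G.ConnIn (S ∪ T) := by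
  have h2 : (⊤ : SimpleGraph Bool).ConnIn Set.univ := by
    refine ⟨⟨true, trivial⟩, fun u _ v _ => ?_⟩
    by_cases huv : u = v
    · rw [huv]
    · exact ReflTransGen.single ⟨by simpa using huv, trivial⟩
  have := connIn_biUnion (G := G) (α := fun b : Bool => cond b S T) h2
    (by intro j _; cases j <;> simpa) ?_
  · rw [Set.union_eq_iUnion]
    simpa using this
  · obtain ⟨u, hu, v, hv, huv⟩ := h
    intro j _ j' _ hjj'
    cases j <;> cases j' <;> simp at hjj' ⊢
    · exact ⟨v, hv, u, hu, huv.symm⟩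
    · exact ⟨u, hu, v, hv, huv⟩

lemma SimpleGraph.IsMinor.trans {Q : SimpleGraph I} {H : SimpleGraph J} {G : SimpleGraph V}
    (h₁ : Q.IsMinor H) (h₂ : H.IsMinor G) : Q.IsMinor G := by
  obtain ⟨β, hβ, hβd, hβa⟩ := h₁
  obtain ⟨α, hα, hαd, hαa⟩ := h₂
  refine ⟨fun i => ⋃ j ∈ β i, α j, fun i => connIn_biUnion (hβ i) (fun j _ => hα j)
    (fun j _ j' _ => hαa j j'), fun i i' hi => ?_, fun i i' hi => ?_⟩
  · simp only [Set.disjoint_iUnion_left, Set.disjoint_iUnion_right]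
    intro j hj j' hj'
    refine hαd _ _ ?_
    rintro rfl
    exact Set.disjoint_left.1 (hβd _ _ hi) hj' hj
  · obtain ⟨j, hj, j', hj', hadj⟩ := hβa i i' hi
    obtain ⟨u, hu, v, hv, huv⟩ := hαa j j' hadj
    exact ⟨u, Set.mem_biUnion hj hu, v, Set.mem_biUnion hj' hv, huv⟩

/-- An injective homomorphism exhibits a minor. -/
lemma isMinor_of_injective {Q : SimpleGraph I} {G : SimpleGraph V} (f : I → V)
    (hf : Function.Injective f) (hadj : ∀ i j, Q.Adj i j → G.Adj (f i) (f j)) : Q.IsMinor G :=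
  ⟨fun i => {f i}, fun i => connIn_singleton G _, fun i j hij => by
    simpa using fun h => hij (hf h), fun i j hij => ⟨_, rfl, _, rfl, hadj i j hij⟩⟩

end Minors

/-! ### Planar graphs have no `K₃,₃` minor -/

section PlanarMinors

open Relation

variable {V : Type} {G : SimpleGraph V}

/-- The part of a drawing spanned by a set of vertices. -/
def PlaneEmbedding.region (E : PlaneEmbedding G) (S : Set V) : Set (ℝ × ℝ) :=
  {z | (∃ u ∈ S, z = E.pos u) ∨
    ∃ e : G.edgeSet, (∀ u ∈ (e : Sym2 V), u ∈ S) ∧ ∃ t ∈ Set.Ioo (0 : ℝ) 1, z = E.arc e t}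

lemma PlaneEmbedding.disjoint_region (E : PlaneEmbedding G) {S T : Set V} (h : Disjoint S T) :
    Disjoint (E.region S) (E.region T) := by
  rw [Set.disjoint_left] at h ⊢
  rintro z (⟨u, hu, rfl⟩ | ⟨e, he, t, ht, rfl⟩) (⟨v, hv, hz⟩ | ⟨f, hf, s, hs, hz⟩)
  · exact h hu (E.inj hz ▸ hv)
  · exact E.arc_avoid f s hs ⟨u, hz⟩
  · exact E.arc_avoid e t ht ⟨v, hz.symm⟩
  · refine E.arc_disjoint e f (fun hef => ?_) t ht s hs hz
    subst hef
    obtain ⟨u, v, huv, -⟩ := E.arc_ends e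
    have hu : u ∈ (e : Sym2 V) := by rw [huv]; simp
    exact h (he u hu) (hf u hu)

lemma PlaneEmbedding.joinedIn_of_adj (E : PlaneEmbedding G) {S : Set V} {u v : V}
    (hu : u ∈ S) (hv : v ∈ S) (huv : G.Adj u v) : JoinedIn (E.region S) (E.pos u) (E.pos v) := by
  obtain ⟨a, b, hab, h0, h1⟩ := E.arc_ends ⟨s(u, v), huv⟩
  have hS : ∀ x ∈ (s(u, v) : Sym2 V), x ∈ S := by
    intro x hx
    rcases Sym2.mem_iff.1 hx with rfl | rfl <;> assumption
  have ha : a ∈ S := hS a (by simp only at hab; rw [hab]; simp)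
  have hb : b ∈ S := hS b (by simp only at hab; rw [hab]; simp)
  have key : JoinedIn (E.region S) (E.pos a) (E.pos b) := by
    refine JoinedIn.ofLine (E.arc_cont _) h0 h1 ?_
    rintro z ⟨t, ht, rfl⟩
    rcases eq_or_lt_of_le ht.1 with h | h
    · exact Or.inl ⟨a, ha, by rw [← h, h0]⟩
    · rcases eq_or_lt_of_le ht.2 with h' | h'
      · exact Or.inl ⟨b, hb, by rw [h', h1]⟩
      · exact Or.inr ⟨_, hS, t, ⟨h, h'⟩, rfl⟩
  rcases Sym2.eq_iff.1 hab with ⟨rfl, rfl⟩ | ⟨rfl, rfl⟩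
  · exact key
  · exact key.symm

lemma PlaneEmbedding.joinedIn_of_connIn (E : PlaneEmbedding G) {S : Set V} (hS : G.ConnIn S)
    {u v : V} (hu : u ∈ S) (hv : v ∈ S) : JoinedIn (E.region S) (E.pos u) (E.pos v) := by
  have key : ∀ w, ReflTransGen (fun a b => G.Adj a b ∧ b ∈ S) u w →
      w ∈ S ∧ JoinedIn (E.region S) (E.pos u) (E.pos w) := by
    intro w hw
    induction hw with
    | refl => exact ⟨hu, JoinedIn.refl (Or.inl ⟨u, hu, rfl⟩)⟩
    | tail _ hbc ih => exact ⟨hbc.2, ih.2.trans (E.joinedIn_of_adj ih.1 hbc.2 hbc.1)⟩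
  exact (key v (hS.2 u hu v hv)).2

theorem SimpleGraph.IsPlanar.not_isMinor_K33 (hG : G.IsPlanar) :
    ¬ (completeBipartiteGraph (Fin 3) (Fin 3)).IsMinor G := by
  obtain ⟨E⟩ := hG
  rintro ⟨β, hβ, hβd, hβa⟩
  have hconn : ∀ i j, G.ConnIn (β (Sum.inl i) ∪ β (Sum.inr j)) := fun i j =>
    connIn_pair (hβ _) (hβ _) (hβa _ _ (by simp))
  choose x hx using fun i => (hβ i).1
  have hjoin : ∀ i j : Fin 3, JoinedIn (E.region (β (Sum.inl i) ∪ β (Sum.inr j)))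
      (E.pos (x (Sum.inl i))) (E.pos (x (Sum.inr j))) := fun i j =>
    E.joinedIn_of_connIn (hconn i j) (Or.inl (hx _)) (Or.inr (hx _))
  let φ := Complex.equivRealProdCLM.symm
  refine not_exists_paths_K33 (fun i j t => φ ((hjoin i j).somePath.extend t))
    (fun i => φ (E.pos (x (Sum.inl i)))) (fun j => φ (E.pos (x (Sum.inr j))))
    (fun i j => φ.continuous.comp (hjoin i j).somePath.continuous_extend)
    (fun i j => by simp) (fun i j => by simp) ?_
  intro i i' j j' hi hj s t hst
  have hst := φ.injective hst
  have hmem : ∀ i j t, (hjoin i j).somePath.extend t ∈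
      E.region (β (Sum.inl i) ∪ β (Sum.inr j)) := fun i j t =>
    (hjoin i j).somePath_mem _
  refine Set.disjoint_left.1 (E.disjoint_region ?_) (hmem i j s) (hst ▸ hmem i' j' t)
  simp only [Set.disjoint_union_left, Set.disjoint_union_right]
  exact ⟨⟨hβd _ _ (by simpa), hβd _ _ (by simp)⟩, hβd _ _ (by simp), hβd _ _ (by simpa)⟩

end PlanarMinors

/-! ### Dense graphs have large clique minors -/

section Density

open scoped Classical

variable {V I : Type}

/-- The number of ordered pairs of adjacent vertices. -/
noncomputable def SimpleGraph.degSum [Fintype I] (Q : SimpleGraph I) : ℕ :=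
  ((Finset.univ : Finset (I × I)).filter fun p => Q.Adj p.1 p.2).card

lemma degSum_eq_sum [Fintype I] (Q : SimpleGraph I) :
    Q.degSum = ∑ i, (Finset.univ.filter fun j => Q.Adj i j).card := by
  unfold SimpleGraph.degSum
  simp only [Finset.card_filter, Fintype.sum_prod_type]

/-- All minors of `G` have average degree at most `C`. -/
def SimpleGraph.MinorSparse (C : ℕ) (G : SimpleGraph V) : Prop :=
  ∀ (I : Type) [Fintype I] (Q : SimpleGraph I), Q.IsMinor G → Q.degSum ≤ C * Fintype.card I

/-- The graph obtained by contracting the vertex `j` into the vertex `i`. -/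
def SimpleGraph.contractInto (Q : SimpleGraph I) (i j : I) : SimpleGraph {k // k ≠ j} where
  Adj a b := a ≠ b ∧ (Q.Adj a b ∨ (a.1 = i ∧ Q.Adj j b) ∨ (b.1 = i ∧ Q.Adj a j))
  symm := ⟨by
    rintro a b ⟨hab, h⟩
    refine ⟨hab.symm, ?_⟩
    rcases h with h | ⟨h, h'⟩ | ⟨h, h'⟩
    · exact Or.inl h.symm
    · exact Or.inr (Or.inr ⟨h, h'.symm⟩)
    · exact Or.inr (Or.inl ⟨h, h'.symm⟩)⟩
  loopless := ⟨fun a h => h.1 rfl⟩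

lemma contractInto_isMinor {Q : SimpleGraph I} {i j : I} (hij : Q.Adj i j) :
    (Q.contractInto i j).IsMinor Q := by
  refine ⟨fun a => if a.1 = i then {i} ∪ {j} else {a.1}, fun a => ?_, fun a b hab => ?_,
    fun a b hab => ?_⟩
  · dsimp only
    split_ifs
    · exact connIn_pair (connIn_singleton _ _) (connIn_singleton _ _) ⟨i, rfl, j, rfl, hij⟩
    · exact connIn_singleton _ _
  · have ha := a.2
    have hb := b.2
    have hab' : a.1 ≠ b.1 := fun h => hab (Subtype.ext h)
    rw [Set.disjoint_left]
    intro x hx hx'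
    dsimp only at hx hx'
    split_ifs at hx hx' <;> simp at hx hx' <;> grind
  · obtain ⟨hne, h | ⟨h, h'⟩ | ⟨h, h'⟩⟩ := hab
    · refine ⟨a, ?_, b, ?_, h⟩ <;> dsimp only <;> split_ifs <;> simp_all
    · refine ⟨j, ?_, b, ?_, h'⟩ <;> dsimp only <;> split_ifs <;> simp_all
    · refine ⟨a, ?_, j, ?_, h'⟩ <;> dsimp only <;> split_ifs <;> simp_all

lemma degSum_le_contractInto [Fintype I] {Q : SimpleGraph I} {i j : I} (hij : Q.Adj i j) :
    Q.degSum ≤ (Q.contractInto i j).degSum +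
      2 * (1 + (Finset.univ.filter fun x => Q.Adj i x ∧ Q.Adj j x).card) := by
  set C := Finset.univ.filter fun x => Q.Adj i x ∧ Q.Adj j x with hC
  set E : Finset (I × I) := {(i, j), (j, i)} ∪ (C.image (fun x => (j, x)) ∪
    C.image (fun x => (x, j))) with hE
  have hEcard : E.card ≤ 2 * (1 + C.card) := by
    calc E.card ≤ 2 + (C.card + C.card) := by
          refine (Finset.card_union_le _ _).trans (add_le_add Finset.card_le_two ?_)
          exact (Finset.card_union_le _ _).trans
            (add_le_add Finset.card_image_le Finset.card_image_le)
      _ = _ := by ring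
  set P := (Finset.univ : Finset (I × I)).filter fun p => Q.Adj p.1 p.2 with hP
  have hsplit : P.card ≤ (P \ E).card + E.card := by
    have := Finset.le_card_sdiff E P
    omega
  have hi : i ≠ j := hij.ne
  let r : I → {k // k ≠ j} := fun x => if hx : x = j then ⟨i, hi⟩ else ⟨x, hx⟩
  have hr : ∀ x, (r x).1 = if x = j then i else x := by
    intro x
    by_cases hx : x = j <;> simp [r, hx]
  have hle : (P \ E).card ≤ (Q.contractInto i j).degSum := by
    refine Finset.card_le_card_of_injOn (fun p => (r p.1, r p.2)) ?_ ?_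
    · rintro ⟨a, b⟩ hp
      simp only [hP, hE, hC, Finset.coe_sdiff, Set.mem_sdiff, Finset.mem_coe, Finset.mem_filter,
        Finset.mem_univ, true_and, Finset.mem_union, Finset.mem_insert, Finset.mem_singleton,
        Finset.mem_image, Prod.mk.injEq] at hp ⊢
      obtain ⟨hadj, hex⟩ := hp
      have hab := hadj.ne
      push Not at hex
      refine ⟨fun h => ?_, ?_⟩
      · have := congrArg Subtype.val h
        rw [hr, hr] at this
        split_ifs at this <;> grind
      · rw [hr, hr]
        split_ifs <;> grind
    · rintro ⟨a, b⟩ hp ⟨a', b'⟩ hp' heq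
      simp only [hP, hE, hC, Finset.coe_sdiff, Set.mem_sdiff, Finset.mem_coe, Finset.mem_filter,
        Finset.mem_univ, true_and, Finset.mem_union, Finset.mem_insert, Finset.mem_singleton,
        Finset.mem_image, Prod.mk.injEq] at hp hp' heq ⊢
      obtain ⟨h1, h2⟩ := heq
      have h1 := congrArg Subtype.val h1
      have h2 := congrArg Subtype.val h2
      rw [hr, hr] at h1 h2
      obtain ⟨hadj, hex⟩ := hp
      obtain ⟨hadj', hex'⟩ := hp'
      have e1 := hadj.symm
      have e2 := hadj'.symm
      push Not at hex hex'
      split_ifs at h1 h2 <;> grind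
  have hPdef : Q.degSum = P.card := rfl
  omega

/-- Graphs of large average degree have large clique minors. -/
theorem exists_clique_minor (t : ℕ) : ∃ c : ℕ, ∀ (I : Type) [Fintype I] [Nonempty I]
    (Q : SimpleGraph I), c * Fintype.card I ≤ Q.degSum → (⊤ : SimpleGraph (Fin t)).IsMinor Q := by
  induction t with
  | zero => exact ⟨0, fun I _ _ Q _ => ⟨fun i => i.elim0, fun i => i.elim0, fun i => i.elim0,
      fun i => i.elim0⟩⟩
  | succ t ih =>
    obtain ⟨c, hc⟩ := ih
    refine ⟨2 * c + 2, ?_⟩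
    suffices h : ∀ (n : ℕ) (I : Type) [Fintype I] [Nonempty I] (Q : SimpleGraph I),
        Fintype.card I = n → (2 * c + 2) * Fintype.card I ≤ Q.degSum →
        (⊤ : SimpleGraph (Fin (t + 1))).IsMinor Q from fun I _ _ Q => h _ I Q rfl
    intro n
    induction n with
    | zero => intro I _ _ Q h0; exact absurd h0 Fintype.card_ne_zero
    | succ n ihn =>
      intro I _ _ Q hn hQ
      by_cases hex : ∃ i j, Q.Adj i j ∧ (2 * c + 2) * Fintype.card {k // k ≠ j} ≤
          (Q.contractInto i j).degSum
      · obtain ⟨i, j, hij, hle⟩ := hex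
        have : Nonempty {k // k ≠ j} := ⟨⟨i, hij.ne⟩⟩
        have hcard : Fintype.card {k // k ≠ j} = n := by
          have := Fintype.card_subtype_compl (fun k => k = j)
          simp only [Fintype.card_unique] at this
          simp only [ne_eq]
          omega
        exact (ihn _ _ hcard hle).trans (contractInto_isMinor hij)
      · push Not at hex
        have hcommon : ∀ i j, Q.Adj i j →
            c ≤ (Finset.univ.filter fun x => Q.Adj i x ∧ Q.Adj j x).card := by
          intro i j hij
          have h1 := hex i j hij
          have h2 := degSum_le_contractInto hij
          have hcard : Fintype.card {k // k ≠ j} + 1 = Fintype.card I := by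
            have := Fintype.card_subtype_compl (fun k => k = j)
            simp only [Fintype.card_unique] at this
            simp only [ne_eq]
            omega
          rw [← hcard] at hQ
          have : (2 * c + 2) * (Fintype.card {k // k ≠ j} + 1) =
            (2 * c + 2) * Fintype.card {k // k ≠ j} + (2 * c + 2) := by ring
          omega
        have hpos : 0 < Q.degSum := lt_of_lt_of_le
          (Nat.mul_pos (by omega) Fintype.card_pos) hQ
        obtain ⟨⟨v, w⟩, hvw⟩ := Finset.card_pos.1 hpos
        simp only [Finset.mem_filter, Finset.mem_univ, true_and] at hvw
        have hne : Nonempty {x // Q.Adj v x} := ⟨⟨w, hvw⟩⟩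
        have hN : c * Fintype.card {x // Q.Adj v x} ≤
            (Q.comap (Subtype.val : {x // Q.Adj v x} → I)).degSum := by
          rw [degSum_eq_sum, mul_comm, ← smul_eq_mul, ← Finset.card_univ]
          refine Finset.card_nsmul_le_sum _ _ _ fun x _ => (hcommon v x.1 x.2).trans ?_
          rw [← Finset.card_map (Function.Embedding.subtype (fun x => Q.Adj v x))]
          refine Finset.card_le_card ?_
          intro y hy
          simp only [Finset.mem_filter, Finset.mem_univ, true_and] at hy
          simp only [Finset.mem_map, Finset.mem_filter, Finset.mem_univ, true_and]
          exact ⟨⟨y, hy.1⟩, hy.2, rfl⟩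
        obtain ⟨β, hβ, hβd, hβa⟩ := hc _ _ hN
        have hmin : (Q.comap (Subtype.val : {x // Q.Adj v x} → I)).IsMinor Q :=
          isMinor_of_injective Subtype.val Subtype.val_injective fun i j h => h
        have hα := fun i => connIn_biUnion (G := Q) (α := fun x : {x // Q.Adj v x} => {x.1}) (hβ i)
          (fun x _ => connIn_singleton _ _) (fun x _ y _ h => ⟨x.1, rfl, y.1, rfl, h⟩)
        have hmem : ∀ i x, x ∈ (⋃ j ∈ β i, {j.1} : Set I) ↔ ∃ h : Q.Adj v x, ⟨x, h⟩ ∈ β i := by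
          intro i x
          simp only [Set.mem_iUnion, Set.mem_singleton_iff]
          constructor
          · rintro ⟨⟨y, hy⟩, hyi, rfl⟩; exact ⟨hy, hyi⟩
          · rintro ⟨h, h'⟩; exact ⟨⟨x, h⟩, h', rfl⟩
        refine ⟨Fin.cons {v} (fun i => ⋃ j ∈ β i, {j.1}), ?_, ?_, ?_⟩
        · intro i
          refine Fin.cases ?_ (fun i => ?_) i
          · exact connIn_singleton _ _
          · exact hα i
        · have h0 : ∀ i, v ∉ (⋃ j ∈ β i, {j.1} : Set I) := by
            intro i hi
            obtain ⟨h, -⟩ := (hmem i v).1 hi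
            exact h.ne rfl
          intro i j
          refine Fin.cases ?_ (fun i => ?_) i <;> refine Fin.cases ?_ (fun j => ?_) j
          · intro h; exact absurd rfl h
          · intro _; simp [h0 j]
          · intro _; simp [h0 i]
          · intro hij
            simp only [Fin.cons_succ]
            rw [Set.disjoint_left]
            intro x hx hx'
            obtain ⟨h, hx⟩ := (hmem i x).1 hx
            obtain ⟨h', hx'⟩ := (hmem j x).1 hx'
            exact Set.disjoint_left.1 (hβd i j fun h => hij (by rw [h])) hx hx'
        · have hv : ∀ i, ∃ x ∈ (⋃ j ∈ β i, {j.1} : Set I), Q.Adj v x := by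
            intro i
            obtain ⟨x, hx⟩ := (hβ i).1
            exact ⟨x.1, (hmem i _).2 ⟨x.2, hx⟩, x.2⟩
          intro i j
          refine Fin.cases ?_ (fun i => ?_) i <;> refine Fin.cases ?_ (fun j => ?_) j
          · intro h; exact absurd h (by simp)
          · intro _
            obtain ⟨x, hx, hvx⟩ := hv j
            exact ⟨v, rfl, x, hx, hvx⟩
          · intro _
            obtain ⟨x, hx, hvx⟩ := hv i
            exact ⟨x, hx, v, rfl, hvx.symm⟩
          · intro hij
            obtain ⟨x, hx, y, hy, hxy⟩ := hβa i j (by simpa using hij)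
            exact ⟨x.1, (hmem i _).2 ⟨x.2, hx⟩, y.1, (hmem j _).2 ⟨y.2, hy⟩, hxy⟩

/-- There is a constant bounding the average degree of all minors of planar graphs. -/
theorem exists_minorSparse_of_isPlanar : ∃ C : ℕ, ∀ (V : Type) (G : SimpleGraph V),
    G.IsPlanar → G.MinorSparse C := by
  obtain ⟨c, hc⟩ := exists_clique_minor 6
  refine ⟨c, fun V G hG I _ Q hQ => ?_⟩
  by_contra hlt
  push Not at hlt
  have hne : Nonempty I := by
    by_contra hI
    rw [not_nonempty_iff] at hI
    simp [SimpleGraph.degSum] at hlt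
  refine hG.not_isMinor_K33 (IsMinor.trans ?_ ((hc I Q hlt.le).trans hQ))
  refine isMinor_of_injective (finSumFinEquiv (m := 3) (n := 3)) finSumFinEquiv.injective ?_
  intro i j hij
  simpa using hij.ne

end Density

/-! ### Counting in minor-sparse graphs -/

section Counting

open scoped Classical

variable {V I : Type}

lemma SimpleGraph.MinorSparse.of_isMinor {C : ℕ} {G : SimpleGraph V} {Q : SimpleGraph I}
    (hG : G.MinorSparse C) (hQ : Q.IsMinor G) : Q.MinorSparse C :=
  fun J _ R hR => hG J R (hR.trans hQ)

/-- The number of ordered adjacent pairs inside a set of vertices. -/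
lemma SimpleGraph.MinorSparse.card_pairs_le {C : ℕ} {G : SimpleGraph V} (hG : G.MinorSparse C)
    (Y : Finset V) :
    ((Y ×ˢ Y).filter fun p => G.Adj p.1 p.2).card ≤ C * Y.card := by
  have h := hG {y // y ∈ Y} (G.comap Subtype.val)
    (isMinor_of_injective Subtype.val Subtype.val_injective fun i j h => h)
  rw [Fintype.card_coe] at h
  refine le_trans ?_ h
  unfold SimpleGraph.degSum
  rw [← Finset.card_map ((Function.Embedding.subtype (fun y => y ∈ Y)).prodMap
    (Function.Embedding.subtype (fun y => y ∈ Y)))]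
  refine Finset.card_le_card ?_
  rintro ⟨a, b⟩ hp
  simp only [Finset.mem_filter, Finset.mem_product] at hp
  simp only [Finset.mem_map, Finset.mem_filter, Finset.mem_univ, true_and]
  exact ⟨(⟨a, hp.1.1⟩, ⟨b, hp.1.2⟩), hp.2, rfl⟩

/-- Vertices of a minor-sparse graph can be ranked with few smaller neighbours each. -/
lemma SimpleGraph.MinorSparse.exists_rank [Fintype I] {C : ℕ} {Q : SimpleGraph I}
    (hQ : Q.MinorSparse C) :
    ∃ ρ : I → ℕ, Function.Injective ρ ∧
      ∀ i, (Finset.univ.filter fun j => Q.Adj i j ∧ ρ j < ρ i).card ≤ C := by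
  have key : ∀ (n : ℕ) (Y : Finset I), Y.card = n → ∃ ρ : I → ℕ, Set.InjOn ρ Y ∧
      (∀ i ∈ Y, ρ i < n) ∧ ∀ i ∈ Y, (Y.filter fun j => Q.Adj i j ∧ ρ j < ρ i).card ≤ C := by
    intro n
    induction n with
    | zero =>
      intro Y hY
      rw [Finset.card_eq_zero] at hY
      subst hY
      exact ⟨fun _ => 0, by simp, by simp, by simp⟩
    | succ n ih =>
      intro Y hY
      have hne : Y.Nonempty := Finset.card_pos.1 (by omega)
      obtain ⟨v, hv, hdeg⟩ : ∃ v ∈ Y, (Y.filter fun j => Q.Adj v j).card ≤ C := by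
        by_contra hcon
        push Not at hcon
        have h1 := hQ.card_pairs_le Y
        have h2 : ((Y ×ˢ Y).filter fun p => Q.Adj p.1 p.2).card =
            ∑ v ∈ Y, (Y.filter fun j => Q.Adj v j).card := by
          simp only [Finset.card_filter, Finset.sum_product]
        have h3 : ∑ v ∈ Y, C < ∑ v ∈ Y, (Y.filter fun j => Q.Adj v j).card :=
          Finset.sum_lt_sum_of_nonempty hne hcon
        rw [Finset.sum_const, smul_eq_mul] at h3
        rw [h2, mul_comm] at h1
        omega
      obtain ⟨ρ, hinj, hlt, hback⟩ := ih (Y.erase v) (by rw [Finset.card_erase_of_mem hv]; omega)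
      have hval : ∀ i ∈ Y.erase v, Function.update ρ v n i = ρ i := fun i hi =>
        Function.update_of_ne (Finset.ne_of_mem_erase hi) _ _
      refine ⟨Function.update ρ v n, ?_, ?_, ?_⟩
      · intro i hi j hj hij
        by_cases h1 : i = v <;> by_cases h2 : j = v
        · rw [h1, h2]
        · have hj' := Finset.mem_erase.2 ⟨h2, hj⟩
          rw [h1, Function.update_self, hval j hj'] at hij
          have := hlt j hj'
          omega
        · have hi' := Finset.mem_erase.2 ⟨h1, hi⟩
          rw [h2, Function.update_self, hval i hi'] at hij
          have := hlt i hi'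
          omega
        · have hj' := Finset.mem_erase.2 ⟨h2, hj⟩
          have hi' := Finset.mem_erase.2 ⟨h1, hi⟩
          rw [hval i hi', hval j hj'] at hij
          exact hinj hi' hj' hij
      · intro i hi
        by_cases h1 : i = v
        · rw [h1, Function.update_self]; omega
        · have hi' := Finset.mem_erase.2 ⟨h1, hi⟩
          have := hlt i hi'
          rw [hval i hi']; omega
      · intro i hi
        by_cases h1 : i = v
        · subst h1
          refine le_trans (Finset.card_le_card ?_) hdeg
          intro j hj
          simp only [Finset.mem_filter] at hj ⊢
          exact ⟨hj.1, hj.2.1⟩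
        · have hi' := Finset.mem_erase.2 ⟨h1, hi⟩
          refine le_trans (Finset.card_le_card ?_) (hback i hi')
          intro j hj
          simp only [Finset.mem_filter] at hj ⊢
          rw [hval i hi'] at hj
          have hjv : j ≠ v := by
            rintro rfl
            rw [Function.update_self] at hj
            have := hlt i hi'
            omega
          have hj' := Finset.mem_erase.2 ⟨hjv, hj.1⟩
          rw [hval j hj'] at hj
          exact ⟨hj', hj.2⟩
  obtain ⟨ρ, hinj, -, hback⟩ := key _ Finset.univ rfl
  exact ⟨ρ, fun i j h => hinj (by simp) (by simp) h, fun i => hback i (Finset.mem_univ i)⟩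

/-- The graph on `Y` with prescribed edges. -/
def pairGraph (Y : Finset V) (Ed : Finset (Sym2 V)) : SimpleGraph {y // y ∈ Y} where
  Adj a b := a ≠ b ∧ s(a.1, b.1) ∈ Ed
  symm := ⟨fun a b h => ⟨h.1.symm, by rw [Sym2.eq_swap]; exact h.2⟩⟩
  loopless := ⟨fun a h => h.1 rfl⟩

/-- If the prescribed edges are subdivided in `G` by distinct vertices outside `Y`, the graph they
form is a minor. -/
lemma pairGraph_isMinor {G : SimpleGraph V} {Y : Finset V} {Ed : Finset (Sym2 V)}
    {w : Sym2 V → V} (hw : Set.InjOn w Ed)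
    (hEd : ∀ e ∈ Ed, w e ∉ Y ∧ ∀ y ∈ e, G.Adj (w e) y) : (pairGraph Y Ed).IsMinor G := by
  have hstar : ∀ y : {y // y ∈ Y}, ∀ x, x ∈ ({x | ∃ e ∈ Ed, (Quot.out e).1 = y.1 ∧ x = w e} : Set V) →
      G.Adj y.1 x := by
    rintro y x ⟨e, he, hey, rfl⟩
    refine ((hEd e he).2 y.1 ?_).symm
    rw [← hey]
    exact Sym2.out_fst_mem e
  refine ⟨fun y => {y.1} ∪ {x | ∃ e ∈ Ed, (Quot.out e).1 = y.1 ∧ x = w e}, ?_, ?_, ?_⟩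
  · intro y
    refine ⟨⟨y.1, Or.inl rfl⟩, ?_⟩
    have hfrom : ∀ u ∈ ({y.1} ∪ {x | ∃ e ∈ Ed, (Quot.out e).1 = y.1 ∧ x = w e} : Set V),
        Relation.ReflTransGen (fun a b => G.Adj a b ∧
          b ∈ ({y.1} ∪ {x | ∃ e ∈ Ed, (Quot.out e).1 = y.1 ∧ x = w e} : Set V)) u y.1 := by
      rintro u (hu | hu)
      · rw [hu]
      · exact Relation.ReflTransGen.single ⟨(hstar y u hu).symm, Or.inl rfl⟩
    rintro u hu v hv
    refine (hfrom u hu).trans ?_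
    rcases hv with hv | hv
    · rw [hv]
    · exact Relation.ReflTransGen.single ⟨hstar y v hv, Or.inr hv⟩
  · intro y y' hyy'
    have hne : y.1 ≠ y'.1 := fun h => hyy' (Subtype.ext h)
    rw [Set.disjoint_left]
    rintro x (hx | ⟨e, he, hey, hx⟩) (hx' | ⟨e', he', hey', hx'⟩)
    · exact hne (hx.symm.trans hx')
    · rw [hx] at hx'
      exact (hEd e' he').1 (hx' ▸ y.2)
    · rw [hx] at hx'
      exact (hEd e he).1 (hx' ▸ y'.2)
    · rw [hx] at hx'
      have := hw he he' hx'
      subst this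
      exact hne (hey.symm.trans hey')
  · rintro a b ⟨hab, he⟩
    have hmem := hEd _ he
    have hout := Sym2.out_fst_mem (s(a.1, b.1))
    rcases Sym2.mem_iff.1 hout with h | h
    · exact ⟨w s(a.1, b.1), Or.inr ⟨_, he, h, rfl⟩, b.1, Or.inl rfl, hmem.2 _ (by simp)⟩
    · exact ⟨a.1, Or.inl rfl, w s(a.1, b.1), Or.inr ⟨_, he, h, rfl⟩, (hmem.2 _ (by simp)).symm⟩

lemma card_le_degSum_pairGraph {Y : Finset V} {Ed : Finset (Sym2 V)}
    (hd : ∀ e ∈ Ed, ¬ e.IsDiag) (hY : ∀ e ∈ Ed, ∀ y ∈ e, y ∈ Y) :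
    Ed.card ≤ (pairGraph Y Ed).degSum := by
  refine le_trans (Finset.card_le_card ?_) (Finset.card_image_le
    (f := fun p : {y // y ∈ Y} × {y // y ∈ Y} => s(p.1.1, p.2.1)))
  intro e he
  induction e with
  | _ a b =>
    simp only [Finset.mem_image, Finset.mem_filter, Finset.mem_univ, true_and]
    refine ⟨(⟨a, hY _ he a (by simp)⟩, ⟨b, hY _ he b (by simp)⟩), ⟨fun h => hd _ he ?_, he⟩, rfl⟩
    simpa using h

lemma isMinor_K33_of_adj {G : SimpleGraph V} {a b c x y z : V} (hab : a ≠ b) (hac : a ≠ c)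
    (hbc : b ≠ c) (hxy : x ≠ y) (hxz : x ≠ z) (hyz : y ≠ z) (xa : G.Adj x a) (xb : G.Adj x b)
    (xc : G.Adj x c) (ya : G.Adj y a) (yb : G.Adj y b) (yc : G.Adj y c) (za : G.Adj z a)
    (zb : G.Adj z b) (zc : G.Adj z c) :
    (completeBipartiteGraph (Fin 3) (Fin 3)).IsMinor G := by
  have hadj : ∀ i j : Fin 3, G.Adj (![x, y, z] j) (![a, b, c] i) := by
    intro i j
    fin_cases i <;> fin_cases j <;> assumption
  refine isMinor_of_injective (Sum.elim ![a, b, c] ![x, y, z]) ?_ ?_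
  · have h1 : Function.Injective ![a, b, c] := by
      intro i j hij
      fin_cases i <;> fin_cases j <;> simp_all
    have h2 : Function.Injective ![x, y, z] := by
      intro i j hij
      fin_cases i <;> fin_cases j <;> simp_all
    exact h1.sumElim h2 fun i j h => (hadj i j).ne h.symm
  · rintro (i | i) (j | j) hij
    · simp at hij
    · exact (hadj i j).symm
    · exact hadj j i
    · simp at hij

/-- Few vertices outside `Y` have three neighbours in `Y`. -/
lemma card_three_neighbours_le [Fintype V] {C : ℕ} {G : SimpleGraph V} (hG : G.MinorSparse C)
    (hK : ¬ (completeBipartiteGraph (Fin 3) (Fin 3)).IsMinor G) (Y : Finset V) :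
    (Finset.univ.filter fun w => w ∉ Y ∧ 3 ≤ (Y.filter fun y => G.Adj w y).card).card ≤
      (C + 2 * (C * C)) * Y.card := by
  rcases Y.eq_empty_or_nonempty with rfl | hYne
  · simp
  have hYne' : Nonempty {y // y ∈ Y} := hYne.to_subtype
  set W := Finset.univ.filter fun w => w ∉ Y ∧ 3 ≤ (Y.filter fun y => G.Adj w y).card with hW
  let good : Finset (Sym2 V) → Prop := fun Ed => ∃ w : Sym2 V → V, Set.InjOn w Ed ∧
    (∀ e ∈ Ed, w e ∉ Y ∧ ∀ y ∈ e, G.Adj (w e) y) ∧ (∀ e ∈ Ed, ¬ e.IsDiag) ∧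
    ∀ e ∈ Ed, ∀ y ∈ e, y ∈ Y
  have hgood : (Finset.univ.filter good).Nonempty :=
    ⟨∅, by
      simp only [Finset.mem_filter, Finset.mem_univ, true_and, good]
      by_cases hV : Nonempty V
      · obtain ⟨v⟩ := hV
        exact ⟨fun _ => v, by simp⟩
      · rw [not_nonempty_iff] at hV
        exact ⟨fun e => (Quot.out e).1, by simp⟩⟩
  obtain ⟨Ed, hEdmem, hmax⟩ := Finset.exists_max_image _ Finset.card hgood
  obtain ⟨w, hinj, hw, hd, hY⟩ := (Finset.mem_filter.1 hEdmem).2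
  have hminor := pairGraph_isMinor hinj hw
  have hcardEd : Ed.card ≤ C * Y.card := by
    have := hG _ _ hminor
    rw [Fintype.card_coe] at this
    exact (card_le_degSum_pairGraph hd hY).trans this
  have hext : ∀ x ∈ W \ Ed.image w, ∀ a ∈ Y, ∀ b ∈ Y, a ≠ b → G.Adj x a → G.Adj x b →
      s(a, b) ∈ Ed := by
    intro x hx a ha b hb hab hxa hxb
    by_contra hnot
    simp only [hW, Finset.mem_sdiff, Finset.mem_filter, Finset.mem_univ, true_and,
      Finset.mem_image, not_exists, not_and] at hx
    have hval : ∀ e ∈ Ed, Function.update w s(a, b) x e = w e := fun e he =>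
      Function.update_of_ne (by rintro rfl; exact hnot he) _ _
    have hbig : good (insert s(a, b) Ed) := by
      refine ⟨Function.update w s(a, b) x, ?_, ?_, ?_, ?_⟩
      · intro e he f hf hef
        simp only [Finset.coe_insert, Set.mem_insert_iff, Finset.mem_coe] at he hf
        rcases he with rfl | he <;> rcases hf with rfl | hf
        · rfl
        · rw [Function.update_self, hval f hf] at hef
          exact absurd hef.symm (hx.2 f hf)
        · rw [Function.update_self, hval e he] at hef
          exact absurd hef (hx.2 e he)
        · rw [hval e he, hval f hf] at hef
          exact hinj he hf hef
      · intro e he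
        rcases Finset.mem_insert.1 he with rfl | he
        · rw [Function.update_self]
          refine ⟨hx.1.1, fun y hy => ?_⟩
          rcases Sym2.mem_iff.1 hy with rfl | rfl <;> assumption
        · rw [hval e he]; exact hw e he
      · intro e he
        rcases Finset.mem_insert.1 he with rfl | he
        · simpa using hab
        · exact hd e he
      · intro e he y hy
        rcases Finset.mem_insert.1 he with rfl | he
        · rcases Sym2.mem_iff.1 hy with rfl | rfl <;> assumption
        · exact hY e he y hy
    have := hmax _ (Finset.mem_filter.2 ⟨Finset.mem_univ _, hbig⟩)
    rw [Finset.card_insert_of_notMem hnot] at this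
    omega
  obtain ⟨ρ, hρ, hback⟩ := (hG.of_isMinor hminor).exists_rank
  let back : {y // y ∈ Y} → Finset {y // y ∈ Y} := fun c =>
    Finset.univ.filter fun j => (pairGraph Y Ed).Adj c j ∧ ρ j < ρ c
  have htriple : ∀ x ∈ W \ Ed.image w, ∃ c a b : {y // y ∈ Y}, a ≠ b ∧ a ∈ back c ∧ b ∈ back c ∧
      G.Adj x a.1 ∧ G.Adj x b.1 ∧ G.Adj x c.1 := by
    intro x hx
    have hx3 : 3 ≤ (Y.filter fun y => G.Adj x y).card :=
      (Finset.mem_filter.1 (Finset.mem_sdiff.1 hx).1).2.2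
    set N : Finset {y // y ∈ Y} := Finset.univ.filter fun y => G.Adj x y.1 with hN
    have hNcard : 3 ≤ N.card := by
      refine hx3.trans ?_
      rw [← Finset.card_map (Function.Embedding.subtype (fun y => y ∈ Y))]
      refine Finset.card_le_card ?_
      intro y hy
      simp only [Finset.mem_filter] at hy
      simp only [hN, Finset.mem_map, Finset.mem_filter, Finset.mem_univ, true_and]
      exact ⟨⟨y, hy.1⟩, hy.2, rfl⟩
    obtain ⟨c, hc, hcmax⟩ := Finset.exists_max_image N ρ (Finset.card_pos.1 (by omega))
    have herase : 1 < (N.erase c).card := by rw [Finset.card_erase_of_mem hc]; omega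
    obtain ⟨a, ha, b, hb, hab⟩ := Finset.one_lt_card.1 herase
    have hadj : ∀ a ∈ N, G.Adj x a.1 := fun a ha => (Finset.mem_filter.1 ha).2
    have hbk : ∀ a ∈ N.erase c, a ∈ back c := by
      intro a ha
      have hne := Finset.ne_of_mem_erase ha
      have haN := Finset.mem_of_mem_erase ha
      simp only [back, Finset.mem_filter, Finset.mem_univ, true_and]
      refine ⟨⟨hne.symm, ?_⟩, lt_of_le_of_ne (hcmax a haN) fun h => hne (hρ h)⟩
      exact hext x hx _ c.2 _ a.2 (fun h => hne (Subtype.ext h.symm)) (hadj c hc) (hadj a haN)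
    exact ⟨c, a, b, hab, hbk a ha, hbk b hb, hadj a (Finset.mem_of_mem_erase ha),
      hadj b (Finset.mem_of_mem_erase hb), hadj c hc⟩
  choose! c a b hab hac hbc hxa hxb hxc using htriple
  have hrest : (W \ Ed.image w).card ≤ 2 * (C * C * Y.card) := by
    let T : Finset ((_ : {y // y ∈ Y}) × ({y // y ∈ Y} × {y // y ∈ Y})) :=
      Finset.univ.sigma fun c => back c ×ˢ back c
    have hT : T.card ≤ C * C * Y.card := by
      rw [Finset.card_sigma]
      calc ∑ c, (back c ×ˢ back c).card ≤ ∑ _c : {y // y ∈ Y}, C * C := by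
            refine Finset.sum_le_sum fun c _ => ?_
            rw [Finset.card_product]
            exact Nat.mul_le_mul (hback c) (hback c)
        _ = C * C * Y.card := by simp [mul_comm]
    refine le_trans (Finset.card_le_mul_card_image_of_maps_to
      (f := fun x => (⟨c x, (a x, b x)⟩ : (_ : {y // y ∈ Y}) × ({y // y ∈ Y} × {y // y ∈ Y})))
      (t := T) ?_ 2 ?_) (Nat.mul_le_mul_left 2 hT)
    · intro x hx
      simp only [T, Finset.mem_sigma, Finset.mem_univ, true_and, Finset.mem_product]
      exact ⟨hac x hx, hbc x hx⟩
    · rintro ⟨c0, a0, b0⟩ -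
      by_contra hlt
      push Not at hlt
      obtain ⟨x, y, z, hx, hy, hz, hxy, hxz, hyz⟩ := Finset.two_lt_card_iff.1 hlt
      simp only [Finset.mem_filter, Sigma.mk.injEq, heq_eq_eq, Prod.mk.injEq] at hx hy hz
      have hY' : ∀ x ∈ W \ Ed.image w, x ∉ Y := fun x hx =>
        (Finset.mem_filter.1 (Finset.mem_sdiff.1 hx).1).2.1
      have hall : ∀ x, (x ∈ W \ Ed.image w ∧ c x = c0 ∧ a x = a0 ∧ b x = b0) →
          G.Adj x a0.1 ∧ G.Adj x b0.1 ∧ G.Adj x c0.1 ∧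
          a0.1 ≠ b0.1 ∧ a0.1 ≠ c0.1 ∧ b0.1 ≠ c0.1 := by
        rintro v ⟨hv, rfl, rfl, rfl⟩
        have h1 := hac v hv
        have h2 := hbc v hv
        simp only [back, Finset.mem_filter, Finset.mem_univ, true_and] at h1 h2
        refine ⟨hxa v hv, hxb v hv, hxc v hv,
          fun h => hab v hv (Subtype.ext h), fun h => h1.1.1 (Subtype.ext h.symm),
          fun h => h2.1.1 (Subtype.ext h.symm)⟩
      obtain ⟨x1, x2, x3, h1, h2, h3⟩ := hall x hx
      obtain ⟨y1, y2, y3, -⟩ := hall y hy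
      obtain ⟨z1, z2, z3, -⟩ := hall z hz
      exact hK (isMinor_K33_of_adj h1 h2 h3 hxy hxz hyz x1 x2 x3 y1 y2 y3 z1 z2 z3)
  have hsplit : W.card ≤ (W \ Ed.image w).card + (Ed.image w).card := by
    have := Finset.le_card_sdiff (Ed.image w) W
    omega
  have hcardim : (Ed.image w).card ≤ Ed.card := Finset.card_image_le
  have : (C + 2 * (C * C)) * Y.card = C * Y.card + 2 * (C * C * Y.card) := by ring
  omega

end Counting

/-! ### Most vertices see few conflicts outside high-degree vertices -/

section GoodVertices

open scoped Classical

variable {V : Type} {G : SimpleGraph V} {C : ℕ}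

/-- The neighbours of `w` in `X`. -/
noncomputable def SimpleGraph.nbrIn (G : SimpleGraph V) (X : Finset V) (w : V) : Finset V :=
  X.filter fun x => G.Adj w x

lemma mem_nbrIn {X : Finset V} {w x : V} : x ∈ G.nbrIn X w ↔ x ∈ X ∧ G.Adj w x := by
  simp [SimpleGraph.nbrIn]

lemma sum_card_nbrIn_le (hG : G.MinorSparse C) (X B : Finset V) :
    ∑ w ∈ B, (G.nbrIn X w).card ≤ C * (B.card + X.card) := by
  calc ∑ w ∈ B, (G.nbrIn X w).card = ((B ×ˢ X).filter fun p => G.Adj p.1 p.2).card := by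
        simp only [SimpleGraph.nbrIn, Finset.card_filter, Finset.sum_product]
    _ ≤ (((B ∪ X) ×ˢ (B ∪ X)).filter fun p => G.Adj p.1 p.2).card := by
        refine Finset.card_le_card (Finset.filter_subset_filter _ ?_)
        exact Finset.product_subset_product Finset.subset_union_left Finset.subset_union_right
    _ ≤ C * (B ∪ X).card := hG.card_pairs_le _
    _ ≤ _ := Nat.mul_le_mul_left _ (Finset.card_union_le _ _)

variable [Fintype V]

/-- The vertices with at least `D` neighbours in `X`. -/
noncomputable def SimpleGraph.bigIn (G : SimpleGraph V) (X : Finset V) (D : ℕ) : Finset V :=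
  Finset.univ.filter fun w => D ≤ (G.nbrIn X w).card

/-- The vertices of `X` adjacent to `x` or sharing with `x` a neighbour that is not big. -/
noncomputable def SimpleGraph.smallConf (G : SimpleGraph V) (X : Finset V) (D : ℕ) (x : V) :
    Finset V :=
  X.filter fun y => y ≠ x ∧ (G.Adj x y ∨ ∃ w, w ∉ G.bigIn X D ∧ G.Adj x w ∧ G.Adj w y)

/-- A vertex of `X` that is not big, has few small conflicts and at most two big neighbours. -/
def SimpleGraph.IsGood (G : SimpleGraph V) (X : Finset V) (D K : ℕ) (x : V) : Prop :=
  x ∈ X ∧ x ∉ G.bigIn X D ∧ (G.smallConf X D x).card ≤ K ∧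
    (G.nbrIn (G.bigIn X D) x).card ≤ 2

lemma mem_bigIn {X : Finset V} {D : ℕ} {w : V} :
    w ∈ G.bigIn X D ↔ D ≤ (G.nbrIn X w).card := by
  simp [SimpleGraph.bigIn]

lemma card_bigIn_le (hG : G.MinorSparse C) (X : Finset V) {D : ℕ} (hD : 2 * C ≤ D) :
    D * (G.bigIn X D).card ≤ 2 * C * X.card := by
  have h1 := sum_card_nbrIn_le hG X (G.bigIn X D)
  have h2 : (G.bigIn X D).card * D ≤ ∑ w ∈ G.bigIn X D, (G.nbrIn X w).card := by
    rw [← smul_eq_mul]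
    exact Finset.card_nsmul_le_sum _ _ _ fun w hw => mem_bigIn.1 hw
  have h3 := Nat.mul_le_mul_right (G.bigIn X D).card hD
  have h4 : C * ((G.bigIn X D).card + X.card) = C * (G.bigIn X D).card + C * X.card := by ring
  have h5 : 2 * C * (G.bigIn X D).card = 2 * (C * (G.bigIn X D).card) := by ring
  have h6 : 2 * C * X.card = 2 * (C * X.card) := by ring
  have h7 : (G.bigIn X D).card * D = D * (G.bigIn X D).card := by ring
  omega

/-- Pairs of vertices of `X` that are exactly the neighbours in `X` of an outside vertex. -/
lemma card_exact_pairs_le (hG : G.MinorSparse C) (X : Finset V) :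
    ((X ×ˢ X).filter fun p => p.1 ≠ p.2 ∧ ∃ w, w ∉ X ∧ G.nbrIn X w = {p.1, p.2}).card ≤
      C * X.card := by
  set Ed : Finset (Sym2 V) := Finset.univ.filter fun e => ¬ e.IsDiag ∧
    ∃ w, w ∉ X ∧ ∀ y, y ∈ G.nbrIn X w ↔ y ∈ e with hEd
  have hex : ∀ e : Sym2 V, ∃ w, e ∈ Ed → w ∉ X ∧ ∀ y, y ∈ G.nbrIn X w ↔ y ∈ e := by
    intro e
    by_cases he : e ∈ Ed
    · obtain ⟨w, hw⟩ := (Finset.mem_filter.1 he).2.2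
      exact ⟨w, fun _ => hw⟩
    · exact ⟨(Quot.out e).1, fun h => absurd h he⟩
  choose w hw using hex
  have hminor : (pairGraph X Ed).IsMinor G := by
    refine pairGraph_isMinor (w := w) ?_ ?_
    · intro e he f hf hef
      refine Sym2.ext fun y => ?_
      rw [← (hw e he).2, ← (hw f hf).2, hef]
    · intro e he
      exact ⟨(hw e he).1, fun y hy => (mem_nbrIn.1 (((hw e he).2 y).2 hy)).2⟩
  have h := hG _ _ hminor
  rw [Fintype.card_coe] at h
  refine le_trans ?_ h
  unfold SimpleGraph.degSum
  rw [← Finset.card_map ((Function.Embedding.subtype (fun y => y ∈ X)).prodMap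
    (Function.Embedding.subtype (fun y => y ∈ X)))]
  refine Finset.card_le_card ?_
  rintro ⟨a, b⟩ hp
  simp only [Finset.mem_filter, Finset.mem_product] at hp
  obtain ⟨⟨ha, hb⟩, hab, w, hwX, hN⟩ := hp
  simp only [Finset.mem_map, Finset.mem_filter, Finset.mem_univ, true_and]
  refine ⟨(⟨a, ha⟩, ⟨b, hb⟩), ⟨fun h => hab (congrArg Subtype.val h), ?_⟩, rfl⟩
  simp only [hEd, Finset.mem_filter, Finset.mem_univ, true_and, Sym2.mk_isDiag_iff]
  exact ⟨hab, w, hwX, fun y => by rw [hN]; simp⟩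

lemma sum_card_smallConf_le (hG : G.MinorSparse C)
    (hK : ¬ (completeBipartiteGraph (Fin 3) (Fin 3)).IsMinor G) (X : Finset V) (D : ℕ) :
    ∑ x ∈ X, (G.smallConf X D x).card ≤
      (2 * C + (1 + C + 2 * (C * C)) * (D * D)) * X.card := by
  set W : Finset V := (X ∪ Finset.univ.filter fun w => w ∉ X ∧
    3 ≤ (X.filter fun y => G.Adj w y).card) \ G.bigIn X D with hW
  set P1 := (X ×ˢ X).filter fun p => G.Adj p.1 p.2 with hP1
  set P2 := W.biUnion fun w => G.nbrIn X w ×ˢ G.nbrIn X w with hP2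
  set P3 := (X ×ˢ X).filter fun p => p.1 ≠ p.2 ∧ ∃ w, w ∉ X ∧ G.nbrIn X w = {p.1, p.2} with hP3
  have hWcard : W.card ≤ (1 + C + 2 * (C * C)) * X.card := by
    refine (Finset.card_le_card Finset.sdiff_subset).trans ((Finset.card_union_le _ _).trans ?_)
    have := card_three_neighbours_le hG hK X
    calc _ ≤ X.card + (C + 2 * (C * C)) * X.card := by omega
      _ = _ := by ring
  have h1 : P1.card ≤ C * X.card := hG.card_pairs_le X
  have h2 : P2.card ≤ (1 + C + 2 * (C * C)) * (D * D) * X.card := by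
    refine Finset.card_biUnion_le.trans ?_
    calc ∑ w ∈ W, (G.nbrIn X w ×ˢ G.nbrIn X w).card ≤ ∑ _w ∈ W, D * D := by
          refine Finset.sum_le_sum fun w hw => ?_
          have hlt : (G.nbrIn X w).card < D := by
            have := (Finset.mem_sdiff.1 hw).2
            rw [mem_bigIn] at this
            omega
          rw [Finset.card_product]
          exact Nat.mul_le_mul hlt.le hlt.le
      _ = W.card * (D * D) := by simp
      _ ≤ (1 + C + 2 * (C * C)) * X.card * (D * D) := Nat.mul_le_mul_right _ hWcard
      _ = _ := by ring
  have h3 : P3.card ≤ C * X.card := card_exact_pairs_le hG X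
  have hsub : ((X ×ˢ X).filter fun p => p.2 ∈ G.smallConf X D p.1) ⊆ P1 ∪ (P2 ∪ P3) := by
    rintro ⟨x, y⟩ hp
    simp only [SimpleGraph.smallConf, Finset.mem_filter, Finset.mem_product] at hp
    obtain ⟨⟨hx, hy⟩, -, hne, h | ⟨w, hwB, hxw, hwy⟩⟩ := hp
    · exact Finset.mem_union_left _ (Finset.mem_filter.2 ⟨Finset.mem_product.2 ⟨hx, hy⟩, h⟩)
    · refine Finset.mem_union_right _ ?_
      have hxN : x ∈ G.nbrIn X w := mem_nbrIn.2 ⟨hx, hxw.symm⟩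
      have hyN : y ∈ G.nbrIn X w := mem_nbrIn.2 ⟨hy, hwy⟩
      by_cases hwW : w ∈ W
      · exact Finset.mem_union_left _ (Finset.mem_biUnion.2
          ⟨w, hwW, Finset.mem_product.2 ⟨hxN, hyN⟩⟩)
      · refine Finset.mem_union_right _ (Finset.mem_filter.2
          ⟨Finset.mem_product.2 ⟨hx, hy⟩, hne.symm, w, ?_⟩)
        have hw : w ∉ X ∪ Finset.univ.filter fun w => w ∉ X ∧
            3 ≤ (X.filter fun y => G.Adj w y).card := fun h =>
          hwW (Finset.mem_sdiff.2 ⟨h, hwB⟩)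
        simp only [Finset.mem_union, Finset.mem_filter, Finset.mem_univ, true_and, not_or,
          not_and, not_le] at hw
        refine ⟨hw.1, (Finset.eq_of_subset_of_card_le ?_ ?_).symm⟩
        · intro z hz
          simp only [Finset.mem_insert, Finset.mem_singleton] at hz
          rcases hz with rfl | rfl <;> assumption
        · have := hw.2 hw.1
          rw [Finset.card_pair hne.symm]
          unfold SimpleGraph.nbrIn
          omega
  have hsum : ∑ x ∈ X, (G.smallConf X D x).card =
      ((X ×ˢ X).filter fun p => p.2 ∈ G.smallConf X D p.1).card := by
    rw [Finset.card_filter, Finset.sum_product]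
    refine Finset.sum_congr rfl fun x _ => ?_
    rw [← Finset.card_filter]
    congr 1
    ext y
    simp only [SimpleGraph.smallConf, Finset.mem_filter]
    tauto
  rw [hsum]
  refine (Finset.card_le_card hsub).trans ((Finset.card_union_le _ _).trans ?_)
  have h4 := Finset.card_union_le P2 P3
  have : (2 * C + (1 + C + 2 * (C * C)) * (D * D)) * X.card =
    C * X.card + C * X.card + (1 + C + 2 * (C * C)) * (D * D) * X.card := by ring
  omega

/-- For suitable constants, all but a small proportion of the vertices of any set are good. -/
theorem exists_card_not_isGood_le (C : ℕ) {δ : ℝ} (hδ : 0 < δ) : ∃ D K : ℕ, 0 < D ∧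
    ∀ (V : Type) [Fintype V] (G : SimpleGraph V), G.MinorSparse C →
      ¬ (completeBipartiteGraph (Fin 3) (Fin 3)).IsMinor G → ∀ X : Finset V,
      ((X.filter fun x => ¬ G.IsGood X D K x).card : ℝ) ≤ δ * X.card := by
  set c : ℕ := 1 + C + 2 * (C * C) with hc
  obtain ⟨D, hD⟩ := exists_nat_ge (max (4 * C * c / δ) (2 * C + 1))
  set K0 : ℕ := 2 * C + c * (D * D) with hK0
  obtain ⟨K, hKK⟩ := exists_nat_ge (2 * K0 / δ)
  have hD1 : 4 * C * c / δ ≤ (D : ℝ) := (le_max_left _ _).trans hD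
  have hD2 : 2 * C + 1 ≤ D := by exact_mod_cast (le_max_right _ _).trans hD
  refine ⟨D, K, by omega, ?_⟩
  intro V _ G hG hK X
  set B := G.bigIn X D with hB
  have hBcard : (D : ℝ) * B.card ≤ 2 * C * X.card := by
    exact_mod_cast card_bigIn_le hG X (by omega)
  set T := Finset.univ.filter fun w => w ∉ B ∧ 3 ≤ (B.filter fun y => G.Adj w y).card with hT
  have hTcard : (T.card : ℝ) ≤ (C + 2 * (C * C)) * B.card := by
    exact_mod_cast card_three_neighbours_le hG hK B
  set S := X.filter fun x => K + 1 ≤ (G.smallConf X D x).card with hS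
  have hScard : ((K : ℝ) + 1) * S.card ≤ K0 * X.card := by
    have h1 : S.card * (K + 1) ≤ ∑ x ∈ S, (G.smallConf X D x).card := by
      rw [← smul_eq_mul]
      exact Finset.card_nsmul_le_sum _ _ _ fun x hx => (Finset.mem_filter.1 hx).2
    have h2 : ∑ x ∈ S, (G.smallConf X D x).card ≤ ∑ x ∈ X, (G.smallConf X D x).card :=
      Finset.sum_le_sum_of_subset (Finset.filter_subset _ _)
    have h3 := h1.trans (h2.trans (sum_card_smallConf_le hG hK X D))
    rw [mul_comm] at h3
    exact_mod_cast h3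
  have hsub : (X.filter fun x => ¬ G.IsGood X D K x) ⊆ B ∪ (T ∪ S) := by
    intro x hx
    obtain ⟨hxX, hx⟩ := Finset.mem_filter.1 hx
    by_contra hnot
    simp only [Finset.mem_union, not_or, hT, hS, Finset.mem_filter, Finset.mem_univ, true_and,
      not_and, not_le] at hnot
    refine hx ⟨hxX, hnot.1, by have := hnot.2.2 hxX; omega, ?_⟩
    exact Nat.lt_succ_iff.1 (hnot.2.1 hnot.1)
  have hle : ((X.filter fun x => ¬ G.IsGood X D K x).card : ℝ) ≤ B.card + (T.card + S.card) := by
    have := (Finset.card_le_card hsub).trans ((Finset.card_union_le _ _).trans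
      (Nat.add_le_add_left (Finset.card_union_le _ _) _))
    exact_mod_cast this
  have hDpos : (0 : ℝ) < D := by exact_mod_cast (by omega : 0 < D)
  have hX0 : (0 : ℝ) ≤ X.card := Nat.cast_nonneg _
  have hBT : (B.card : ℝ) + T.card ≤ c * B.card := by
    rw [hc]; push_cast; linarith
  have hcB : (c : ℝ) * B.card ≤ δ / 2 * X.card := by
    rw [div_le_iff₀ hδ] at hD1
    have h1 : (D : ℝ) * (c * B.card) ≤ c * (2 * C * X.card) := by
      have := mul_le_mul_of_nonneg_left hBcard (Nat.cast_nonneg (α := ℝ) c)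
      linarith
    have h2 : (c : ℝ) * (2 * C * X.card) ≤ D * (δ / 2 * X.card) := by
      have := mul_le_mul_of_nonneg_right hD1 hX0
      linarith
    exact le_of_mul_le_mul_left (h1.trans h2) hDpos
  have hSb : (S.card : ℝ) ≤ δ / 2 * X.card := by
    rw [div_le_iff₀ hδ] at hKK
    have hK1 : (0 : ℝ) < K + 1 := by positivity
    refine le_of_mul_le_mul_left (hScard.trans ?_) hK1
    have := mul_le_mul_of_nonneg_right hKK hX0
    have h3 : 0 ≤ δ * X.card := by positivity
    linarith
  linarith

end GoodVertices

/-! ### Cutting minor-sparse graphs of bounded degree into bounded pieces -/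

section Clusters

open scoped Classical

variable {I J : Type}

/-- The quotient of a graph by a labelling of its vertices. -/
def SimpleGraph.quot (F : SimpleGraph I) (l : I → J) : SimpleGraph J where
  Adj a b := a ≠ b ∧ ∃ i j, l i = a ∧ l j = b ∧ F.Adj i j
  symm := ⟨by
    rintro a b ⟨h, i, j, hi, hj, hij⟩
    exact ⟨h.symm, j, i, hj, hi, hij.symm⟩⟩
  loopless := ⟨fun a h => h.1 rfl⟩

lemma quot_isMinor {F : SimpleGraph I} {l : I → J} (hl : ∀ a, F.ConnIn {i | l i = a}) :
    (F.quot l).IsMinor F := by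
  refine ⟨fun a => {i | l i = a}, hl, ?_, ?_⟩
  · intro a b hab
    rw [Set.disjoint_left]
    intro i hi hi'
    exact hab (hi.symm.trans hi')
  · rintro a b ⟨-, i, j, hi, hj, hij⟩
    exact ⟨i, hi, j, hj, hij⟩

/-- A map that strictly decreases a rank wherever it moves a point has a proper two-colouring. -/
lemma exists_parity_colouring (ρ : J → ℕ) (p : J → J) (hp : ∀ a, p a ≠ a → ρ (p a) < ρ a) :
    ∃ col : J → Bool, ∀ a, p a ≠ a → col (p a) ≠ col a := by
  let col : J → Bool := fun a => (WellFounded.fix (measure ρ).wf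
    (C := fun _ => Bool) (fun a ih => if h : p a ≠ a then !(ih (p a) (hp a h)) else true) a)
  refine ⟨col, fun a ha => ?_⟩
  have hcol : col a = !(col (p a)) := by
    simp only [col]
    rw [WellFounded.fix_eq]
    simp [ha]
  rw [hcol]
  cases col (p a) <;> simp

variable [Fintype I]

/-- The total weight of ordered pairs separated by a labelling. -/
noncomputable def cutWeight (μ : I → I → ℝ) (l : I → J) : ℝ :=
  ∑ i, ∑ j, if l i = l j then 0 else μ i j

lemma sum_fiber_pairs [Fintype J] (μ : I → I → ℝ) (l : I → J) (P : J → J → Prop)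
    [∀ a b, Decidable (P a b)] :
    ∑ a, ∑ b, (if P a b then ∑ i, ∑ j, (if l i = a ∧ l j = b then μ i j else 0) else 0) =
      ∑ i, ∑ j, if P (l i) (l j) then μ i j else 0 := by
  have h1 : ∀ a b, (if P a b then ∑ i, ∑ j, (if l i = a ∧ l j = b then μ i j else 0) else 0) =
      ∑ i, ∑ j, (if l i = a ∧ l j = b ∧ P a b then μ i j else 0) := by
    intro a b
    by_cases h : P a b <;> simp [h]
  have h2 : ∀ i j, (if P (l i) (l j) then μ i j else 0) =
      ∑ a, ∑ b, (if l i = a ∧ l j = b ∧ P a b then μ i j else 0) := by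
    intro i j
    simp [ite_and]
  simp_rw [h1, h2]
  calc _ = ∑ a, ∑ i, ∑ b, ∑ j, (if l i = a ∧ l j = b ∧ P a b then μ i j else 0) :=
        Finset.sum_congr rfl fun a _ => Finset.sum_comm
    _ = ∑ i, ∑ a, ∑ b, ∑ j, (if l i = a ∧ l j = b ∧ P a b then μ i j else 0) := Finset.sum_comm
    _ = ∑ i, ∑ a, ∑ j, ∑ b, (if l i = a ∧ l j = b ∧ P a b then μ i j else 0) :=
        Finset.sum_congr rfl fun i _ => Finset.sum_congr rfl fun a _ => Finset.sum_comm
    _ = _ := Finset.sum_congr rfl fun i _ => Finset.sum_comm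

variable {F : SimpleGraph I} {μ : I → I → ℝ}

/-- Each cluster of a cluster graph can be given a parent that carries a fixed proportion of the
weight towards lower-ranked clusters. -/
lemma exists_parent [Fintype J] {C : ℕ} (hC : F.MinorSparse C) (hμ : ∀ i j, 0 ≤ μ i j)
    (hsymm : ∀ i j, μ i j = μ j i) (hsupp : ∀ i j, ¬ F.Adj i j → μ i j = 0) {l : I → J}
    (hl : ∀ a, F.ConnIn {i | l i = a}) :
    ∃ (ρ : J → ℕ) (p : J → J), (∀ a, p a ≠ a → (F.quot l).Adj a (p a) ∧ ρ (p a) < ρ a) ∧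
      cutWeight μ l ≤ 2 * C * ∑ i, ∑ j, if p (l i) ≠ l i ∧ l j = p (l i) then μ i j else 0 := by
  obtain ⟨ρ, hρ, hback⟩ := (hC.of_isMinor (quot_isMinor hl)).exists_rank
  let W : J → J → ℝ := fun a b => ∑ i, ∑ j, if l i = a ∧ l j = b then μ i j else 0
  have hW : ∀ a b, 0 ≤ W a b := fun a b => Finset.sum_nonneg fun i _ => Finset.sum_nonneg
    fun j _ => by split_ifs; exacts [hμ i j, le_rfl]
  have hpar : ∀ a, ∃ q, (q ≠ a → (F.quot l).Adj a q ∧ ρ q < ρ a) ∧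
      ∑ b, (if (F.quot l).Adj a b ∧ ρ b < ρ a then W a b else 0) ≤
        C * ∑ b, if q ≠ a ∧ b = q then W a b else 0 := by
    intro a
    rw [← Finset.sum_filter]
    rcases (Finset.univ.filter fun b => (F.quot l).Adj a b ∧ ρ b < ρ a).eq_empty_or_nonempty
      with he | hne
    · refine ⟨a, fun h => absurd rfl h, ?_⟩
      rw [he]
      simp
    · obtain ⟨q, hq, hmax⟩ := Finset.exists_max_image _ (W a) hne
      have hq' := (Finset.mem_filter.1 hq).2
      refine ⟨q, fun _ => hq', ?_⟩
      have hqa : q ≠ a := hq'.1.ne.symm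
      calc _ ≤ ∑ b ∈ Finset.univ.filter fun b => (F.quot l).Adj a b ∧ ρ b < ρ a, W a q :=
            Finset.sum_le_sum hmax
        _ ≤ C * W a q := by
            rw [Finset.sum_const, nsmul_eq_mul]
            exact mul_le_mul_of_nonneg_right (by exact_mod_cast hback a) (hW a q)
        _ = _ := by simp [hqa]
  choose p hp hpw using hpar
  refine ⟨ρ, p, hp, ?_⟩
  have h1 : cutWeight μ l ≤ 2 * ∑ i, ∑ j,
      if (F.quot l).Adj (l i) (l j) ∧ ρ (l j) < ρ (l i) then μ i j else 0 := by
    have hswap : ∑ i, ∑ j, (if (F.quot l).Adj (l i) (l j) ∧ ρ (l j) < ρ (l i) then μ i j else 0) =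
        ∑ i, ∑ j, if (F.quot l).Adj (l i) (l j) ∧ ρ (l i) < ρ (l j) then μ i j else 0 := by
      rw [Finset.sum_comm]
      refine Finset.sum_congr rfl fun i _ => Finset.sum_congr rfl fun j _ => ?_
      rw [hsymm j i, (F.quot l).adj_comm]
    rw [two_mul]
    nth_rewrite 2 [hswap]
    unfold cutWeight
    simp_rw [← Finset.sum_add_distrib]
    refine Finset.sum_le_sum fun i _ => Finset.sum_le_sum fun j _ => ?_
    have h0 := hμ i j
    by_cases hij : l i = l j
    · rw [if_pos hij]
      split_ifs <;> linarith
    · rw [if_neg hij]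
      by_cases hadj : F.Adj i j
      · have hq : (F.quot l).Adj (l i) (l j) := ⟨hij, i, j, rfl, rfl, hadj⟩
        rcases lt_or_gt_of_ne (fun h => hij (hρ h) : ρ (l i) ≠ ρ (l j)) with h | h
        · rw [if_pos (⟨hq, h⟩ : _ ∧ ρ (l i) < ρ (l j))]
          split_ifs <;> linarith
        · rw [if_pos (⟨hq, h⟩ : _ ∧ ρ (l j) < ρ (l i))]
          split_ifs <;> linarith
      · rw [hsupp i j hadj]
        simp
  have h2 := sum_fiber_pairs μ l fun a b => (F.quot l).Adj a b ∧ ρ b < ρ a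
  have h3 := sum_fiber_pairs μ l fun a b => p a ≠ a ∧ b = p a
  rw [← h2] at h1
  rw [← h3]
  have h4 : ∑ a, ∑ b, (if (F.quot l).Adj a b ∧ ρ b < ρ a then W a b else 0) ≤
      ∑ a, C * ∑ b, if p a ≠ a ∧ b = p a then W a b else 0 :=
    Finset.sum_le_sum fun a _ => hpw a
  rw [← Finset.mul_sum] at h4
  linarith

/-- One round of merging clusters. -/
lemma exists_coarser_clusters {C d s : ℕ} (hCpos : 0 < C) (hC : F.MinorSparse C)
    (hd : ∀ i, (Finset.univ.filter fun j => F.Adj i j).card ≤ d) (hμ : ∀ i j, 0 ≤ μ i j)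
    (hsymm : ∀ i j, μ i j = μ j i) (hsupp : ∀ i j, ¬ F.Adj i j → μ i j = 0)
    [Fintype J] {l : I → J} (hl : ∀ a, F.ConnIn {i | l i = a})
    (hs : ∀ a, (Finset.univ.filter fun i => l i = a).card ≤ s) :
    ∃ (J' : Type) (_ : Fintype J') (l' : I → J'), (∀ a, F.ConnIn {i | l' i = a}) ∧
      (∀ a, (Finset.univ.filter fun i => l' i = a).card ≤ s + s * d * s) ∧
      cutWeight μ l' ≤ (1 - 1 / (4 * C)) * cutWeight μ l := by
  obtain ⟨ρ, p, hp, hcut⟩ := exists_parent hC hμ hsymm hsupp hl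
  obtain ⟨col, hcol⟩ := exists_parity_colouring ρ p fun a ha => (hp a ha).2
  obtain ⟨c, hc⟩ : ∃ c : Bool, cutWeight μ l ≤ 4 * C * ∑ i, ∑ j,
      if (p (l i) ≠ l i ∧ l j = p (l i)) ∧ col (l i) = c then μ i j else 0 := by
    have hsum : ∑ i, ∑ j, (if p (l i) ≠ l i ∧ l j = p (l i) then μ i j else 0) =
        (∑ i, ∑ j, if (p (l i) ≠ l i ∧ l j = p (l i)) ∧ col (l i) = true then μ i j else 0) +
        ∑ i, ∑ j, if (p (l i) ≠ l i ∧ l j = p (l i)) ∧ col (l i) = false then μ i j else 0 := by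
      simp_rw [← Finset.sum_add_distrib]
      refine Finset.sum_congr rfl fun i _ => Finset.sum_congr rfl fun j _ => ?_
      cases col (l i) <;> simp
    by_contra hcon
    push Not at hcon
    have h1 := hcon true
    have h2 := hcon false
    rw [hsum] at hcut
    linarith
  let r : J → J := fun a => if col a = c then p a else a
  have hr : ∀ a, r a = a ∨ (r a = p a ∧ p a ≠ a ∧ col a = c) := by
    intro a
    by_cases h : col a = c
    · by_cases h' : p a = a
      · left; simp [r, h']
      · right; simp [r, h, h']
    · left; simp [r, h]
  have hrp : ∀ a, p a ≠ a → col a = c → r (p a) = p a := by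
    intro a ha hac
    have := hcol a ha
    rw [hac] at this
    simp [r, this]
  have hrr : ∀ a, r (r a) = r a := by
    intro a
    rcases hr a with h | ⟨h, h', h''⟩
    · rw [h, h]
    · rw [h, hrp a h' h'']
  refine ⟨{b // ∃ a, r a = b}, inferInstance, fun i => ⟨r (l i), l i, rfl⟩, ?_, ?_, ?_⟩
  · rintro ⟨b, a₀, ha₀⟩
    have hset : {i | (⟨r (l i), l i, rfl⟩ : {b // ∃ a, r a = b}) = ⟨b, a₀, ha₀⟩} =
        ⋃ a ∈ {a | r a = b}, {i | l i = a} := by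
      ext i
      simp
    rw [hset]
    refine connIn_biUnion (H := F.quot l) ?_ (fun a _ => hl a) ?_
    · have hb : r b = b := by rw [← ha₀, hrr]
      have hadj : ∀ a ∈ ({a | r a = b} : Set J), a = b ∨ (F.quot l).Adj a b := by
        rintro a ha
        rcases hr a with h | ⟨h, h', h''⟩
        · left; rw [← h]; exact ha
        · right
          rw [Set.mem_ofPred_eq, h] at ha
          rw [← ha]
          exact (hp a h').1
      refine ⟨⟨b, hb⟩, fun u hu v hv => Relation.ReflTransGen.trans (b := b) ?_ ?_⟩
      · rcases hadj u hu with h | h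
        · rw [h]
        · exact Relation.ReflTransGen.single ⟨h, hb⟩
      · rcases hadj v hv with h | h
        · rw [h]
        · exact Relation.ReflTransGen.single ⟨h.symm, hv⟩
    · rintro a - b - ⟨-, i, j, hi, hj, hij⟩
      exact ⟨i, hi, j, hj, hij⟩
  · rintro ⟨b, hb⟩
    have hN : (Finset.univ.filter fun a => (F.quot l).Adj b a).card ≤ s * d := by
      calc _ ≤ (((Finset.univ.filter fun i => l i = b).biUnion fun i =>
            Finset.univ.filter fun j => F.Adj i j).image l).card := by
            refine Finset.card_le_card ?_
            intro a ha
            obtain ⟨-, i, j, hi, hj, hij⟩ := (Finset.mem_filter.1 ha).2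
            simp only [Finset.mem_image, Finset.mem_biUnion, Finset.mem_filter, Finset.mem_univ,
              true_and]
            exact ⟨j, ⟨i, hi, hij⟩, hj⟩
        _ ≤ _ := Finset.card_image_le
        _ ≤ (Finset.univ.filter fun i => l i = b).card * d :=
            Finset.card_biUnion_le_card_mul _ _ _ fun i _ => hd i
        _ ≤ s * d := Nat.mul_le_mul_right _ (hs b)
    calc _ ≤ ((Finset.univ.filter fun i => l i = b) ∪
          (Finset.univ.filter fun a => (F.quot l).Adj b a).biUnion fun a =>
            Finset.univ.filter fun i => l i = a).card := by
          refine Finset.card_le_card ?_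
          intro i hi
          simp only [Finset.mem_filter, Finset.mem_univ, true_and, Subtype.mk.injEq] at hi
          simp only [Finset.mem_union, Finset.mem_filter, Finset.mem_univ, true_and,
            Finset.mem_biUnion, exists_eq_right']
          rcases hr (l i) with h | ⟨h, h', -⟩
          · left; rw [← h, hi]
          · right; rw [← hi, h]; exact (hp _ h').1.symm
      _ ≤ _ := Finset.card_union_le _ _
      _ ≤ s + s * d * s := by
          refine add_le_add (hs b) ?_
          exact (Finset.card_biUnion_le_card_mul _ _ _ fun a _ => hs a).trans
            (Nat.mul_le_mul_right _ hN)
  · have hdec : cutWeight μ (fun i => (⟨r (l i), l i, rfl⟩ : {b // ∃ a, r a = b})) + ∑ i, ∑ j,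
        (if (p (l i) ≠ l i ∧ l j = p (l i)) ∧ col (l i) = c then μ i j else 0) ≤
        cutWeight μ l := by
      unfold cutWeight
      simp_rw [← Finset.sum_add_distrib]
      refine Finset.sum_le_sum fun i _ => Finset.sum_le_sum fun j _ => ?_
      have h0 := hμ i j
      simp only [Subtype.mk.injEq]
      by_cases hP : (p (l i) ≠ l i ∧ l j = p (l i)) ∧ col (l i) = c
      · have h1 : r (l i) = r (l j) := by
          rw [hP.1.2, hrp _ hP.1.1 hP.2]
          simp [r, hP.2]
        have h2 : l i ≠ l j := by
          rw [hP.1.2]; exact hP.1.1.symm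
        rw [if_pos hP, if_pos h1, if_neg h2, zero_add]
      · rw [if_neg hP, add_zero]
        by_cases hij : l i = l j
        · simp [hij]
        · rw [if_neg hij]
          split_ifs <;> linarith
    have hC' : (0 : ℝ) < 4 * C := by positivity
    rw [← div_le_iff₀' hC'] at hc
    calc _ ≤ cutWeight μ l - cutWeight μ l / (4 * C) := by linarith
      _ = _ := by ring

/-- Minor-sparse weighted graphs of bounded degree can be cut into pieces of bounded size by
removing a small proportion of the weight. -/
theorem exists_bounded_clusters (C d : ℕ) (hCpos : 0 < C) {η : ℝ} (hη : 0 < η) :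
    ∃ S : ℕ, ∀ (I : Type) [Fintype I] (F : SimpleGraph I), F.MinorSparse C →
      (∀ i, (Finset.univ.filter fun j => F.Adj i j).card ≤ d) → ∀ μ : I → I → ℝ,
      (∀ i j, 0 ≤ μ i j) → (∀ i j, μ i j = μ j i) → (∀ i j, ¬ F.Adj i j → μ i j = 0) →
      ∃ (J : Type) (_ : Fintype J) (l : I → J),
        (∀ a, (Finset.univ.filter fun i => l i = a).card ≤ S) ∧
        cutWeight μ l ≤ η * ∑ i, ∑ j, μ i j := by
  have hC1 : (1 : ℝ) ≤ C := by exact_mod_cast hCpos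
  have h0 : (0 : ℝ) ≤ 1 - 1 / (4 * C) := by
    rw [sub_nonneg, div_le_one (by positivity)]; linarith
  have h1 : (1 : ℝ) - 1 / (4 * C) < 1 := by
    have : (0 : ℝ) < 1 / (4 * C) := by positivity
    linarith
  obtain ⟨m, hm⟩ := exists_pow_lt_of_lt_one hη h1
  have key : ∀ m : ℕ, ∃ S : ℕ, ∀ (I : Type) [Fintype I] (F : SimpleGraph I), F.MinorSparse C →
      (∀ i, (Finset.univ.filter fun j => F.Adj i j).card ≤ d) → ∀ μ : I → I → ℝ,
      (∀ i j, 0 ≤ μ i j) → (∀ i j, μ i j = μ j i) → (∀ i j, ¬ F.Adj i j → μ i j = 0) →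
      ∃ (J : Type) (_ : Fintype J) (l : I → J), (∀ a, F.ConnIn {i | l i = a}) ∧
        (∀ a, (Finset.univ.filter fun i => l i = a).card ≤ S) ∧
        cutWeight μ l ≤ (1 - 1 / (4 * C)) ^ m * ∑ i, ∑ j, μ i j := by
    intro m
    induction m with
    | zero =>
      refine ⟨1, fun I _ F _ _ μ hμ _ _ => ⟨I, inferInstance, id, fun a => ?_, fun a => ?_, ?_⟩⟩
      · simpa using connIn_singleton F a
      · refine Finset.card_le_one.2 fun i hi j hj => ?_
        exact (Finset.mem_filter.1 hi).2.trans (Finset.mem_filter.1 hj).2.symm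
      · rw [pow_zero, one_mul]
        refine Finset.sum_le_sum fun i _ => Finset.sum_le_sum fun j _ => ?_
        split_ifs
        exacts [hμ i j, le_rfl]
    | succ m ih =>
      obtain ⟨S, hS⟩ := ih
      refine ⟨S + S * d * S, fun I _ F hF hd μ hμ hsymm hsupp => ?_⟩
      obtain ⟨J, _, l, hl, hs, hcut⟩ := hS I F hF hd μ hμ hsymm hsupp
      obtain ⟨J', inst, l', hl', hs', hcut'⟩ :=
        exists_coarser_clusters hCpos hF hd hμ hsymm hsupp hl hs
      refine ⟨J', inst, l', hl', hs', hcut'.trans ?_⟩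
      rw [pow_succ', mul_assoc]
      exact mul_le_mul_of_nonneg_left hcut h0
  obtain ⟨S, hS⟩ := key m
  refine ⟨S, fun I _ F hF hd μ hμ hsymm hsupp => ?_⟩
  obtain ⟨J, inst, l, -, hs, hcut⟩ := hS I F hF hd μ hμ hsymm hsupp
  refine ⟨J, inst, l, hs, hcut.trans (mul_le_mul_of_nonneg_right hm.le ?_)⟩
  exact Finset.sum_nonneg fun i _ => Finset.sum_nonneg fun j _ => hμ i j

end Clusters

/-! ### Weighted matchings and the odd set inequalities

Matchings on a finite type are represented by involutive permutations, the unmatched points being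
the fixed points. -/

section Matching

open scoped Classical

variable {A : Type} {w z : A → A → ℝ}

/-- Splicing two involutions along a set invariant under both of them. -/
lemma exists_splice {σ τ : Equiv.Perm A} (hσ : ∀ a, σ (σ a) = a) (hτ : ∀ a, τ (τ a) = a)
    {P : A → Prop} (hPσ : ∀ a, P a → P (σ a)) (hPτ : ∀ a, P a → P (τ a)) :
    ∃ π : Equiv.Perm A, (∀ a, π (π a) = a) ∧ ∀ a, π a = if P a then τ a else σ a := by
  have hinv : Function.Involutive fun a => if P a then τ a else σ a := by
    intro a
    by_cases h : P a
    · simp [h, hPτ a h, hτ]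
    · have h' : ¬ P (σ a) := fun h' => h (by simpa [hσ] using hPσ _ h')
      simp [h, h', hσ]
  exact ⟨hinv.toPerm, hinv, fun a => rfl⟩

/-- The cycle of a fixed point of `τ` under the product of two involutions contains at most one
fixed point of `σ`. -/
lemma eq_of_sameCycle_of_fixed {σ τ : Equiv.Perm A} (hσ : ∀ a, σ (σ a) = a)
    (hτ : ∀ a, τ (τ a) = a) {x u v : A} (hx : τ x = x) :
    (∀ a, (τ * σ).SameCycle x a → (τ * σ).SameCycle x (σ a)) ∧
    (∀ a, (τ * σ).SameCycle x a → (τ * σ).SameCycle x (τ a)) ∧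
    ((τ * σ).SameCycle x u → (τ * σ).SameCycle x v → σ u = u → σ v = v → u = v) := by
  have hσ1 : σ * σ = 1 := Equiv.ext hσ
  have hτ1 : τ * τ = 1 := Equiv.ext hτ
  have hσi : σ⁻¹ = σ := inv_eq_of_mul_eq_one_left hσ1
  have hτi : τ⁻¹ = τ := inv_eq_of_mul_eq_one_left hτ1
  set g := τ * σ with hg
  have hgi : g⁻¹ = σ * τ := by rw [hg, mul_inv_rev, hσi, hτi]
  have hconjτ : ∀ i : ℤ, τ * g ^ i = g ^ (-i) * τ := by
    intro i
    have h1 : τ * g * τ⁻¹ = g⁻¹ := by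
      rw [hgi, hg, hτi, ← mul_assoc, hτ1, one_mul]
    have h2 : τ * g ^ i * τ⁻¹ = g ^ (-i) := by
      rw [← conj_zpow, h1, inv_zpow', ]
    rw [← h2, inv_mul_cancel_right]
  have hτg : ∀ i : ℤ, τ ((g ^ i) x) = (g ^ (-i)) x := by
    intro i
    rw [← Equiv.Perm.mul_apply, hconjτ, Equiv.Perm.mul_apply, hx]
  have hσg : ∀ i : ℤ, σ ((g ^ i) x) = (g ^ (-i - 1)) x := by
    intro i
    have h1 : σ = g⁻¹ * τ := by rw [hgi, mul_assoc, hτ1, mul_one]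
    calc σ ((g ^ i) x) = (g⁻¹ * τ) ((g ^ i) x) := by rw [← h1]
      _ = g⁻¹ ((g ^ (-i)) x) := by rw [Equiv.Perm.mul_apply, hτg]
      _ = _ := by
        rw [← Equiv.Perm.mul_apply, ← zpow_neg_one, ← zpow_add]
        congr 2
        ring
  refine ⟨?_, ?_, ?_⟩
  · rintro _ ⟨i, rfl⟩
    exact ⟨-i - 1, (hσg i).symm⟩
  · rintro _ ⟨i, rfl⟩
    exact ⟨-i, (hτg i).symm⟩
  · rintro ⟨i, rfl⟩ ⟨j, rfl⟩ hu hv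
    have hstab : ∀ n : ℤ, (g ^ n) x = x ↔ g ^ n ∈ MulAction.stabilizer (Equiv.Perm A) x := by
      intro n
      rw [MulAction.mem_stabilizer_iff, Equiv.Perm.smul_def]
    have hfix : ∀ i : ℤ, σ ((g ^ i) x) = (g ^ i) x →
        g ^ (2 * i + 1) ∈ MulAction.stabilizer (Equiv.Perm A) x := by
      intro i hi
      rw [← hstab]
      rw [hσg] at hi
      calc (g ^ (2 * i + 1)) x = (g ^ (i + 1)) ((g ^ i) x) := by
            rw [← Equiv.Perm.mul_apply, ← zpow_add]; congr 2; ring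
        _ = x := by
            rw [← hi, ← Equiv.Perm.mul_apply, ← zpow_add]
            have : i + 1 + (-i - 1) = 0 := by ring
            rw [this, zpow_zero, Equiv.Perm.one_apply]
    have hd : g ^ (i - j) ∈ MulAction.stabilizer (Equiv.Perm A) x := by
      have he : i - j = (2 * i + 1) * (i - j - i) + (2 * j + 1) * i := by ring
      rw [he, zpow_add, zpow_mul, zpow_mul]
      exact mul_mem (zpow_mem (hfix i hu) _) (zpow_mem (hfix j hv) _)
    rw [← hstab] at hd
    calc (g ^ i) x = (g ^ j) ((g ^ (i - j)) x) := by
          rw [← Equiv.Perm.mul_apply, ← zpow_add]; congr 2; ring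
      _ = _ := by rw [hd]

/-- A symmetric nonnegative weight on pairs that vanishes on the diagonal. -/
structure IsPairWeight (w : A → A → ℝ) : Prop where
  nonneg : ∀ a b, 0 ≤ w a b
  symm : ∀ a b, w a b = w b a
  diag : ∀ a, w a a = 0

variable [Fintype A]

/-- An involution of maximal weight. -/
def IsOptimal (w : A → A → ℝ) (σ : Equiv.Perm A) : Prop :=
  (∀ a, σ (σ a) = a) ∧ ∀ τ : Equiv.Perm A, (∀ a, τ (τ a) = a) →
    ∑ a, w a (τ a) ≤ ∑ a, w a (σ a)

lemma exists_isOptimal (w : A → A → ℝ) : ∃ σ, IsOptimal w σ := by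
  obtain ⟨σ, hσ, hmax⟩ := Finset.exists_max_image
    (Finset.univ.filter fun σ : Equiv.Perm A => ∀ a, σ (σ a) = a) (fun σ => ∑ a, w a (σ a))
    ⟨1, by simp⟩
  exact ⟨σ, (Finset.mem_filter.1 hσ).2, fun τ hτ =>
    hmax τ (Finset.mem_filter.2 ⟨Finset.mem_univ _, hτ⟩)⟩

/-- Two points are linked when no optimal involution fixes both of them, unless they coincide. -/
def Linked (w : A → A → ℝ) (u v : A) : Prop :=
  ∀ σ, IsOptimal w σ → σ u = u → σ v = v → u = v

lemma linked_of_pos (hw : IsPairWeight w) {u v : A} (h : 0 < w u v) : Linked w u v := by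
  intro σ hσ hu hv
  by_contra huv
  have hP : ∀ a, (a = u ∨ a = v) → (σ a = u ∨ σ a = v) := by
    rintro a (rfl | rfl)
    exacts [Or.inl hu, Or.inr hv]
  have hP' : ∀ a, (a = u ∨ a = v) → (Equiv.swap u v a = u ∨ Equiv.swap u v a = v) := by
    rintro a (rfl | rfl) <;> simp
  obtain ⟨π, hπ, hπa⟩ := exists_splice hσ.1 (Equiv.swap_apply_self u v ) hP hP'
  refine absurd (hσ.2 π hπ) (not_le.2 ?_)
  refine Finset.sum_lt_sum (fun a _ => ?_) ⟨u, Finset.mem_univ _, ?_⟩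
  · rw [hπa]
    split_ifs with ha
    · rcases ha with rfl | rfl
      · rw [hu, hw.diag]; exact hw.nonneg _ _
      · rw [hv, hw.diag]; exact hw.nonneg _ _
    · exact le_rfl
  · rw [hπa, hu, hw.diag]
    simpa using h

/-- Gallai's argument: if every point is fixed by some optimal involution, being linked is
transitive. -/
lemma Linked.trans (hfix : ∀ v, ∃ σ, IsOptimal w σ ∧ σ v = v) {u x v : A}
    (hux : Linked w u x) (hxv : Linked w x v) : Linked w u v := by
  intro σ hσ hu hv
  obtain ⟨τ, hτ, hx⟩ := hfix x
  obtain ⟨hPσ, hPτ, huniq⟩ := eq_of_sameCycle_of_fixed (u := u) (v := v) hσ.1 hτ.1 hx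
  set P : A → Prop := (τ * σ).SameCycle x
  obtain ⟨π, hπ, hπa⟩ := exists_splice hσ.1 hτ.1 hPσ hPτ
  obtain ⟨π', hπ', hπa'⟩ := exists_splice hτ.1 hσ.1 hPτ hPσ
  have hsum : ∑ a, w a (π a) + ∑ a, w a (π' a) = ∑ a, w a (σ a) + ∑ a, w a (τ a) := by
    rw [← Finset.sum_add_distrib, ← Finset.sum_add_distrib]
    refine Finset.sum_congr rfl fun a _ => ?_
    rw [hπa, hπa']
    split_ifs <;> ring
  have hopt : IsOptimal w π := by
    refine ⟨hπ, fun ρ hρ => (hσ.2 ρ hρ).trans ?_⟩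
    have := hτ.2 π' hπ'
    linarith
  have hxP : P x := Equiv.Perm.SameCycle.refl _ _
  have hπx : π x = x := by rw [hπa, if_pos hxP, hx]
  by_cases huP : P u
  · by_cases hvP : P v
    · exact huniq huP hvP hu hv
    · have hπv : π v = v := by rw [hπa, if_neg hvP, hv]
      have := hxv π hopt hπx hπv
      exact absurd (this ▸ hxP) hvP
  · have hπu : π u = u := by rw [hπa, if_neg huP, hu]
    have := hux π hopt hπu hπx
    exact absurd (this ▸ hxP) huP

/-- Discarding the pairs of weight zero from an optimal involution. -/
lemma IsOptimal.exists_pos (hw : IsPairWeight w) {σ : Equiv.Perm A} (hσ : IsOptimal w σ) :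
    ∃ π, IsOptimal w π ∧ ∀ a, π a = if 0 < w a (σ a) then σ a else a := by
  obtain ⟨π, hπ, hπa⟩ := exists_splice (τ := σ) (σ := 1) (fun _ => rfl) hσ.1
    (P := fun a => 0 < w a (σ a)) (fun a ha => ha) (fun a ha => by rwa [hσ.1, hw.symm])
  refine ⟨π, ⟨hπ, fun ρ hρ => (hσ.2 ρ hρ).trans (Finset.sum_le_sum fun a _ => ?_)⟩, hπa⟩
  rw [hπa]
  split_ifs with h
  · exact le_rfl
  · exact (not_lt.1 h).trans (hw.nonneg _ _)

/-- A set of pairs that witnesses that the weight `w` does not maximise the violation. -/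
lemma exists_tight_pairs (hw : IsPairWeight w) (hz : IsPairWeight z)
    (hdeg : ∀ a, ∑ b, z a b ≤ 1)
    (hodd : ∀ U : Finset A, Odd U.card → ∑ a ∈ U, ∑ b ∈ U, z a b + 1 ≤ U.card)
    (hpos : ∃ a b, 0 < w a b) :
    ∃ (D : A → A → Prop) (m : ℝ), (∃ a b, D a b) ∧ (∀ a b, D a b → 0 < w a b) ∧
      (∀ a b, D a b → D b a) ∧ (∑ a, ∑ b, if D a b then z a b else 0) ≤ m ∧
      ∀ σ, IsOptimal w σ → m ≤ ∑ a, if D a (σ a) then 1 else 0 := by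
  by_cases hcov : ∃ v, ∀ σ, IsOptimal w σ → 0 < w v (σ v)
  · obtain ⟨v, hv⟩ := hcov
    refine ⟨fun a b => 0 < w a b ∧ (a = v ∨ b = v), 2, ?_, fun a b h => h.1, ?_, ?_, ?_⟩
    · obtain ⟨σ, hσ⟩ := exists_isOptimal w
      exact ⟨v, σ v, hv σ hσ, Or.inl rfl⟩
    · rintro a b ⟨h, h'⟩
      exact ⟨by rwa [hw.symm], h'.symm⟩
    · calc _ ≤ ∑ a, ∑ b, ((if a = v then z a b else 0) + if b = v then z a b else 0) := by
            refine Finset.sum_le_sum fun a _ => Finset.sum_le_sum fun b _ => ?_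
            have := hz.nonneg a b
            split_ifs <;> first | linarith | (exfalso; tauto)
        _ = ∑ b, z v b + ∑ a, z a v := by
            simp_rw [Finset.sum_add_distrib]
            congr 1
            · rw [Finset.sum_comm]
              simp
            · simp
        _ ≤ 2 := by
            simp_rw [fun a => hz.symm a v]
            linarith [hdeg v]
    · intro σ hσ
      have h1 := hv σ hσ
      have hne : v ≠ σ v := by
        intro h
        rw [← h, hw.diag] at h1
        exact lt_irrefl _ h1
      have hsub : ({v, σ v} : Finset A) ⊆
          Finset.univ.filter fun a => 0 < w a (σ a) ∧ (a = v ∨ σ a = v) := by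
        intro a ha
        rw [Finset.mem_insert, Finset.mem_singleton] at ha
        refine Finset.mem_filter.2 ⟨Finset.mem_univ _, ?_⟩
        rcases ha with rfl | rfl
        · exact ⟨h1, Or.inl rfl⟩
        · rw [hσ.1]
          exact ⟨by rwa [hw.symm], Or.inr rfl⟩
      have := Finset.card_le_card hsub
      rw [Finset.card_pair hne] at this
      have h2 : (2 : ℝ) ≤ ∑ a, if 0 < w a (σ a) ∧ (a = v ∨ σ a = v) then 1 else 0 := by
        rw [Finset.sum_boole]
        exact_mod_cast this
      convert h2
  · push Not at hcov
    have hfix : ∀ v, ∃ σ, IsOptimal w σ ∧ σ v = v := by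
      intro v
      obtain ⟨σ, hσ, hσv⟩ := hcov v
      obtain ⟨π, hπ, hπa⟩ := hσ.exists_pos hw
      exact ⟨π, hπ, by rw [hπa, if_neg (not_lt.2 hσv)]⟩
    obtain ⟨u, v, huv⟩ := hpos
    let K : Finset A := Finset.univ.filter fun a => Linked w u a
    have hK : ∀ a, a ∈ K ↔ Linked w u a := fun a => by simp [K]
    have huK : u ∈ K := (hK u).2 fun _ _ _ _ => rfl
    have hKpos : ∀ a b, a ∈ K → 0 < w a b → b ∈ K := fun a b ha hab =>
      (hK b).2 (((hK a).1 ha).trans hfix (linked_of_pos hw hab))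
    have huniq : ∀ σ, IsOptimal w σ → ∀ a ∈ K, ∀ b ∈ K, σ a = a → σ b = b → a = b := by
      intro σ hσ a ha b hb h1 h2
      have hau : Linked w a u := fun σ hσ h h' => ((hK a).1 ha σ hσ h' h).symm
      exact hau.trans hfix ((hK b).1 hb) σ hσ h1 h2
    have hoddK : Odd K.card := by
      obtain ⟨σ, hσ, hσu⟩ := hfix u
      obtain ⟨π, hπ, hπa⟩ := hσ.exists_pos hw
      have hπu : π u = u := by rw [hπa, hσu]; simp
      have hmem : ∀ a ∈ K.erase u, π a ∈ K.erase u := by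
        intro a ha
        rw [Finset.mem_erase] at ha ⊢
        refine ⟨fun h => ha.1 ?_, ?_⟩
        · rw [← hπ.1 a, h, hπu]
        · rw [hπa]
          split_ifs with hp
          exacts [hKpos _ _ ha.2 hp, ha.2]
      have hzero : ∑ a ∈ K.erase u, (1 : ZMod 2) = 0 := by
        refine Finset.sum_involution (fun a _ => π a) (fun a ha => by decide) ?_ hmem
          (fun a ha => hπ.1 a)
        intro a ha _ hfixa
        rw [Finset.mem_erase] at ha
        exact ha.1 (huniq π hπ a ha.2 u huK hfixa hπu)
      rw [Finset.sum_const, nsmul_eq_mul, mul_one, ZMod.natCast_eq_zero_iff_even] at hzero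
      rw [← Finset.card_erase_add_one huK]
      exact hzero.add_one
    refine ⟨fun a b => 0 < w a b ∧ a ∈ K ∧ b ∈ K, (K.card : ℝ) - 1,
      ⟨u, v, huv, huK, hKpos u v huK huv⟩, fun a b h => h.1, ?_, ?_, ?_⟩
    · rintro a b ⟨h, h1, h2⟩
      exact ⟨by rwa [hw.symm], h2, h1⟩
    · have h1 : (∑ a, ∑ b, if 0 < w a b ∧ a ∈ K ∧ b ∈ K then z a b else 0) ≤
          ∑ a ∈ K, ∑ b ∈ K, z a b := by
        rw [← Finset.sum_filter_add_sum_filter_not Finset.univ (· ∈ K)]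
        rw [Finset.sum_eq_zero (s := Finset.univ.filter fun a => a ∉ K)]
        · rw [add_zero, Finset.filter_univ_mem]
          refine Finset.sum_le_sum fun a ha => ?_
          rw [← Finset.sum_filter]
          refine Finset.sum_le_sum_of_subset_of_nonneg (fun b hb => ?_)
            fun b _ _ => hz.nonneg a b
          exact (Finset.mem_filter.1 hb).2.2.2
        · intro a ha
          have := (Finset.mem_filter.1 ha).2
          simp [this]
      have h2 : (∑ a, ∑ b, if 0 < w a b ∧ a ∈ K ∧ b ∈ K then z a b else 0) ≤ (K.card : ℝ) - 1 :=
        h1.trans (le_sub_iff_add_le.2 (hodd K hoddK))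
      convert h2
    · intro σ hσ
      obtain ⟨π, hπ, hπa⟩ := hσ.exists_pos hw
      have hcard : (K.filter fun a => π a = a).card ≤ 1 := by
        refine Finset.card_le_one.2 fun a ha b hb => ?_
        rw [Finset.mem_filter] at ha hb
        exact huniq π hπ a ha.1 b hb.1 ha.2 hb.2
      have hsub : K ⊆ (Finset.univ.filter fun a => 0 < w a (σ a) ∧ a ∈ K ∧ σ a ∈ K) ∪
          K.filter fun a => π a = a := by
        intro a ha
        simp only [Finset.mem_union, Finset.mem_filter, hπa]
        by_cases hp : 0 < w a (σ a)
        · exact Or.inl ⟨Finset.mem_univ _, hp, ha, hKpos _ _ ha hp⟩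
        · exact Or.inr ⟨ha, if_neg hp⟩
      have h1 := (Finset.card_le_card hsub).trans (Finset.card_union_le _ _)
      have h2 := h1.trans (Nat.add_le_add_left hcard _)
      have h3 : (K.card : ℝ) - 1 ≤ ∑ a, if 0 < w a (σ a) ∧ a ∈ K ∧ σ a ∈ K then 1 else 0 := by
        rw [Finset.sum_boole, sub_le_iff_le_add]
        exact_mod_cast h2
      convert h3

/-- The excess of a fractional matching over an involution with respect to a weight. -/
noncomputable def excess (z : A → A → ℝ) (σ : Equiv.Perm A) (w : A → A → ℝ) : ℝ :=
  ∑ a, ∑ b, w a b * z a b - ∑ a, w a (σ a)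

/-- A fractional matching satisfying the odd set inequalities is dominated, for every weight, by
some matching. -/
theorem exists_involution_ge (hw : IsPairWeight w) (hz : IsPairWeight z)
    (hdeg : ∀ a, ∑ b, z a b ≤ 1)
    (hodd : ∀ U : Finset A, Odd U.card → ∑ a ∈ U, ∑ b ∈ U, z a b + 1 ≤ U.card) :
    ∃ σ : Equiv.Perm A, (∀ a, σ (σ a) = a) ∧ ∑ a, ∑ b, w a b * z a b ≤ ∑ a, w a (σ a) := by
  by_contra hcon
  push Not at hcon
  let T : Finset (Equiv.Perm A) := Finset.univ.filter fun σ => ∀ a, σ (σ a) = a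
  have hT : ∀ σ, σ ∈ T ↔ ∀ a, σ (σ a) = a := fun σ => by simp [T]
  have hTne : T.Nonempty := ⟨1, (hT 1).2 fun _ => rfl⟩
  let g : (A → A → ℝ) → ℝ := fun w => T.inf' hTne fun σ => excess z σ w
  let S : Set (A → A → ℝ) := {w | IsPairWeight w ∧ ∑ a, ∑ b, w a b = 1}
  have hhom : ∀ (c : ℝ) σ w, excess z σ (fun a b => c * w a b) = c * excess z σ w := by
    intro c σ w
    unfold excess
    rw [mul_sub, Finset.mul_sum, Finset.mul_sum]
    simp_rw [Finset.mul_sum, mul_assoc]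
  have hscale : ∀ w, IsPairWeight w → 0 < ∑ a, ∑ b, w a b →
      (fun a b => (∑ a, ∑ b, w a b)⁻¹ * w a b) ∈ S := by
    intro w hw hs
    refine ⟨⟨fun a b => mul_nonneg (inv_nonneg.2 hs.le) (hw.nonneg a b),
      fun a b => by rw [hw.symm], fun a => by rw [hw.diag, mul_zero]⟩, ?_⟩
    simp_rw [← Finset.mul_sum]
    exact inv_mul_cancel₀ hs.ne'
  have hsumpos : ∀ w, IsPairWeight w → (∀ σ ∈ T, 0 < excess z σ w) → 0 < ∑ a, ∑ b, w a b := by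
    intro w hw hex
    have hnn : 0 ≤ ∑ a, ∑ b, w a b :=
      Finset.sum_nonneg fun a _ => Finset.sum_nonneg fun b _ => hw.nonneg a b
    refine hnn.lt_of_ne fun h0 => ?_
    have hall : ∀ a b, w a b = 0 := by
      intro a b
      have h1 := (Finset.sum_eq_zero_iff_of_nonneg
        (fun a _ => Finset.sum_nonneg fun b _ => hw.nonneg a b)).1 h0.symm a (Finset.mem_univ a)
      exact (Finset.sum_eq_zero_iff_of_nonneg (fun b _ => hw.nonneg a b)).1 h1 b
        (Finset.mem_univ b)
    obtain ⟨σ, hσ⟩ := hTne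
    have := hex σ hσ
    simp [excess, hall] at this
  have hcompact : IsCompact S := by
    refine (isCompact_Icc (a := (0 : A → A → ℝ)) (b := 1)).of_isClosed_subset ?_ ?_
    · have hS : S = (⋂ a, ⋂ b, {w | 0 ≤ w a b}) ∩ (⋂ a, ⋂ b, {w | w a b = w b a}) ∩
          (⋂ a, {w | w a a = 0}) ∩ {w | ∑ a, ∑ b, w a b = 1} := by
        ext w
        simp only [S, Set.mem_inter_iff, Set.mem_iInter, Set.mem_ofPred_eq]
        exact ⟨fun h => ⟨⟨⟨h.1.nonneg, h.1.symm⟩, h.1.diag⟩, h.2⟩,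
          fun h => ⟨⟨h.1.1.1, h.1.1.2, h.1.2⟩, h.2⟩⟩
      rw [hS]
      refine ((IsClosed.inter ?_ ?_).inter ?_).inter ?_
      · exact isClosed_iInter fun a => isClosed_iInter fun b =>
          isClosed_le continuous_const (by fun_prop)
      · exact isClosed_iInter fun a => isClosed_iInter fun b =>
          isClosed_eq (by fun_prop) (by fun_prop)
      · exact isClosed_iInter fun a => isClosed_eq (by fun_prop) (by fun_prop)
      · exact isClosed_eq (by fun_prop) continuous_const
    · rintro w ⟨hw, hs⟩
      refine ⟨fun a b => hw.nonneg a b, fun a b => ?_⟩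
      calc w a b ≤ ∑ b, w a b := Finset.single_le_sum (fun b _ => hw.nonneg a b)
            (Finset.mem_univ b)
        _ ≤ ∑ a, ∑ b, w a b := Finset.single_le_sum (f := fun a => ∑ b, w a b)
            (fun a _ => Finset.sum_nonneg fun b _ => hw.nonneg a b) (Finset.mem_univ a)
        _ = 1 := hs
  have hcont : Continuous g := by
    refine Continuous.finset_inf'_apply hTne fun σ _ => ?_
    unfold excess
    fun_prop
  have hex0 : ∀ σ ∈ T, 0 < excess z σ w := fun σ hσ => sub_pos.2 (hcon σ ((hT σ).1 hσ))
  have hs0 := hsumpos w hw hex0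
  obtain ⟨w₁, ⟨hw₁, hs₁⟩, hmax⟩ := hcompact.exists_isMaxOn ⟨_, hscale w hw hs0⟩ hcont.continuousOn
  have hV : 0 < g w₁ := by
    refine lt_of_lt_of_le ?_ (hmax (hscale w hw hs0))
    refine (Finset.lt_inf'_iff hTne).2 fun σ hσ => ?_
    rw [hhom]
    exact mul_pos (inv_pos.2 hs0) (hex0 σ hσ)
  have hge : ∀ σ ∈ T, g w₁ ≤ excess z σ w₁ := fun σ hσ => Finset.inf'_le _ hσ
  have hpos₁ : ∃ a b, 0 < w₁ a b := by
    by_contra hno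
    push Not at hno
    have : ∑ a, ∑ b, w₁ a b ≤ 0 :=
      Finset.sum_nonpos fun a _ => Finset.sum_nonpos fun b _ => hno a b
    linarith
  obtain ⟨D, m, ⟨a₀, b₀, hD₀⟩, hDpos, hDsymm, hDz, hDm⟩ :=
    exists_tight_pairs hw₁ hz hdeg hodd hpos₁
  have hopt : ∀ σ ∈ T, excess z σ w₁ ≤ g w₁ → IsOptimal w₁ σ := by
    intro σ hσ hle
    refine ⟨(hT σ).1 hσ, fun τ hτ => ?_⟩
    have := hge τ ((hT τ).2 hτ)
    unfold excess at this hle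
    linarith
  set zD : ℝ := ∑ a, ∑ b, if D a b then z a b else 0 with hzD
  obtain ⟨t, ht0, htw, htσ⟩ : ∃ t : ℝ, 0 < t ∧ (∀ a b, D a b → t ≤ w₁ a b) ∧
      ∀ σ, g w₁ < excess z σ w₁ → t * zD ≤ excess z σ w₁ - g w₁ := by
    have h1 : ∀ᶠ t : ℝ in nhdsWithin 0 (Set.Ioi 0), 0 < t := self_mem_nhdsWithin
    have h2 : ∀ᶠ t : ℝ in nhdsWithin 0 (Set.Ioi 0), ∀ a b, D a b → t ≤ w₁ a b := by
      rw [Filter.eventually_all]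
      intro a
      rw [Filter.eventually_all]
      intro b
      by_cases h : D a b
      · exact nhdsWithin_le_nhds ((eventually_le_nhds (hDpos a b h)).mono fun t ht _ => ht)
      · exact Filter.Eventually.of_forall fun t h' => absurd h' h
    have h3 : ∀ᶠ t : ℝ in nhdsWithin 0 (Set.Ioi 0), ∀ σ, g w₁ < excess z σ w₁ →
        t * zD ≤ excess z σ w₁ - g w₁ := by
      rw [Filter.eventually_all]
      intro σ
      by_cases h : g w₁ < excess z σ w₁
      · have hc : Filter.Tendsto (fun t : ℝ => t * zD) (nhds 0) (nhds (0 * zD)) :=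
          (continuous_id.mul continuous_const).tendsto 0
        rw [zero_mul] at hc
        exact nhdsWithin_le_nhds
          ((hc.eventually (eventually_le_nhds (sub_pos.2 h))).mono fun t ht _ => ht)
      · exact Filter.Eventually.of_forall fun t h' => absurd h' h
    obtain ⟨t, h⟩ := (h1.and (h2.and h3)).exists
    exact ⟨t, h.1, h.2.1, h.2.2⟩
  let w₂ : A → A → ℝ := fun a b => w₁ a b - if D a b then t else 0
  have hw₂ : IsPairWeight w₂ := by
    refine ⟨fun a b => ?_, fun a b => ?_, fun a => ?_⟩
    · by_cases h : D a b
      · simpa [w₂, h] using htw a b h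
      · simpa [w₂, h] using hw₁.nonneg a b
    · have : D a b ↔ D b a := ⟨hDsymm a b, hDsymm b a⟩
      simp only [w₂, this, hw₁.symm a b]
    · have : ¬ D a a := fun h => (hDpos a a h).ne' (hw₁.diag a)
      simp [w₂, this, hw₁.diag]
  have hex₂ : ∀ σ ∈ T, g w₁ ≤ excess z σ w₂ := by
    intro σ hσ
    have heq : excess z σ w₂ =
        excess z σ w₁ - t * zD + t * ∑ a, if D a (σ a) then 1 else 0 := by
      simp only [excess, w₂, sub_mul, Finset.sum_sub_distrib, hzD, Finset.mul_sum, mul_ite,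
        mul_zero, ite_mul, zero_mul, mul_one]
      ring
    have hnn : 0 ≤ t * ∑ a, (if D a (σ a) then (1 : ℝ) else 0) :=
      mul_nonneg ht0.le (Finset.sum_nonneg fun a _ => by split_ifs <;> norm_num)
    rw [heq]
    by_cases h : g w₁ < excess z σ w₁
    · have := htσ σ h
      linarith
    · have h1 := hDm σ (hopt σ hσ (not_lt.1 h))
      have h2 := mul_le_mul_of_nonneg_left (hDz.trans h1) ht0.le
      have h3 := hge σ hσ
      linarith
  have hs₂ := hsumpos w₂ hw₂ fun σ hσ => hV.trans_le (hex₂ σ hσ)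
  have hs₂lt : ∑ a, ∑ b, w₂ a b < 1 := by
    rw [← hs₁]
    have hle : ∀ a b, w₂ a b ≤ w₁ a b := fun a b => by
      simp only [w₂]; split_ifs <;> linarith
    refine Finset.sum_lt_sum (fun a _ => Finset.sum_le_sum fun b _ => hle a b)
      ⟨a₀, Finset.mem_univ _, Finset.sum_lt_sum (fun b _ => hle a₀ b) ⟨b₀, Finset.mem_univ _, ?_⟩⟩
    simp [w₂, hD₀, ht0]
  have hfin := hmax (hscale w₂ hw₂ hs₂)
  obtain ⟨σ, hσ, hσe⟩ := Finset.exists_mem_eq_inf' hTne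
    fun σ => excess z σ fun a b => (∑ a, ∑ b, w₂ a b)⁻¹ * w₂ a b
  have h1 : (∑ a, ∑ b, w₂ a b)⁻¹ * excess z σ w₂ ≤ g w₁ := by
    rw [← hhom, ← hσe]
    exact hfin
  have h2 := hex₂ σ hσ
  rw [inv_mul_le_iff₀ hs₂] at h1
  nlinarith

end Matching

/-! ### Choosing a matching for every colour -/

section ColourMatchings

open scoped Classical

variable {A ι : Type} [Fintype A] {z : A → A → ℝ}

/-- A matching that hits many of the weighted pairs `(u x, v x)`. -/
lemma exists_involution_hits (hz : IsPairWeight z) (hdeg : ∀ a, ∑ b, z a b ≤ 1)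
    (hodd : ∀ U : Finset A, Odd U.card → ∑ a ∈ U, ∑ b ∈ U, z a b + 1 ≤ U.card)
    (R : Finset ι) (u v : ι → A) (huv : ∀ x ∈ R, u x ≠ v x) (p : ι → ℝ) (hp : ∀ x ∈ R, 0 ≤ p x) :
    ∃ σ : Equiv.Perm A, (∀ a, σ (σ a) = a) ∧
      ∑ x ∈ R, p x * z (u x) (v x) ≤ ∑ x ∈ R, p x * if σ (u x) = v x then 1 else 0 := by
  let w : A → A → ℝ := fun a b => ∑ x ∈ R, p x *
    ((if u x = a then if v x = b then 1 else 0 else 0) +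
      if v x = a then if u x = b then 1 else 0 else 0)
  have hw : IsPairWeight w := by
    refine ⟨fun a b => Finset.sum_nonneg fun x hx => mul_nonneg (hp x hx) ?_, fun a b => ?_,
      fun a => Finset.sum_eq_zero fun x hx => ?_⟩
    · refine add_nonneg ?_ ?_ <;> split_ifs <;> norm_num
    · refine Finset.sum_congr rfl fun x _ => ?_
      congr 1
      rw [add_comm]
      simp only [← ite_and, and_comm]
    · have h := huv x hx
      have h1 : ¬ (u x = a ∧ v x = a) := fun h' => h (h'.1.trans h'.2.symm)
      by_cases h2 : u x = a <;> by_cases h3 : v x = a <;> simp [h2, h3]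
      exact absurd ⟨h2, h3⟩ h1
  obtain ⟨σ, hσ, hle⟩ := exists_involution_ge hw hz hdeg hodd
  refine ⟨σ, hσ, ?_⟩
  have h1 : ∑ a, ∑ b, w a b * z a b = 2 * ∑ x ∈ R, p x * z (u x) (v x) := by
    calc _ = ∑ a, ∑ b, ∑ x ∈ R, p x *
        ((if u x = a then if v x = b then z a b else 0 else 0) +
          if v x = a then if u x = b then z a b else 0 else 0) := by
          refine Finset.sum_congr rfl fun a _ => Finset.sum_congr rfl fun b _ => ?_
          rw [Finset.sum_mul]
          refine Finset.sum_congr rfl fun x _ => ?_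
          rw [mul_assoc, add_mul]
          simp only [ite_mul, one_mul, zero_mul]
      _ = ∑ x ∈ R, ∑ a, ∑ b, p x *
        ((if u x = a then if v x = b then z a b else 0 else 0) +
          if v x = a then if u x = b then z a b else 0 else 0) := by
          rw [Finset.sum_comm]
          rw [Finset.sum_congr rfl fun b _ => Finset.sum_comm]
          rw [Finset.sum_comm]
          exact Finset.sum_congr rfl fun x _ => Finset.sum_comm
      _ = ∑ x ∈ R, 2 * (p x * z (u x) (v x)) := by
          refine Finset.sum_congr rfl fun x _ => ?_
          simp_rw [← Finset.mul_sum, Finset.sum_add_distrib]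
          simp [hz.symm (v x) (u x)]
          ring
      _ = _ := by rw [Finset.mul_sum]
  have h2 : ∑ a, w a (σ a) = 2 * ∑ x ∈ R, p x * if σ (u x) = v x then 1 else 0 := by
    simp only [w]
    rw [Finset.sum_comm, Finset.mul_sum]
    refine Finset.sum_congr rfl fun x _ => ?_
    rw [← Finset.mul_sum, Finset.sum_add_distrib]
    have h3 : (v x = σ (u x)) ↔ σ (u x) = v x := eq_comm
    have h4 : (u x = σ (v x)) ↔ σ (u x) = v x :=
      ⟨fun h => by rw [h, hσ], fun h => by rw [← h, hσ]⟩
    simp only [Finset.sum_ite_eq, Finset.mem_univ, if_true, h3, h4]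
    ring
  linarith

lemma exists_involutions_potential_le (hz : IsPairWeight z) (hdeg : ∀ a, ∑ b, z a b ≤ 1)
    (hodd : ∀ U : Finset A, Odd U.card → ∑ a ∈ U, ∑ b ∈ U, z a b + 1 ≤ U.card)
    (R : Finset ι) (u v : ι → A) (huv : ∀ x ∈ R, u x ≠ v x) (L : ι → Finset ℤ) {q : ℝ}
    (hq0 : 0 ≤ q) (hq1 : q ≤ 1) (T : Finset ℤ) :
    ∀ p : ι → ℝ, (∀ x ∈ R, 0 ≤ p x) → ∃ σ : ℤ → Equiv.Perm A, (∀ c a, σ c (σ c a) = a) ∧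
      ∑ x ∈ R, p x * q ^ (T.filter fun c => c ∈ L x ∧ σ c (u x) = v x).card ≤
        ∑ x ∈ R, p x * (1 - (1 - q) * z (u x) (v x)) ^ (T.filter fun c => c ∈ L x).card := by
  have hz1 : ∀ a b, z a b ≤ 1 := fun a b =>
    (Finset.single_le_sum (fun b _ => hz.nonneg a b) (Finset.mem_univ b)).trans (hdeg a)
  have hbase : ∀ x, 0 ≤ 1 - (1 - q) * z (u x) (v x) := fun x => by
    nlinarith [hz1 (u x) (v x), hz.nonneg (u x) (v x)]
  induction T using Finset.induction_on with
  | empty =>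
    intro p _
    refine ⟨fun _ => 1, fun _ _ => rfl, le_of_eq (Finset.sum_congr rfl fun x _ => ?_)⟩
    rw [Finset.filter_empty, Finset.filter_empty, Finset.card_empty, pow_zero, pow_zero]
  | insert c T hc ih =>
    intro p hp
    obtain ⟨σ, hσ, hle⟩ := ih
      (fun x => p x * if c ∈ L x then 1 - (1 - q) * z (u x) (v x) else 1)
      fun x hx => mul_nonneg (hp x hx) (by split_ifs; exacts [hbase x, zero_le_one])
    let P : ι → ℝ := fun x => p x * q ^ (T.filter fun c => c ∈ L x ∧ σ c (u x) = v x).card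
    obtain ⟨τ, hτ, hτle⟩ := exists_involution_hits hz hdeg hodd (R.filter fun x => c ∈ L x) u v
      (fun x hx => huv x (Finset.mem_filter.1 hx).1) P
      (fun x hx => mul_nonneg (hp x (Finset.mem_filter.1 hx).1) (pow_nonneg hq0 _))
    refine ⟨Function.update σ c τ, fun c' a => ?_, ?_⟩
    · by_cases h : c' = c
      · subst h; simp [hτ]
      · simp [h, hσ]
    have hL : ∀ x, p x * q ^ ((insert c T).filter fun c' => c' ∈ L x ∧
        Function.update σ c τ c' (u x) = v x).card =
        P x * if c ∈ L x ∧ τ (u x) = v x then q else 1 := by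
      intro x
      have hT : (T.filter fun c' => c' ∈ L x ∧ Function.update σ c τ c' (u x) = v x) =
          T.filter fun c => c ∈ L x ∧ σ c (u x) = v x := by
        refine Finset.filter_congr fun c' hc' => ?_
        have hne : c' ≠ c := fun h => hc (h ▸ hc')
        rw [Function.update_of_ne hne]
      rw [Finset.filter_insert, hT, Function.update_self]
      split_ifs with h
      · rw [Finset.card_insert_of_notMem (fun h' => hc (Finset.mem_filter.1 h').1), pow_succ,
          ← mul_assoc]
      · rw [mul_one]
    have hR : ∀ x, p x * (1 - (1 - q) * z (u x) (v x)) ^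
        ((insert c T).filter fun c' => c' ∈ L x).card =
        (p x * if c ∈ L x then 1 - (1 - q) * z (u x) (v x) else 1) *
          (1 - (1 - q) * z (u x) (v x)) ^ (T.filter fun c => c ∈ L x).card := by
      intro x
      rw [Finset.filter_insert]
      split_ifs with h
      · rw [Finset.card_insert_of_notMem (fun h' => hc (Finset.mem_filter.1 h').1), pow_succ']
        ring
      · rw [mul_one]
    simp_rw [hL, hR]
    refine le_trans ?_ hle
    rw [Finset.sum_filter, Finset.sum_filter] at hτle
    have h1 : ∑ x ∈ R, P x * (if c ∈ L x ∧ τ (u x) = v x then q else 1) = ∑ x ∈ R, P x -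
        (1 - q) * ∑ x ∈ R, if c ∈ L x then P x * if τ (u x) = v x then 1 else 0 else 0 := by
      rw [Finset.mul_sum, ← Finset.sum_sub_distrib]
      refine Finset.sum_congr rfl fun x _ => ?_
      by_cases h1 : c ∈ L x <;> by_cases h2 : τ (u x) = v x <;> simp [h1, h2]
      ring
    have h2 : ∑ x ∈ R, (p x * if c ∈ L x then 1 - (1 - q) * z (u x) (v x) else 1) *
        q ^ (T.filter fun c => c ∈ L x ∧ σ c (u x) = v x).card = ∑ x ∈ R, P x -
        (1 - q) * ∑ x ∈ R, if c ∈ L x then P x * z (u x) (v x) else 0 := by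
      rw [Finset.mul_sum, ← Finset.sum_sub_distrib]
      refine Finset.sum_congr rfl fun x _ => ?_
      by_cases h1 : c ∈ L x <;> simp only [h1, if_true, if_false, P] <;> ring
    rw [h1, h2]
    have := mul_le_mul_of_nonneg_left hτle (sub_nonneg.2 hq1)
    linarith

/-- Matchings for all colours such that every pair `(u x, v x)` is matched in many colours of the
list of `x`. -/
lemma exists_involutions_many_hits (hz : IsPairWeight z) (hdeg : ∀ a, ∑ b, z a b ≤ 1)
    (hodd : ∀ U : Finset A, Odd U.card → ∑ a ∈ U, ∑ b ∈ U, z a b + 1 ≤ U.card)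
    (R : Finset ι) (u v : ι → A) (huv : ∀ x ∈ R, u x ≠ v x) (L : ι → Finset ℤ) {q : ℝ}
    (hq0 : 0 < q) (hq1 : q ≤ 1) (h : ι → ℕ)
    (hsum : ∑ x ∈ R, (1 - (1 - q) * z (u x) (v x)) ^ (L x).card / q ^ h x < 1) :
    ∃ σ : ℤ → Equiv.Perm A, (∀ c a, σ c (σ c a) = a) ∧
      ∀ x ∈ R, h x ≤ ((L x).filter fun c => σ c (u x) = v x).card := by
  obtain ⟨σ, hσ, hle⟩ := exists_involutions_potential_le hz hdeg hodd R u v huv L hq0.le hq1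
    (R.biUnion L) (fun x => 1 / q ^ h x) fun x _ => by positivity
  refine ⟨σ, hσ, fun x hx => ?_⟩
  by_contra hlt
  push Not at hlt
  have hT : ∀ x ∈ R, (R.biUnion L).filter (fun c => c ∈ L x) = L x := by
    intro x hx
    ext c
    simp only [Finset.mem_filter, Finset.mem_biUnion, and_iff_right_iff_imp]
    exact fun hc => ⟨x, hx, hc⟩
  have hlow : (1 : ℝ) ≤ 1 / q ^ h x *
      q ^ ((R.biUnion L).filter fun c => c ∈ L x ∧ σ c (u x) = v x).card := by
    rw [← Finset.filter_filter, hT x hx, one_div_mul_eq_div, one_le_div (by positivity)]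
    exact pow_le_pow_of_le_one hq0.le hq1 hlt.le
  have h1 := Finset.single_le_sum (s := R) (f := fun x => 1 / q ^ h x *
      q ^ ((R.biUnion L).filter fun c => c ∈ L x ∧ σ c (u x) = v x).card)
    (fun x _ => by positivity) hx
  have h2 : ∑ x ∈ R, 1 / q ^ h x * (1 - (1 - q) * z (u x) (v x)) ^
      ((R.biUnion L).filter fun c => c ∈ L x).card =
      ∑ x ∈ R, (1 - (1 - q) * z (u x) (v x)) ^ (L x).card / q ^ h x := by
    refine Finset.sum_congr rfl fun x hx => ?_
    rw [hT x hx]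
    ring
  rw [h2] at hle
  linarith

/-- A lower tail estimate for a sum of independent indicators, in potential form. -/
lemma exists_tail_bound {ζ : ℝ} (hζ0 : 0 < ζ) (hζ1 : ζ ≤ 1) :
    ∃ q c : ℝ, 0 < q ∧ q ≤ 1 ∧ 0 < c ∧ ∀ (y m : ℝ) (N h : ℕ), 0 ≤ y → y ≤ 1 → 0 ≤ m →
      (1 + ζ) * m ≤ y * N → (h : ℝ) ≤ (1 + ζ / 2) * m →
      (1 - (1 - q) * y) ^ N / q ^ h ≤ Real.exp (-(c * m)) := by
  refine ⟨1 - ζ / 8, ζ / 8 * (ζ / 4), by linarith, by linarith, by positivity, ?_⟩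
  intro y m N h hy0 hy1 hm hN hh
  set s := ζ / 8 with hs
  have hs0 : 0 < s := by positivity
  have hs1 : s < 1 := by linarith
  have hq : 0 < 1 - s := by linarith
  have h1 : (1 - (1 - (1 - s)) * y) ^ N ≤ Real.exp (-(s * ((1 + ζ) * m))) := by
    have hb : 1 - (1 - (1 - s)) * y ≤ Real.exp (-(s * y)) := by
      have := Real.add_one_le_exp (-(s * y))
      linarith
    have hb0 : 0 ≤ 1 - (1 - (1 - s)) * y := by nlinarith
    calc _ ≤ Real.exp (-(s * y)) ^ N := pow_le_pow_left₀ hb0 hb N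
      _ = Real.exp (-(s * (y * N))) := by rw [← Real.exp_nat_mul]; ring_nf
      _ ≤ _ := by
        refine Real.exp_le_exp.2 (neg_le_neg ?_)
        exact mul_le_mul_of_nonneg_left hN hs0.le
  have h2 : (1 / (1 - s)) ^ h ≤ Real.exp (s * ((1 + 3 * ζ / 4) * m)) := by
    have hb : 1 / (1 - s) ≤ Real.exp (s / (1 - s)) := by
      have := Real.add_one_le_exp (s / (1 - s))
      have he : 1 / (1 - s) = s / (1 - s) + 1 := by field_simp; ring
      linarith
    calc _ ≤ Real.exp (s / (1 - s)) ^ h := pow_le_pow_left₀ (by positivity) hb h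
      _ = Real.exp (h * (s / (1 - s))) := by rw [← Real.exp_nat_mul]
      _ ≤ _ := by
        refine Real.exp_le_exp.2 ?_
        calc (h : ℝ) * (s / (1 - s)) ≤ (1 + ζ / 2) * m * (s / (1 - s)) :=
              mul_le_mul_of_nonneg_right hh (by positivity)
          _ = s * m * ((1 + ζ / 2) / (1 - s)) := by ring
          _ ≤ s * m * (1 + 3 * ζ / 4) := by
              refine mul_le_mul_of_nonneg_left ?_ (by positivity)
              rw [div_le_iff₀ hq, hs]
              nlinarith
          _ = _ := by ring
  calc _ = (1 - (1 - (1 - s)) * y) ^ N * (1 / (1 - s)) ^ h := by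
        rw [one_div, inv_pow]; rfl
    _ ≤ Real.exp (-(s * ((1 + ζ) * m))) * Real.exp (s * ((1 + 3 * ζ / 4) * m)) :=
        mul_le_mul h1 h2 (by positivity) (by positivity)
    _ = _ := by
        rw [← Real.exp_add]
        congr 1
        ring

end ColourMatchings

/-! ### A fractional matching from a cluster -/

section FractionalMatching

open scoped Classical

variable {A : Type} {μ : A → A → ℝ} {o b : A → ℝ}

lemma sum_div_le_one (hμ : IsPairWeight μ) {s : Finset A} {a : A}
    (h1 : ∑ c ∈ s, μ a c + o a ≤ 1) (ha : o a ≤ 1 / 2) (h2 : ∀ c ∈ s, o c ≤ 1 / 2) :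
    ∑ c ∈ s, μ a c / (3 / 2 - o a - o c) ≤ 1 := by
  have hx : 0 < 1 - o a := by linarith
  calc _ ≤ ∑ c ∈ s, μ a c / (1 - o a) := by
        refine Finset.sum_le_sum fun c hc => ?_
        exact div_le_div_of_nonneg_left (hμ.nonneg a c) hx (by linarith [h2 c hc])
    _ = (∑ c ∈ s, μ a c) / (1 - o a) := by rw [Finset.sum_div]
    _ ≤ 1 := by rw [div_le_one hx]; linarith

/-- The odd set inequality when the outer load of the set is at least one. -/
lemma odd_set_of_one_le (hμ : IsPairWeight μ) {Y : Finset A} (ho0 : ∀ a ∈ Y, 0 ≤ o a)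
    (hb0 : ∀ a ∈ Y, 0 ≤ b a) (h1 : ∀ a ∈ Y, ∑ c ∈ Y, μ a c + b a + o a ≤ 1)
    (h2 : ∀ a ∈ Y, o a ≤ 1 / 2) (h3 : 1 ≤ ∑ a ∈ Y, b a) :
    ∑ a ∈ Y, ∑ c ∈ Y, μ a c / (3 / 2 - o a - o c) + 1 ≤ Y.card := by
  have hv : ∀ a ∈ Y, ∑ c ∈ Y, μ a c / (3 / 2 - o a - o c) ≤ 1 - b a := by
    intro a ha
    have hx : 0 < 1 - o a := by linarith [h2 a ha]
    calc _ ≤ ∑ c ∈ Y, μ a c / (1 - o a) := by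
          refine Finset.sum_le_sum fun c hc => ?_
          exact div_le_div_of_nonneg_left (hμ.nonneg a c) hx (by linarith [h2 c hc])
      _ = (∑ c ∈ Y, μ a c) / (1 - o a) := by rw [Finset.sum_div]
      _ ≤ 1 - b a := by
          rw [div_le_iff₀ hx]
          nlinarith [h1 a ha, mul_nonneg (hb0 a ha) (ho0 a ha)]
  have := Finset.sum_le_sum hv
  rw [Finset.sum_sub_distrib, Finset.sum_const, nsmul_eq_mul, mul_one] at this
  linarith

/-- The odd set inequality for triples. -/
lemma odd_set_of_card_eq_three (hμ : IsPairWeight μ) {Y : Finset A} (ho0 : ∀ a ∈ Y, 0 ≤ o a)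
    (h1 : ∀ a ∈ Y, ∑ c ∈ Y, μ a c + b a + o a ≤ 1)
    (h3 : ∑ a ∈ Y, o a ≤ ∑ a ∈ Y, b a) (h4 : ∑ a ∈ Y, o a < 1) (hY : Y.card = 3) :
    ∑ a ∈ Y, ∑ c ∈ Y, μ a c / (3 / 2 - o a - o c) + 1 ≤ Y.card := by
  set ω := ∑ a ∈ Y, o a with hω
  have hx : 0 < 3 / 2 - ω := by linarith
  have hle : ∑ a ∈ Y, ∑ c ∈ Y, μ a c / (3 / 2 - o a - o c) ≤
      (∑ a ∈ Y, ∑ c ∈ Y, μ a c) / (3 / 2 - ω) := by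
    simp_rw [Finset.sum_div]
    refine Finset.sum_le_sum fun a ha => Finset.sum_le_sum fun c hc => ?_
    by_cases hac : a = c
    · subst hac
      simp [hμ.diag]
    · refine div_le_div_of_nonneg_left (hμ.nonneg a c) hx ?_
      have hsub : ∑ x ∈ {a, c}, o x ≤ ω := by
        refine Finset.sum_le_sum_of_subset_of_nonneg (fun x hx => ?_) fun x hx _ => ho0 x hx
        rw [Finset.mem_insert, Finset.mem_singleton] at hx
        rcases hx with rfl | rfl <;> assumption
      rw [Finset.sum_pair hac] at hsub
      linarith
  have htot : ∑ a ∈ Y, ∑ c ∈ Y, μ a c ≤ 3 - 2 * ω := by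
    have := Finset.sum_le_sum h1
    rw [Finset.sum_add_distrib, Finset.sum_add_distrib, Finset.sum_const, hY] at this
    norm_num at this
    linarith
  have h5 : (∑ a ∈ Y, ∑ c ∈ Y, μ a c) / (3 / 2 - ω) ≤ 2 := by
    rw [div_le_iff₀ hx]; linarith
  rw [hY]
  push_cast
  linarith

/-- The odd set inequality for sets with at least five elements. -/
lemma odd_set_of_five_le_card (hμ : IsPairWeight μ) {Y : Finset A} (ho0 : ∀ a ∈ Y, 0 ≤ o a)
    (hb0 : ∀ a ∈ Y, 0 ≤ b a) (h1 : ∀ a ∈ Y, ∑ c ∈ Y, μ a c + b a + o a ≤ 1)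
    (h2 : ∀ a ∈ Y, o a ≤ 1 / 2) (h3 : ∑ a ∈ Y, o a ≤ ∑ a ∈ Y, b a) (h4 : ∑ a ∈ Y, o a < 1)
    (hY : 5 ≤ Y.card) :
    ∑ a ∈ Y, ∑ c ∈ Y, μ a c / (3 / 2 - o a - o c) + 1 ≤ Y.card := by
  let e : A → ℝ := fun a => 1 - o a - ∑ c ∈ Y, μ a c
  have he : ∀ a ∈ Y, b a ≤ e a := fun a ha => by simp only [e]; linarith [h1 a ha]
  have hv : ∀ a ∈ Y, ∑ c ∈ Y, μ a c / (3 / 2 - o a - o c) ≤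
      1 - e a - 2 / 3 * ∑ c ∈ Y, μ a c * (1 / 2 - o c) := by
    intro a ha
    have hx : 0 < 1 - o a := by linarith [h2 a ha]
    have hterm : ∀ c ∈ Y, μ a c / (3 / 2 - o a - o c) ≤
        (μ a c - 2 / 3 * (μ a c * (1 / 2 - o c))) / (1 - o a) := by
      intro c hc
      have hd : 0 < 3 / 2 - o a - o c := by linarith [h2 c hc]
      rw [div_le_div_iff₀ hd hx]
      have hy : 0 ≤ 1 / 2 - o c := by linarith [h2 c hc]
      have hd2 : 3 / 2 - o a - o c ≤ 3 / 2 := by linarith [ho0 a ha, ho0 c hc]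
      have := mul_nonneg (mul_nonneg (hμ.nonneg a c) hy) (sub_nonneg.2 hd2)
      nlinarith
    refine (Finset.sum_le_sum hterm).trans ?_
    rw [← Finset.sum_div, Finset.sum_sub_distrib, ← Finset.mul_sum, div_le_iff₀ hx]
    have hs : ∑ c ∈ Y, μ a c = 1 - o a - e a := by simp only [e]; ring
    have hT : 0 ≤ ∑ c ∈ Y, μ a c * (1 / 2 - o c) :=
      Finset.sum_nonneg fun c hc => mul_nonneg (hμ.nonneg a c) (by linarith [h2 c hc])
    have hea : 0 ≤ e a := (hb0 a ha).trans (he a ha)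
    rw [hs]
    nlinarith [mul_nonneg hea (ho0 a ha), mul_nonneg hT (ho0 a ha)]
  have hsum := Finset.sum_le_sum hv
  have hswap : ∑ a ∈ Y, ∑ c ∈ Y, μ a c * (1 / 2 - o c) =
      ∑ c ∈ Y, (1 - o c - e c) * (1 / 2 - o c) := by
    rw [Finset.sum_comm]
    refine Finset.sum_congr rfl fun c _ => ?_
    rw [← Finset.sum_mul]
    congr 1
    simp only [e, hμ.symm _ c]
    ring
  have hlow : ∑ c ∈ Y, (1 / 2 - 3 / 2 * o c - e c / 2) ≤
      ∑ c ∈ Y, (1 - o c - e c) * (1 / 2 - o c) := by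
    refine Finset.sum_le_sum fun c hc => ?_
    have hec : 0 ≤ e c := (hb0 c hc).trans (he c hc)
    nlinarith [mul_nonneg hec (ho0 c hc), mul_self_nonneg (o c)]
  have hbe := Finset.sum_le_sum he
  simp only [Finset.sum_sub_distrib, Finset.sum_const, nsmul_eq_mul, mul_one, ← Finset.mul_sum,
    ← Finset.sum_div, hswap] at hsum hlow
  have hY' : (5 : ℝ) ≤ Y.card := by exact_mod_cast hY
  linarith

lemma odd_set_inequality (hμ : IsPairWeight μ) {Y : Finset A} (ho0 : ∀ a ∈ Y, 0 ≤ o a)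
    (hb0 : ∀ a ∈ Y, 0 ≤ b a) (h1 : ∀ a ∈ Y, ∑ c ∈ Y, μ a c + b a + o a ≤ 1)
    (h2 : ∀ a ∈ Y, o a ≤ 1 / 2) (h3 : ∑ a ∈ Y, o a ≤ ∑ a ∈ Y, b a) (hY : Odd Y.card) :
    ∑ a ∈ Y, ∑ c ∈ Y, μ a c / (3 / 2 - o a - o c) + 1 ≤ Y.card := by
  by_cases h4 : ∑ a ∈ Y, o a < 1
  · obtain ⟨m, hm⟩ := hY
    rcases (by omega : Y.card = 1 ∨ Y.card = 3 ∨ 5 ≤ Y.card) with h | h | h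
    · obtain ⟨a, rfl⟩ := Finset.card_eq_one.1 h
      simp [hμ.diag]
    · exact odd_set_of_card_eq_three hμ ho0 h1 h3 h4 h
    · exact odd_set_of_five_le_card hμ ho0 hb0 h1 h2 h3 h4 h
  · exact odd_set_of_one_le hμ ho0 hb0 h1 h2 ((not_lt.1 h4).trans h3)

/-- The fractional matching assigned to normalised bundle sizes `μ` and outer loads `o`. -/
noncomputable def bundleShare (ε : ℝ) (μ : A → A → ℝ) (o : A → ℝ) (a c : A) : ℝ :=
  (1 + ε / 4) * μ a c / (3 / 2 + ε - o a - o c)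

variable [Fintype A]

theorem bundleShare_spec {ε : ℝ} (hε0 : 0 < ε) (hε1 : ε ≤ 1) (hμ : IsPairWeight μ)
    (ho0 : ∀ a, 0 ≤ o a) (h1 : ∀ a, ∑ c, μ a c + o a ≤ 1)
    (h2 : ∀ Y : Finset A, ∑ a ∈ Y, o a ≤ ∑ a ∈ Y, ∑ c ∈ Yᶜ, μ a c + ε / 3 * Y.card) :
    (∀ a, o a ≤ 1 / 2 + ε / 6) ∧ IsPairWeight (bundleShare ε μ o) ∧
      (∀ a, ∑ c, bundleShare ε μ o a c ≤ 1) ∧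
      ∀ U : Finset A, Odd U.card → ∑ a ∈ U, ∑ c ∈ U, bundleShare ε μ o a c + 1 ≤ U.card := by
  have hhalf : ∀ a, o a ≤ 1 / 2 + ε / 6 := by
    intro a
    have h := h2 {a}
    rw [Finset.sum_singleton, Finset.sum_singleton, Finset.card_singleton] at h
    have h' : ∑ c ∈ ({a} : Finset A)ᶜ, μ a c ≤ ∑ c, μ a c :=
      Finset.sum_le_sum_of_subset_of_nonneg (Finset.subset_univ _) fun c _ _ => hμ.nonneg a c
    have := h1 a
    push_cast at h
    linarith
  set l : ℝ := 1 + ε / 3 with hl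
  have hl0 : 0 < l := by positivity
  let μ' : A → A → ℝ := fun a c => μ a c / l
  let o' : A → ℝ := fun a => o a / l
  have hμ' : IsPairWeight μ' := ⟨fun a c => div_nonneg (hμ.nonneg a c) hl0.le,
    fun a c => by simp only [μ', hμ.symm a c], fun a => by simp [μ', hμ.diag]⟩
  have ho'0 : ∀ a, 0 ≤ o' a := fun a => div_nonneg (ho0 a) hl0.le
  have ho' : ∀ a, o' a ≤ 1 / 2 := fun a => by
    simp only [o']
    rw [div_le_iff₀ hl0]
    linarith [hhalf a]
  have hden : ∀ a c, 0 < 3 / 2 + ε - o a - o c := fun a c => by linarith [hhalf a, hhalf c]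
  have hle : ∀ a c, bundleShare ε μ o a c ≤ μ' a c / (3 / 2 - o' a - o' c) := by
    intro a c
    have hd : 0 < 3 / 2 * l - o a - o c := by linarith [hhalf a, hhalf c]
    have heq : μ' a c / (3 / 2 - o' a - o' c) = μ a c / (3 / 2 * l - o a - o c) := by
      simp only [μ', o']
      rw [div_div]
      congr 1
      field_simp
    rw [heq, bundleShare, div_le_div_iff₀ (hden a c) hd, mul_comm (1 + ε / 4), mul_assoc]
    refine mul_le_mul_of_nonneg_left ?_ (hμ.nonneg a c)
    have := mul_nonneg hε0.le (add_nonneg (ho0 a) (ho0 c))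
    nlinarith
  refine ⟨hhalf, ⟨fun a c => ?_, fun a c => ?_, fun a => ?_⟩, fun a => ?_, fun U hU => ?_⟩
  · exact div_nonneg (mul_nonneg (by positivity) (hμ.nonneg a c)) (hden a c).le
  · rw [bundleShare, bundleShare, hμ.symm a c]
    congr 1
    ring
  · rw [bundleShare, hμ.diag]
    simp
  · refine (Finset.sum_le_sum fun c _ => hle a c).trans ?_
    refine sum_div_le_one hμ' ?_ (ho' a) fun c _ => ho' c
    simp only [μ', o']
    rw [← Finset.sum_div, ← add_div, div_le_one hl0]
    linarith [h1 a]
  · refine le_trans ?_ (odd_set_inequality (b := fun a => (∑ c ∈ Uᶜ, μ a c + ε / 3) / l) hμ'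
      (fun a _ => ho'0 a) (fun a _ => ?_) (fun a _ => ?_) (fun a _ => ho' a) ?_ hU)
    · gcongr with a _ c _
      exact hle a c
    · exact div_nonneg (add_nonneg (Finset.sum_nonneg fun c _ => hμ.nonneg a c) (by positivity))
        hl0.le
    · simp only [μ', o']
      rw [← Finset.sum_div, ← add_div, ← add_div, div_le_one hl0]
      have := h1 a
      rw [← Finset.sum_add_sum_compl U] at this
      linarith
    · simp only [o']
      rw [← Finset.sum_div, ← Finset.sum_div, Finset.sum_add_distrib, Finset.sum_const,
        nsmul_eq_mul]
      refine div_le_div_of_nonneg_right ?_ hl0.le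
      linarith [h2 U]

end FractionalMatching

/-! ### Extending partial labellings -/

section Extension

open scoped Classical

/-- The number of colours of `L` excluded by the labels on `Y`, where `S` marks the labels to avoid
and `N` the labels to stay at distance `k` from. -/
lemma card_forbidden_le {V : Type} (Y : Finset V) (f : V → ℤ) (S N : V → Prop)
    [DecidablePred S] [DecidablePred N] (k : ℕ) (L : Finset ℤ) :
    L.card ≤ (L.filter fun c => ∀ y ∈ Y, (S y → c ≠ f y) ∧ (N y → (k : ℤ) ≤ |c - f y|)).card +
      ((Y.filter S).card + 2 * k * (Y.filter N).card) := by
  have hsub : L.filter (fun c => ¬ ∀ y ∈ Y, (S y → c ≠ f y) ∧ (N y → (k : ℤ) ≤ |c - f y|)) ⊆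
      (Y.filter S).image f ∪
        (Y.filter N).biUnion fun y => Finset.Ioo (f y - k) (f y + k) := by
    intro c hc
    obtain ⟨-, hc⟩ := Finset.mem_filter.1 hc
    push Not at hc
    obtain ⟨y, hy, hc⟩ := hc
    by_cases hS : S y ∧ c = f y
    · exact Finset.mem_union_left _ (Finset.mem_image.2 ⟨y, Finset.mem_filter.2 ⟨hy, hS.1⟩, hS.2.symm⟩)
    · obtain ⟨hN, hlt⟩ := hc fun h h' => hS ⟨h, h'⟩
      refine Finset.mem_union_right _ (Finset.mem_biUnion.2 ⟨y, Finset.mem_filter.2 ⟨hy, hN⟩, ?_⟩)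
      rw [abs_lt] at hlt
      rw [Finset.mem_Ioo]
      constructor <;> linarith [hlt.1, hlt.2]
  have hcard : (L.filter (fun c => ¬ ∀ y ∈ Y, (S y → c ≠ f y) ∧ (N y → (k : ℤ) ≤ |c - f y|))).card ≤
      (Y.filter S).card + 2 * k * (Y.filter N).card := by
    refine (Finset.card_le_card hsub).trans ((Finset.card_union_le _ _).trans ?_)
    refine Nat.add_le_add Finset.card_image_le ?_
    rw [mul_comm]
    refine Finset.card_biUnion_le_card_mul _ _ _ fun y _ => ?_
    rw [Int.card_Ioo]
    omega
  rw [← Finset.card_filter_add_card_filter_not (s := L)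
    (fun c => ∀ y ∈ Y, (S y → c ≠ f y) ∧ (N y → (k : ℤ) ≤ |c - f y|))]
  omega

/-- Greedy choice of labels under two kinds of constraints. -/
lemma exists_greedy_labels {V : Type} (k : ℕ) {same near : V → V → Prop}
    [DecidableRel same] [DecidableRel near]
    (hsame : ∀ x y, same x y → same y x) (hnear : ∀ x y, near x y → near y x)
    (C : V → Finset ℤ) (R : Finset V)
    (h : ∀ x ∈ R, (R.filter fun y => y ≠ x ∧ same x y).card +
      2 * k * (R.filter fun y => y ≠ x ∧ near x y).card < (C x).card) :
    ∃ g : V → ℤ, (∀ x ∈ R, g x ∈ C x) ∧ ∀ x ∈ R, ∀ y ∈ R, x ≠ y →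
      (same x y → g x ≠ g y) ∧ (near x y → (k : ℤ) ≤ |g x - g y|) := by
  induction R using Finset.induction_on with
  | empty => exact ⟨0, by simp, by simp⟩
  | insert a R ha ih =>
    obtain ⟨g, hg, hgg⟩ := ih fun x hx => by
      refine lt_of_le_of_lt ?_ (h x (Finset.mem_insert_of_mem hx))
      gcongr <;> exact Finset.subset_insert _ _
    have hforb := card_forbidden_le R g (same a) (near a) k (C a)
    have hS : (R.filter (same a)).card ≤
        ((insert a R).filter fun y => y ≠ a ∧ same a y).card := by
      refine Finset.card_le_card fun y hy => ?_
      obtain ⟨hy, hy'⟩ := Finset.mem_filter.1 hy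
      exact Finset.mem_filter.2 ⟨Finset.mem_insert_of_mem hy, fun h => ha (h ▸ hy), hy'⟩
    have hN : (R.filter (near a)).card ≤
        ((insert a R).filter fun y => y ≠ a ∧ near a y).card := by
      refine Finset.card_le_card fun y hy => ?_
      obtain ⟨hy, hy'⟩ := Finset.mem_filter.1 hy
      exact Finset.mem_filter.2 ⟨Finset.mem_insert_of_mem hy, fun h => ha (h ▸ hy), hy'⟩
    have hlt := h a (Finset.mem_insert_self _ _)
    have hN' := Nat.mul_le_mul_left (2 * k) hN
    have hpos : 0 < ((C a).filter fun c => ∀ y ∈ R,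
        (same a y → c ≠ g y) ∧ (near a y → (k : ℤ) ≤ |c - g y|)).card := by omega
    obtain ⟨c, hc⟩ := Finset.card_pos.1 hpos
    obtain ⟨hcC, hc⟩ := Finset.mem_filter.1 hc
    have hval : ∀ x ∈ R, Function.update g a c x = g x := fun x hx =>
      Function.update_of_ne (by rintro rfl; exact ha hx) _ _
    refine ⟨Function.update g a c, ?_, ?_⟩
    · intro x hx
      rcases Finset.mem_insert.1 hx with rfl | hx
      · simpa using hcC
      · rw [hval x hx]; exact hg x hx
    · intro x hx y hy hxy
      rcases Finset.mem_insert.1 hx with rfl | hxR <;> rcases Finset.mem_insert.1 hy with rfl | hyR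
      · exact absurd rfl hxy
      · rw [hval y hyR, Function.update_self]; exact hc y hyR
      · rw [hval x hxR, Function.update_self]
        refine ⟨fun hs => ((hc x hxR).1 (hsame _ _ hs)).symm, fun hn => ?_⟩
        rw [abs_sub_comm]
        exact (hc x hxR).2 (hnear _ _ hn)
      · rw [hval x hxR, hval y hyR]; exact hgg x hxR y hyR hxy

variable {V : Type} {G : SimpleGraph V} {k : ℕ} {f : V → ℤ} {X R : Finset V}

/-- The labelling constraints of `G` hold between the vertices of `X`. -/
def SimpleGraph.ValidOn (G : SimpleGraph V) (k : ℕ) (f : V → ℤ) (X : Finset V) : Prop :=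
  ∀ x ∈ X, ∀ y ∈ X, x ≠ y →
    (G.Adj x y → (k : ℤ) ≤ |f x - f y|) ∧ ((∃ w, G.Adj x w ∧ G.Adj w y) → f x ≠ f y)

variable [Fintype V] {D K : ℕ} {L : V → Finset ℤ}

/-- The colours of `L x` that are compatible with the labels of `X \ R`. -/
noncomputable def SimpleGraph.residual (G : SimpleGraph V) (k : ℕ) (f : V → ℤ) (X R : Finset V)
    (D : ℕ) (L : V → Finset ℤ) (x : V) : Finset ℤ :=
  (L x).filter fun c => ∀ y ∈ X \ R, ((∃ w ∈ G.bigIn X D, G.Adj x w ∧ G.Adj w y) → c ≠ f y) ∧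
    (y ∈ G.smallConf X D x → (k : ℤ) ≤ |c - f y|)

lemma card_le_card_residual (x : V) (hK : (G.smallConf X D x).card ≤ K) :
    (L x).card ≤ (G.residual k f X R D L x).card +
      (∑ w ∈ G.nbrIn (G.bigIn X D) x, (G.nbrIn (X \ R) w).card + 2 * k * K) := by
  refine (card_forbidden_le (X \ R) f (fun y => ∃ w ∈ G.bigIn X D, G.Adj x w ∧ G.Adj w y)
    (fun y => y ∈ G.smallConf X D x) k (L x)).trans ?_
  refine Nat.add_le_add (Finset.card_le_card ?_)
    (Nat.add_le_add ?_ (Nat.mul_le_mul_left _ ?_))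
  · intro c hc
    simp only [SimpleGraph.residual, Finset.mem_filter] at hc ⊢
    exact hc
  · refine (Finset.card_le_card ?_).trans Finset.card_biUnion_le
    intro y hy
    obtain ⟨hy, w, hw, hxw, hwy⟩ := Finset.mem_filter.1 hy
    exact Finset.mem_biUnion.2 ⟨w, mem_nbrIn.2 ⟨hw, hxw⟩, mem_nbrIn.2 ⟨hy, hwy⟩⟩
  · refine le_trans (Finset.card_le_card ?_) hK
    intro y hy
    exact (Finset.mem_filter.1 hy).2

lemma mem_smallConf_comm {x y : V} (hx : x ∈ X) (h : y ∈ G.smallConf X D x) :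
    x ∈ G.smallConf X D y := by
  simp only [SimpleGraph.smallConf, Finset.mem_filter] at h ⊢
  obtain ⟨-, hne, h⟩ := h
  refine ⟨hx, hne.symm, ?_⟩
  rcases h with h | ⟨w, hw, h1, h2⟩
  · exact Or.inl h.symm
  · exact Or.inr ⟨w, hw, h2.symm, h1.symm⟩

/-- If the vertices of `R` get residual colour sets that are disjoint whenever two vertices share
some but not all of their big neighbours, then the labelling extends from `X \ R` to `X`. -/
lemma exists_validOn_extension (hk : 1 ≤ k) (hR : R ⊆ X) (hf : G.ValidOn k f (X \ R))
    (hfL : ∀ x ∈ X \ R, f x ∈ L x) (C : V → Finset ℤ)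
    (hC : ∀ x ∈ R, C x ⊆ G.residual k f X R D L x)
    (hdisj : ∀ x ∈ R, ∀ y ∈ R, G.nbrIn (G.bigIn X D) x ≠ G.nbrIn (G.bigIn X D) y →
      (∃ w ∈ G.bigIn X D, G.Adj x w ∧ G.Adj w y) → Disjoint (C x) (C y))
    (hK : ∀ x ∈ R, (G.smallConf X D x).card ≤ K)
    (hcard : ∀ x ∈ R, (R.filter fun y => G.nbrIn (G.bigIn X D) y = G.nbrIn (G.bigIn X D) x).card +
      2 * k * K < (C x).card) :
    ∃ F : V → ℤ, G.ValidOn k F X ∧ ∀ x ∈ X, F x ∈ L x := by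
  obtain ⟨g, hg, hgg⟩ := exists_greedy_labels k
    (same := fun x y => G.nbrIn (G.bigIn X D) x = G.nbrIn (G.bigIn X D) y)
    (near := fun x y => x ∈ X ∧ y ∈ G.smallConf X D x) (fun x y h => h.symm)
    (fun x y h => ⟨(Finset.mem_filter.1 h.2).1, mem_smallConf_comm h.1 h.2⟩) C R (by
      intro x hx
      refine lt_of_le_of_lt ?_ (hcard x hx)
      refine Nat.add_le_add (Finset.card_le_card ?_)
        (Nat.mul_le_mul_left _ ((Finset.card_le_card ?_).trans (hK x hx)))
      · intro y hy
        obtain ⟨hy, -, h⟩ := Finset.mem_filter.1 hy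
        exact Finset.mem_filter.2 ⟨hy, h.symm⟩
      · intro y hy
        exact (Finset.mem_filter.1 hy).2.2.2)
  have hres : ∀ x ∈ R, g x ∈ G.residual k f X R D L x := fun x hx => hC x hx (hg x hx)
  have hcross : ∀ x ∈ R, ∀ y ∈ X \ R, (G.Adj x y → (k : ℤ) ≤ |g x - f y|) ∧
      ((∃ w, G.Adj x w ∧ G.Adj w y) → g x ≠ f y) := by
    intro x hx y hy
    have h := (Finset.mem_filter.1 (hres x hx)).2 y hy
    have hyX := (Finset.mem_sdiff.1 hy).1
    have hne : y ≠ x := fun h => (Finset.mem_sdiff.1 hy).2 (h ▸ hx)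
    refine ⟨fun hadj => h.2 (Finset.mem_filter.2 ⟨hyX, hne, Or.inl hadj⟩), ?_⟩
    rintro ⟨w, hxw, hwy⟩
    by_cases hw : w ∈ G.bigIn X D
    · exact h.1 ⟨w, hw, hxw, hwy⟩
    · intro heq
      have := h.2 (Finset.mem_filter.2 ⟨hyX, hne, Or.inr ⟨w, hw, hxw, hwy⟩⟩)
      rw [heq, sub_self, abs_zero] at this
      omega
  have hin : ∀ x ∈ R, ∀ y ∈ R, x ≠ y → (G.Adj x y → (k : ℤ) ≤ |g x - g y|) ∧
      ((∃ w, G.Adj x w ∧ G.Adj w y) → g x ≠ g y) := by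
    intro x hx y hy hne
    have h := hgg x hx y hy hne
    refine ⟨fun hadj =>
      h.2 ⟨hR hx, Finset.mem_filter.2 ⟨hR hy, hne.symm, Or.inl hadj⟩⟩, ?_⟩
    rintro ⟨w, hxw, hwy⟩
    by_cases hw : w ∈ G.bigIn X D
    · by_cases hs : G.nbrIn (G.bigIn X D) x = G.nbrIn (G.bigIn X D) y
      · exact h.1 hs
      · exact fun heq => Finset.disjoint_left.1 (hdisj x hx y hy hs ⟨w, hw, hxw, hwy⟩)
          (hg x hx) (heq ▸ hg y hy)
    · intro heq
      have := h.2 ⟨hR hx, Finset.mem_filter.2 ⟨hR hy, hne.symm, Or.inr ⟨w, hw, hxw, hwy⟩⟩⟩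
      rw [heq, sub_self, abs_zero] at this
      omega
  refine ⟨fun x => if x ∈ R then g x else f x, ?_, ?_⟩
  · intro x hx y hy hne
    by_cases hxR : x ∈ R <;> by_cases hyR : y ∈ R <;> simp only [hxR, hyR, if_true, if_false]
    · exact hin x hxR y hyR hne
    · exact hcross x hxR y (Finset.mem_sdiff.2 ⟨hy, hyR⟩)
    · have h := hcross y hyR x (Finset.mem_sdiff.2 ⟨hx, hxR⟩)
      rw [abs_sub_comm]
      refine ⟨fun hadj => h.1 hadj.symm, ?_⟩
      rintro ⟨w, h1, h2⟩
      exact (h.2 ⟨w, h2.symm, h1.symm⟩).symm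
    · exact hf x (Finset.mem_sdiff.2 ⟨hx, hxR⟩) y (Finset.mem_sdiff.2 ⟨hy, hyR⟩) hne
  · intro x hx
    by_cases hxR : x ∈ R <;> simp only [hxR, if_true, if_false]
    · exact (Finset.mem_filter.1 (hres x hxR)).1
    · exact hfL x (Finset.mem_sdiff.2 ⟨hx, hxR⟩)

lemma exists_validOn_extension_singleton (hk : 1 ≤ k) {x : V} (hx : x ∈ X)
    (hf : G.ValidOn k f (X \ {x})) (hfL : ∀ y ∈ X \ {x}, f y ∈ L y)
    (hK : (G.smallConf X D x).card ≤ K)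
    (hL : ∑ w ∈ G.nbrIn (G.bigIn X D) x, (G.nbrIn X w).card + 4 * k * K + 1 < (L x).card) :
    ∃ F : V → ℤ, G.ValidOn k F X ∧ ∀ y ∈ X, F y ∈ L y := by
  refine exists_validOn_extension (D := D) (K := K) hk (Finset.singleton_subset_iff.2 hx) hf hfL
    (G.residual k f X {x} D L) (fun y _ => subset_rfl) ?_ (by simpa using hK) ?_
  · intro y hy z hz hne
    rw [Finset.mem_singleton] at hy hz
    exact absurd (by rw [hy, hz]) hne
  · intro y hy
    obtain rfl := Finset.mem_singleton.1 hy
    have h1 : (Finset.filter (fun z => G.nbrIn (G.bigIn X D) z = G.nbrIn (G.bigIn X D) y)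
        {y}).card ≤ 1 := (Finset.card_filter_le _ _).trans (by simp)
    have h2 := card_le_card_residual (k := k) (f := f) (R := {y}) (L := L) y hK
    have h3 : ∑ w ∈ G.nbrIn (G.bigIn X D) y, (G.nbrIn (X \ {y}) w).card ≤
        ∑ w ∈ G.nbrIn (G.bigIn X D) y, (G.nbrIn X w).card :=
      Finset.sum_le_sum fun w _ => Finset.card_le_card
        (Finset.filter_subset_filter _ Finset.sdiff_subset)
    have h4 : 4 * k * K = 2 * k * K + 2 * k * K := by ring
    omega

end Extension

/-! ### Extending a labelling to a cluster -/

section ClusterExtension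

open scoped Classical

lemma exists_forall_mul_exp_lt (S : ℝ) {c : ℝ} (hc : 0 < c) (M : ℝ) :
    ∃ N : ℕ, ∀ n : ℕ, N ≤ n → 0 < n ∧ M ≤ n ∧ S * n * Real.exp (-(c * n)) < 1 := by
  have h1 : Filter.Tendsto (fun x : ℝ => S / c * (x ^ 1 * Real.exp (-x))) Filter.atTop
      (nhds (S / c * 0)) := (Real.tendsto_pow_mul_exp_neg_atTop_nhds_zero 1).const_mul _
  have h2 : Filter.Tendsto (fun n : ℕ => c * (n : ℝ)) Filter.atTop Filter.atTop :=
    Filter.Tendsto.const_mul_atTop hc tendsto_natCast_atTop_atTop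
  have h3 := (h1.comp h2).eventually (gt_mem_nhds (show S / c * 0 < 1 by simp))
  have h4 := tendsto_natCast_atTop_atTop.eventually (Filter.eventually_ge_atTop M)
  obtain ⟨N, hN⟩ := Filter.eventually_atTop.1
    (h3.and (h4.and (Filter.eventually_gt_atTop (0 : ℕ))))
  refine ⟨N, fun n hn => ?_⟩
  obtain ⟨h5, h6, h7⟩ := hN n hn
  refine ⟨h7, h6, ?_⟩
  have : S / c * ((c * (n : ℝ)) ^ 1 * Real.exp (-(c * n))) = S * n * Real.exp (-(c * n)) := by
    field_simp
  rw [← this]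
  exact h5

variable {V : Type} {G : SimpleGraph V} {X R A : Finset V}

lemma pair_right_injective {a c d : V} (hac : ({a, c} : Finset V).card = 2)
    (h : ({a, c} : Finset V) = {a, d}) : c = d := by
  have hne : c ≠ a := by
    rintro rfl
    simp at hac
  have : c ∈ ({a, d} : Finset V) := by rw [← h]; simp
  simpa [hne] using this

lemma card_nbrIn_add_card_nbrIn_sdiff (hR : R ⊆ X) (a : V) :
    (G.nbrIn R a).card + (G.nbrIn (X \ R) a).card = (G.nbrIn X a).card := by
  rw [SimpleGraph.nbrIn, SimpleGraph.nbrIn, SimpleGraph.nbrIn, ← Finset.card_union_of_disjoint,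
    ← Finset.filter_union, Finset.union_sdiff_of_subset hR]
  exact Finset.disjoint_filter_filter Finset.disjoint_sdiff

lemma card_le_sum_card_nbrIn (hR : R ⊆ X) (hA : ∀ x ∈ R, ∃ a ∈ A, G.Adj a x) :
    R.card ≤ ∑ a ∈ A, (G.nbrIn X a).card := by
  refine (Finset.card_le_card fun x hx => ?_).trans Finset.card_biUnion_le
  obtain ⟨a, ha, hax⟩ := hA x hx
  exact Finset.mem_biUnion.2 ⟨a, ha, mem_nbrIn.2 ⟨hR hx, hax⟩⟩

variable [Fintype V] {D : ℕ}

/-- The vertices of `R` whose big neighbours are exactly `a` and `c`. -/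
noncomputable def SimpleGraph.bundle (G : SimpleGraph V) (X : Finset V) (D : ℕ) (R : Finset V)
    (a c : V) : Finset V :=
  R.filter fun x => G.nbrIn (G.bigIn X D) x = {a, c}

lemma mem_bundle {a c x : V} :
    x ∈ G.bundle X D R a c ↔ x ∈ R ∧ G.nbrIn (G.bigIn X D) x = {a, c} := Finset.mem_filter

lemma bundle_comm (a c : V) : G.bundle X D R a c = G.bundle X D R c a := by
  rw [SimpleGraph.bundle, Finset.pair_comm, ← SimpleGraph.bundle]

lemma bundle_self_eq_empty (hcard : ∀ x ∈ R, (G.nbrIn (G.bigIn X D) x).card = 2) (a : V) :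
    G.bundle X D R a a = ∅ := by
  refine Finset.eq_empty_of_forall_notMem fun x hx => ?_
  obtain ⟨hx, hx'⟩ := mem_bundle.1 hx
  have := hcard x hx
  rw [hx'] at this
  simp at this

lemma sum_card_bundle_le (hcard : ∀ x ∈ R, (G.nbrIn (G.bigIn X D) x).card = 2) (a : V)
    (Y : Finset V) : ∑ c ∈ Y, (G.bundle X D R a c).card ≤ (G.nbrIn R a).card := by
  rw [← Finset.card_biUnion]
  · refine Finset.card_le_card fun x hx => ?_
    obtain ⟨c, -, hx⟩ := Finset.mem_biUnion.1 hx
    obtain ⟨hx, hx'⟩ := mem_bundle.1 hx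
    have : a ∈ G.nbrIn (G.bigIn X D) x := by rw [hx']; simp
    exact mem_nbrIn.2 ⟨hx, (mem_nbrIn.1 this).2.symm⟩
  · intro c _ d _ hcd
    refine Finset.disjoint_left.2 fun x hx hx' => hcd ?_
    obtain ⟨hx, h1⟩ := mem_bundle.1 hx
    obtain ⟨-, h2⟩ := mem_bundle.1 hx'
    exact pair_right_injective (h1 ▸ hcard x hx) (h1.symm.trans h2)

/-- For every colour choose a matching of the cluster so that each vertex of a heavy bundle has
many colours in whose matching its bundle lies. -/
theorem exists_cluster_threshold {ε κ : ℝ} (hε0 : 0 < ε) (hε1 : ε ≤ 1) (hκ : 0 < κ)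
    (S K k : ℕ) (hk : 1 ≤ k) : ∃ N : ℕ, ∀ Δ : ℕ, N ≤ Δ → ∀ (V : Type) [Fintype V]
    (G : SimpleGraph V) (X R A : Finset V) (D : ℕ) (L : V → Finset ℤ) (f : V → ℤ),
    A.card ≤ S → (∀ a ∈ A, (G.nbrIn X a).card ≤ Δ) → R ⊆ X →
    (∀ x ∈ R, G.nbrIn (G.bigIn X D) x ⊆ A ∧ (G.nbrIn (G.bigIn X D) x).card = 2 ∧
      (G.smallConf X D x).card ≤ K) →
    (∀ a c, (G.bundle X D R a c).Nonempty → κ * Δ ≤ (G.bundle X D R a c).card) →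
    (∀ Y ⊆ A, (∑ a ∈ Y, ((G.nbrIn (X \ R) a).card : ℝ)) ≤
      ∑ a ∈ Y, ∑ c ∈ A \ Y, ((G.bundle X D R a c).card : ℝ) + ε / 3 * Δ * Y.card) →
    (∀ x ∈ R, (3 / 2 + ε) * Δ + 2 * k * K ≤ (L x).card) →
    G.ValidOn k f (X \ R) → (∀ x ∈ X \ R, f x ∈ L x) →
    ∃ F : V → ℤ, G.ValidOn k F X ∧ ∀ x ∈ X, F x ∈ L x := by
  obtain ⟨q, c, hq0, hq1, hc, htail⟩ := exists_tail_bound (ζ := ε / 4) (by positivity) (by linarith)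
  obtain ⟨N, hN⟩ := exists_forall_mul_exp_lt S (c := c * κ) (by positivity)
    ((2 * k * K + 1) / (ε / 8 * κ))
  refine ⟨N, fun Δ hΔ V _ G X R A D L f hAS hdeg hR hRA hheavy hcut hL hf hfL => ?_⟩
  obtain ⟨hΔ0, hΔ1, hΔ2⟩ := hN Δ hΔ
  have hΔpos : (0 : ℝ) < Δ := by exact_mod_cast hΔ0
  have hcard2 : ∀ x ∈ R, (G.nbrIn (G.bigIn X D) x).card = 2 := fun x hx => (hRA x hx).2.1
  rw [div_le_iff₀ (by positivity)] at hΔ1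
  set μ : {a // a ∈ A} → {a // a ∈ A} → ℝ :=
    fun a b => ((G.bundle X D R a b).card : ℝ) / Δ with hμ
  set o : {a // a ∈ A} → ℝ := fun a => ((G.nbrIn (X \ R) a).card : ℝ) / Δ with ho
  have hμw : IsPairWeight μ :=
    ⟨fun a b => by positivity, fun a b => by simp only [hμ, bundle_comm a.1 b.1],
      fun a => by simp only [hμ, bundle_self_eq_empty hcard2]; simp⟩
  have ho0 : ∀ a, 0 ≤ o a := fun a => by positivity
  have h1 : ∀ a, ∑ b, μ a b + o a ≤ 1 := by
    intro a
    simp only [hμ, ho]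
    rw [← Finset.sum_div, ← add_div, div_le_one hΔpos,
      Finset.sum_coe_sort A fun b => ((G.bundle X D R a b).card : ℝ)]
    have h := sum_card_bundle_le hcard2 a.1 A
    have h' := card_nbrIn_add_card_nbrIn_sdiff (G := G) hR a.1
    have := hdeg a.1 a.2
    exact_mod_cast (by omega : ∑ b ∈ A, (G.bundle X D R a b).card +
      (G.nbrIn (X \ R) a).card ≤ Δ)
  have h2 : ∀ Y : Finset {a // a ∈ A},
      ∑ a ∈ Y, o a ≤ ∑ a ∈ Y, ∑ b ∈ Yᶜ, μ a b + ε / 3 * Y.card := by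
    intro Y
    have h := hcut (Y.map (Function.Embedding.subtype _)) (by
      intro a ha
      obtain ⟨b, -, rfl⟩ := Finset.mem_map.1 ha
      exact b.2)
    have hcompl : A \ Y.map (Function.Embedding.subtype _) =
        Yᶜ.map (Function.Embedding.subtype _) := by
      ext a
      simp only [Finset.mem_sdiff, Finset.mem_map, Finset.mem_compl,
        Function.Embedding.coe_subtype]
      constructor
      · rintro ⟨ha, h⟩
        exact ⟨⟨a, ha⟩, fun h' => h ⟨_, h', rfl⟩, rfl⟩
      · rintro ⟨b, hb, rfl⟩
        refine ⟨b.2, ?_⟩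
        rintro ⟨b', hb', h⟩
        exact hb (Subtype.ext h ▸ hb')
    rw [hcompl] at h
    simp only [Finset.sum_map, Finset.card_map, Function.Embedding.coe_subtype] at h
    simp only [hμ, ho]
    simp only [← Finset.sum_div]
    rw [div_le_iff₀ hΔpos, add_mul, div_mul_cancel₀ _ hΔpos.ne']
    linarith
  obtain ⟨hhalf, hzw, hzdeg, hzodd⟩ := bundleShare_spec hε0 hε1 hμw ho0 h1 fun Y => by convert h2 Y
  set z := bundleShare ε μ o with hz
  have hends : ∀ x : {x // x ∈ R}, ∃ a b : {a // a ∈ A}, a ≠ b ∧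
      G.nbrIn (G.bigIn X D) x = {a.1, b.1} := by
    rintro ⟨x, hx⟩
    obtain ⟨hA, h2, -⟩ := hRA x hx
    obtain ⟨a, b, hab, h⟩ := Finset.card_eq_two.1 h2
    rw [h] at hA
    exact ⟨⟨a, hA (by simp)⟩, ⟨b, hA (by simp)⟩, fun h' => hab (congrArg Subtype.val h'), h⟩
  choose u v huv hends using hends
  have hres : ∀ x : {x // x ∈ R}, (3 / 2 + ε - o (u x) - o (v x)) * Δ ≤
      (G.residual k f X R D L x).card := by
    intro x
    have h := card_le_card_residual (k := k) (f := f) (R := R) (L := L) x.1 (hRA x.1 x.2).2.2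
    rw [hends x, Finset.sum_pair (fun h' => huv x (Subtype.ext h'))] at h
    have h' : ((L x).card : ℝ) ≤ (G.residual k f X R D L x).card +
      (((G.nbrIn (X \ R) (u x)).card + (G.nbrIn (X \ R) (v x)).card : ℝ) + 2 * k * K) := by
      exact_mod_cast h
    have h3 := hL x.1 x.2
    have h4 : (3 / 2 + ε - o (u x) - o (v x)) * Δ = (3 / 2 + ε) * Δ -
        (G.nbrIn (X \ R) (u x)).card - (G.nbrIn (X \ R) (v x)).card := by
      simp only [ho]
      field_simp
    linarith
  have hbig : ∀ x : {x // x ∈ R}, κ * Δ ≤ (G.bundle X D R (u x) (v x)).card := fun x =>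
    hheavy _ _ ⟨x.1, mem_bundle.2 ⟨x.2, hends x⟩⟩
  obtain ⟨σ, hσ, hhits⟩ := exists_involutions_many_hits hzw hzdeg hzodd Finset.univ u v
    (fun x _ => huv x) (fun x => G.residual k f X R D L x.1) hq0 hq1
    (fun x => (G.bundle X D R (u x) (v x)).card + 2 * k * K + 1) (by
      have hterm : ∀ x : {x // x ∈ R}, (1 - (1 - q) * z (u x) (v x)) ^
          (G.residual k f X R D L x.1).card /
          q ^ ((G.bundle X D R (u x) (v x)).card + 2 * k * K + 1) ≤
          Real.exp (-(c * κ * Δ)) := by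
        intro x
        have hm := hbig x
        refine (htail (z (u x) (v x)) (G.bundle X D R (u x) (v x)).card _ _ (hzw.nonneg _ _)
          ?_ (by positivity) ?_ ?_).trans ?_
        · exact (Finset.single_le_sum (fun b _ => hzw.nonneg (u x) b) (Finset.mem_univ _)).trans
            (hzdeg (u x))
        · have hden : 0 < 3 / 2 + ε - o (u x) - o (v x) := by
            linarith [hhalf (u x), hhalf (v x)]
          calc (1 + ε / 4) * ((G.bundle X D R (u x) (v x)).card : ℝ)
              = z (u x) (v x) * ((3 / 2 + ε - o (u x) - o (v x)) * Δ) := by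
                simp only [hz, bundleShare, hμ]
                generalize 3 / 2 + ε - o (u x) - o (v x) = t at hden ⊢
                field_simp
            _ ≤ _ := mul_le_mul_of_nonneg_left (hres x) (hzw.nonneg _ _)
        · push_cast
          have : ε / 8 * (κ * Δ) ≤ ε / 8 * (G.bundle X D R (u x) (v x)).card :=
            mul_le_mul_of_nonneg_left hm (by positivity)
          linarith
        · rw [Real.exp_le_exp, neg_le_neg_iff, mul_assoc]
          exact mul_le_mul_of_nonneg_left hm hc.le
      refine lt_of_le_of_lt (Finset.sum_le_sum fun x _ => hterm x) ?_
      rw [Finset.sum_const, nsmul_eq_mul, Finset.card_univ, Fintype.card_coe]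
      refine lt_of_le_of_lt (mul_le_mul_of_nonneg_right ?_ (Real.exp_pos _).le) hΔ2
      have hRcard : R.card ≤ A.card * Δ := by
        refine (card_le_sum_card_nbrIn (A := A) hR fun x hx => ?_).trans
          ((Finset.sum_le_card_nsmul _ _ _ hdeg).trans_eq (smul_eq_mul _ _))
        refine ⟨u ⟨x, hx⟩, (u ⟨x, hx⟩).2, ?_⟩
        have : (u ⟨x, hx⟩).1 ∈ G.nbrIn (G.bigIn X D) x := by rw [hends ⟨x, hx⟩]; simp
        exact (mem_nbrIn.1 this).2.symm
      exact_mod_cast hRcard.trans (Nat.mul_le_mul_right _ hAS))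
  refine exists_validOn_extension (D := D) (K := K) hk hR hf hfL
    (fun x => (G.residual k f X R D L x).filter fun i =>
      ∃ a b : {a // a ∈ A}, G.nbrIn (G.bigIn X D) x = {a.1, b.1} ∧ σ i a = b)
    (fun x _ => Finset.filter_subset _ _) ?_ (fun x hx => (hRA x hx).2.2) ?_
  · rintro x hx y hy hne ⟨w, hw, hxw, hwy⟩
    refine Finset.disjoint_left.2 fun i hi hi' => hne ?_
    have key : ∀ x', G.Adj x' w → (∃ a b : {a // a ∈ A},
        G.nbrIn (G.bigIn X D) x' = {a.1, b.1} ∧ σ i a = b) →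
        ∃ hwA : w ∈ A, G.nbrIn (G.bigIn X D) x' = {w, (σ i ⟨w, hwA⟩).1} := by
      rintro x' hadj ⟨a, b, h, rfl⟩
      have hmem : w ∈ G.nbrIn (G.bigIn X D) x' := mem_nbrIn.2 ⟨hw, hadj⟩
      rw [h, Finset.mem_insert, Finset.mem_singleton] at hmem
      rcases hmem with rfl | rfl
      · exact ⟨a.2, h⟩
      · refine ⟨(σ i a).2, ?_⟩
        rw [h, Subtype.coe_eta, hσ, Finset.pair_comm]
    obtain ⟨h1, h2⟩ := key x hxw (Finset.mem_filter.1 hi).2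
    obtain ⟨_, h4⟩ := key y hwy.symm (Finset.mem_filter.1 hi').2
    rw [h2, h4]
  · intro x hx
    have h := hhits ⟨x, hx⟩ (Finset.mem_univ _)
    have hb : R.filter (fun y => G.nbrIn (G.bigIn X D) y = G.nbrIn (G.bigIn X D) x) =
        G.bundle X D R (u ⟨x, hx⟩) (v ⟨x, hx⟩) := by
      rw [SimpleGraph.bundle, ← hends ⟨x, hx⟩]
    rw [hb]
    refine lt_of_lt_of_le (Nat.lt_of_succ_le h) (Finset.card_le_card fun i hi => ?_)
    simp only [Finset.mem_filter] at hi ⊢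
    exact ⟨hi.1, _, _, hends ⟨x, hx⟩, hi.2⟩

end ClusterExtension

/-! ### Finding a dense cluster -/

section DenseCluster

open scoped Classical

/-- A subset of a cheap cluster minimising the cost of its boundary against its size. -/
lemma exists_dense_subcluster {V J : Type} {B : Finset V} {μ : V → V → ℝ} {r : V → ℝ} {l : V → J}
    {S : ℕ} {θ : ℝ}
    (hS : ∀ j, (B.filter fun a => l a = j).card ≤ S)
    (hcost : ∑ a ∈ B, r a + ∑ a ∈ B, ∑ c ∈ B, (if l a = l c then 0 else μ a c) < θ * B.card) :
    ∃ A ⊆ B, A.Nonempty ∧ A.card ≤ S ∧ ∀ Y ⊆ A, ∑ a ∈ Y, (r a + ∑ c ∈ B \ A, μ a c) ≤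
      ∑ a ∈ Y, ∑ c ∈ A \ Y, μ c a + θ * Y.card := by
  set φ : Finset V → ℝ := fun A => ∑ a ∈ A, (r a + ∑ c ∈ B \ A, μ a c - θ) with hφ
  have hfib : ∃ j, φ (B.filter fun a => l a = j) < 0 := by
    by_contra hno
    push Not at hno
    have hsum : 0 ≤ ∑ j ∈ B.image l, φ (B.filter fun a => l a = j) :=
      Finset.sum_nonneg fun j _ => hno j
    have heq : ∑ j ∈ B.image l, φ (B.filter fun a => l a = j) =
        ∑ a ∈ B, (r a + ∑ c ∈ B, (if l a = l c then 0 else μ a c) - θ) := by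
      rw [← Finset.sum_fiberwise_of_maps_to (g := l) (t := B.image l)
        fun a ha => Finset.mem_image_of_mem l ha]
      refine Finset.sum_congr rfl fun j _ => Finset.sum_congr rfl fun a ha => ?_
      congr 2
      obtain ⟨-, rfl⟩ := Finset.mem_filter.1 ha
      rw [Finset.sum_ite, Finset.sum_const_zero, zero_add]
      refine Finset.sum_congr ?_ fun _ _ => rfl
      ext c
      simp only [Finset.mem_sdiff, Finset.mem_filter, not_and]
      exact and_congr_right fun hc => ⟨fun h h' => h hc h'.symm, fun h _ h' => h h'.symm⟩
    rw [heq, Finset.sum_sub_distrib, Finset.sum_add_distrib, Finset.sum_const, nsmul_eq_mul] at hsum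
    linarith
  obtain ⟨j, hj⟩ := hfib
  obtain ⟨A, hA, hmin⟩ := Finset.exists_min_image (B.filter fun a => l a = j).powerset φ
    ⟨_, Finset.mem_powerset_self _⟩
  rw [Finset.mem_powerset] at hA
  have hAneg : φ A < 0 := (hmin _ (Finset.mem_powerset_self _)).trans_lt hj
  have hAB : A ⊆ B := hA.trans (Finset.filter_subset _ _)
  refine ⟨A, hAB, ?_, (Finset.card_le_card hA).trans (hS j), ?_⟩
  · rw [Finset.nonempty_iff_ne_empty]
    rintro rfl
    simp [hφ] at hAneg
  · intro Y hY
    have h := hmin (A \ Y) (Finset.mem_powerset.2 (Finset.sdiff_subset.trans hA))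
    have hout : B \ (A \ Y) = (B \ A) ∪ Y := by
      ext c
      have := @hY c
      have := @hAB c
      simp only [Finset.mem_sdiff, Finset.mem_union]
      tauto
    have hdis : Disjoint (B \ A) Y := Finset.disjoint_left.2 fun c hc hc' =>
      (Finset.mem_sdiff.1 hc).2 (hY hc')
    simp only [hφ] at h
    rw [hout, ← Finset.sum_sdiff hY] at h
    simp only [Finset.sum_union hdis] at h
    have hcomm : ∑ a ∈ A \ Y, ∑ c ∈ Y, μ a c = ∑ a ∈ Y, ∑ c ∈ A \ Y, μ c a := Finset.sum_comm
    simp only [Finset.sum_sub_distrib, Finset.sum_add_distrib, Finset.sum_const, nsmul_eq_mul] at h ⊢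
    linarith

variable {V : Type} [Fintype V] {G : SimpleGraph V} {X Gd B' : Finset V} {D C : ℕ}

/-- A graph whose edges are represented by nonempty bundles is a minor. -/
lemma exists_bundleGraph (P : V → V → Prop) (hP : ∀ a c, P a c → P c a)
    (hsub : B' ⊆ G.bigIn X D) (hGd : ∀ x ∈ Gd, x ∉ G.bigIn X D)
    (hne : ∀ a c, P a c → (G.bundle X D Gd a c).Nonempty) :
    ∃ F : SimpleGraph {b // b ∈ B'}, F.IsMinor G ∧ ∀ a c, F.Adj a c ↔ a ≠ c ∧ P a.1 c.1 := by
  set Ed : Finset (Sym2 V) := ((B' ×ˢ B').filter fun p => p.1 ≠ p.2 ∧ P p.1 p.2).image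
    fun p => s(p.1, p.2) with hEd
  have hwit : ∀ e ∈ Ed, ∃ x ∈ Gd, ∀ v, v ∈ e ↔ v ∈ G.nbrIn (G.bigIn X D) x := by
    intro e he
    obtain ⟨p, hp, rfl⟩ := Finset.mem_image.1 he
    obtain ⟨x, hx⟩ := hne _ _ (Finset.mem_filter.1 hp).2.2
    obtain ⟨hx, hx'⟩ := mem_bundle.1 hx
    exact ⟨x, hx, fun v => by rw [hx']; simp⟩
  choose x hx hxe using hwit
  refine ⟨pairGraph B' Ed, pairGraph_isMinor
    (w := fun e => if he : e ∈ Ed then x e he else (Quot.out e).1) ?_ ?_, ?_⟩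
  · intro e he e' he' heq
    simp only [dif_pos (Finset.mem_coe.1 he), dif_pos (Finset.mem_coe.1 he')] at heq
    refine Sym2.ext fun v => ?_
    rw [hxe e he, hxe e' he', heq]
  · intro e he
    rw [dif_pos he]
    exact ⟨fun h => hGd _ (hx e he) (hsub h), fun y hy =>
      (mem_nbrIn.1 ((hxe e he y).1 hy)).2⟩
  · intro a c
    refine and_congr_right fun hac => ?_
    simp only [hEd, Finset.mem_image, Finset.mem_filter, Finset.mem_product]
    constructor
    · rintro ⟨p, ⟨-, -, hp⟩, h⟩
      rcases Sym2.eq_iff.1 h with ⟨h1, h2⟩ | ⟨h1, h2⟩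
      · rwa [h1, h2] at hp
      · rw [h1, h2] at hp; exact hP _ _ hp
    · intro h
      exact ⟨(a.1, c.1), ⟨⟨a.2, c.2⟩, fun h' => hac (Subtype.ext h'), h⟩, rfl⟩

lemma card_bundle_pairs_le (hG : G.MinorSparse C)
    (hsub : B' ⊆ G.bigIn X D) (hGd : ∀ x ∈ Gd, x ∉ G.bigIn X D)
    (hcard : ∀ x ∈ Gd, (G.nbrIn (G.bigIn X D) x).card = 2) :
    ((B' ×ˢ B').filter fun p => (G.bundle X D Gd p.1 p.2).Nonempty).card ≤ C * B'.card := by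
  obtain ⟨F, hF, hadj⟩ := exists_bundleGraph (B' := B')
    (fun a c => (G.bundle X D Gd a c).Nonempty)
    (fun a c h => by rwa [bundle_comm]) hsub hGd fun a c h => h
  have h := hG _ F hF
  rw [Fintype.card_coe] at h
  refine le_trans (le_trans (Finset.card_le_card ?_) (Finset.card_image_le
    (s := Finset.univ.filter fun p : {b // b ∈ B'} × {b // b ∈ B'} => F.Adj p.1 p.2)
    (f := fun p => (p.1.1, p.2.1)))) h
  rintro ⟨a, c⟩ hp
  simp only [Finset.mem_filter, Finset.mem_product] at hp
  obtain ⟨⟨ha, hc⟩, hne⟩ := hp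
  refine Finset.mem_image.2 ⟨(⟨a, ha⟩, ⟨c, hc⟩), Finset.mem_filter.2 ⟨Finset.mem_univ _,
    (hadj _ _).2 ⟨?_, hne⟩⟩, rfl⟩
  rintro h
  obtain rfl : a = c := congrArg Subtype.val h
  rw [bundle_self_eq_empty hcard] at hne
  exact Finset.not_nonempty_empty hne

/-- The total size of the bundles of size less than `τ`. -/
lemma sum_light_bundles_le (hG : G.MinorSparse C)
    (hsub : B' ⊆ G.bigIn X D) (hGd : ∀ x ∈ Gd, x ∉ G.bigIn X D)
    (hcard : ∀ x ∈ Gd, (G.nbrIn (G.bigIn X D) x).card = 2) {τ : ℝ} (hτ : 0 ≤ τ) :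
    ∑ a ∈ B', ∑ c ∈ B', (if τ ≤ (G.bundle X D Gd a c).card then 0
      else ((G.bundle X D Gd a c).card : ℝ)) ≤ C * τ * B'.card := by
  rw [← Finset.sum_product']
  calc _ ≤ ∑ p ∈ B' ×ˢ B', (if (G.bundle X D Gd p.1 p.2).Nonempty then τ else 0) := by
        refine Finset.sum_le_sum fun p _ => ?_
        by_cases hne : (G.bundle X D Gd p.1 p.2).Nonempty
        · rw [if_pos hne]
          split_ifs with h
          · exact hτ
          · exact (not_le.1 h).le
        · rw [Finset.not_nonempty_iff_eq_empty.1 hne]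
          simp
    _ = (((B' ×ˢ B').filter fun p => (G.bundle X D Gd p.1 p.2).Nonempty).card : ℝ) * τ := by
        rw [← Finset.sum_filter, Finset.sum_const, nsmul_eq_mul]
    _ ≤ ((C * B'.card : ℕ) : ℝ) * τ := by
        refine mul_le_mul_of_nonneg_right ?_ hτ
        exact_mod_cast card_bundle_pairs_le hG hsub hGd hcard
    _ = _ := by push_cast; ring

end DenseCluster

/-! ### A reducible configuration -/

section Reducible

open scoped Classical

variable {V : Type} [Fintype V]

/-- The size of the bundle between `a` and `c` if it is at least `τ`, and zero otherwise. -/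
noncomputable def SimpleGraph.heavyWeight (G : SimpleGraph V) (X : Finset V) (D : ℕ) (Gd : Finset V)
    (τ : ℝ) (a c : V) : ℝ :=
  if τ ≤ (G.bundle X D Gd a c).card then ((G.bundle X D Gd a c).card : ℝ) else 0

theorem exists_bundle_clusters (C : ℕ) (hC : 0 < C) {κ η : ℝ} (hκ : 0 < κ) (hη : 0 < η) :
    ∃ S : ℕ, ∀ (Δ : ℕ), 0 < Δ → ∀ (V : Type) [Fintype V] (G : SimpleGraph V) (X Gd B' : Finset V)
      (D : ℕ), G.MinorSparse C → B' ⊆ G.bigIn X D → (∀ x ∈ Gd, x ∉ G.bigIn X D) →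
      (∀ x ∈ Gd, (G.nbrIn (G.bigIn X D) x).card = 2) → (∀ a ∈ B', (G.nbrIn Gd a).card ≤ Δ) →
      ∃ (J : Type) (l : V → J), (∀ j, (B'.filter fun a => l a = j).card ≤ S) ∧
        ∑ a ∈ B', ∑ c ∈ B', (if l a = l c then 0 else G.heavyWeight X D Gd (κ * Δ) a c) ≤
          η * Δ * B'.card := by
  obtain ⟨S, hS⟩ := exists_bounded_clusters C ⌈1 / κ⌉₊ hC hη
  refine ⟨S, fun Δ hΔ V _ G X Gd B' D hG hsub hGd hcard hdeg => ?_⟩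
  have hΔ' : (0 : ℝ) < Δ := by exact_mod_cast hΔ
  have hτ : 0 < κ * Δ := by positivity
  have hsum : ∀ a ∈ B', ∑ c ∈ B', ((G.bundle X D Gd a c).card : ℝ) ≤ Δ := fun a ha => by
    exact_mod_cast (sum_card_bundle_le hcard a B').trans (hdeg a ha)
  obtain ⟨F, hF, hadj⟩ := exists_bundleGraph (B' := B')
    (fun a c => κ * Δ ≤ (G.bundle X D Gd a c).card)
    (fun a c h => by rwa [bundle_comm]) hsub hGd fun a c h => by
      rw [← Finset.card_pos]
      exact_mod_cast hτ.trans_le h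
  have hFdeg : ∀ i, (Finset.univ.filter fun j => F.Adj i j).card ≤ ⌈1 / κ⌉₊ := by
    intro i
    have h1 : ((Finset.univ.filter fun j => F.Adj i j).card : ℝ) * (κ * Δ) ≤ Δ := by
      refine le_trans ?_ (hsum i.1 i.2)
      rw [← nsmul_eq_mul, ← Finset.sum_coe_sort B' fun c => ((G.bundle X D Gd i c).card : ℝ)]
      refine (Finset.card_nsmul_le_sum _ _ _ fun j hj =>
        ((hadj i j).1 (Finset.mem_filter.1 hj).2).2).trans ?_
      exact Finset.sum_le_sum_of_subset_of_nonneg (Finset.subset_univ _) fun _ _ _ => by positivity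
    have h2 : ((Finset.univ.filter fun j => F.Adj i j).card : ℝ) ≤ 1 / κ := by
      rw [le_div_iff₀ hκ]
      refine le_of_mul_le_mul_right ?_ hΔ'
      linarith
    exact_mod_cast h2.trans (Nat.le_ceil _)
  have hnn : ∀ a c, 0 ≤ G.heavyWeight X D Gd (κ * Δ) a c := fun a c => by
    unfold SimpleGraph.heavyWeight
    split_ifs <;> positivity
  obtain ⟨J, _, l, hl, hcut⟩ := hS _ F (hG.of_isMinor hF) hFdeg
    (fun a c => G.heavyWeight X D Gd (κ * Δ) a c) (fun a c => hnn _ _)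
    (fun a c => by simp only [SimpleGraph.heavyWeight, bundle_comm a.1 c.1]) (by
      intro a c h
      rw [hadj] at h
      simp only [SimpleGraph.heavyWeight]
      by_cases hac : a = c
      · rw [hac, bundle_self_eq_empty hcard]
        simp
      · exact if_neg fun h' => h ⟨hac, h'⟩)
  obtain ⟨l', hl'⟩ : ∃ l' : V → Option J, ∀ a (ha : a ∈ B'), l' a = some (l ⟨a, ha⟩) :=
    ⟨fun v => if h : v ∈ B' then some (l ⟨v, h⟩) else none, fun a ha => dif_pos ha⟩
  refine ⟨Option J, l', ?_, ?_⟩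
  · intro j
    refine le_trans ((Finset.card_le_card (t := (Finset.univ.filter fun i => some (l i) = j).image
      Subtype.val) ?_).trans Finset.card_image_le) ?_
    · intro a ha
      simp only [Finset.mem_filter] at ha
      refine Finset.mem_image.2 ⟨⟨a, ha.1⟩, ?_, rfl⟩
      simp only [Finset.mem_filter, Finset.mem_univ, true_and]
      rw [← hl' a ha.1, ha.2]
    · cases j with
      | none => simp
      | some j => simpa only [Option.some_inj] using hl j
  · rw [← Finset.sum_coe_sort]
    calc _ = cutWeight (fun a c : {a // a ∈ B'} => G.heavyWeight X D Gd (κ * Δ) a c) l := by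
          unfold cutWeight
          refine Finset.sum_congr rfl fun a _ => ?_
          rw [← Finset.sum_coe_sort]
          refine Finset.sum_congr rfl fun c _ => ?_
          rw [hl' a a.2, hl' c c.2]
          simp only [Option.some_inj]
      _ ≤ _ := hcut
      _ ≤ η * ∑ a : {a // a ∈ B'}, (Δ : ℝ) := by
          refine mul_le_mul_of_nonneg_left (Finset.sum_le_sum fun a _ => ?_) hη.le
          refine le_trans (Finset.sum_le_sum fun c _ => ?_)
            ((Finset.sum_coe_sort B' fun c => ((G.bundle X D Gd a c).card : ℝ)).trans_le
              (hsum a.1 a.2))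
          simp only [SimpleGraph.heavyWeight]
          split_ifs <;> first | exact le_rfl | positivity
      _ = _ := by
          rw [Finset.sum_const, Finset.card_univ, Fintype.card_coe, nsmul_eq_mul]
          ring

variable {G : SimpleGraph V} {X Gd B' A : Finset V} {D K Δ : ℕ}

/-- The vertices of `Gd` lying in a bundle of size at least `τ` between vertices of `A`. -/
noncomputable def SimpleGraph.clusterCore (G : SimpleGraph V) (X : Finset V) (D : ℕ)
    (Gd : Finset V) (τ : ℝ) (A : Finset V) : Finset V :=
  Gd.filter fun x => ∃ a ∈ A, ∃ c ∈ A, G.nbrIn (G.bigIn X D) x = {a, c} ∧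
    τ ≤ (G.bundle X D Gd a c).card

lemma bundle_eq_of_pair_eq {R : Finset V} {a b c d : V} (h : ({a, b} : Finset V) = {c, d}) :
    G.bundle X D R a b = G.bundle X D R c d := by
  rw [SimpleGraph.bundle, h, ← SimpleGraph.bundle]

lemma card_bundle_clusterCore {τ : ℝ} {a c : V} (ha : a ∈ A) (hc : c ∈ A) :
    ((G.bundle X D (G.clusterCore X D Gd τ A) a c).card : ℝ) = G.heavyWeight X D Gd τ a c := by
  unfold SimpleGraph.heavyWeight
  split_ifs with h
  · congr 2
    ext x
    simp only [mem_bundle, SimpleGraph.clusterCore, Finset.mem_filter]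
    exact ⟨fun hx => ⟨hx.1.1, hx.2⟩, fun hx => ⟨⟨hx.1, a, ha, c, hc, hx.2, h⟩, hx.2⟩⟩
  · rw [Nat.cast_eq_zero, Finset.card_eq_zero]
    refine Finset.eq_empty_of_forall_notMem fun x hx => h ?_
    simp only [mem_bundle, SimpleGraph.clusterCore, Finset.mem_filter] at hx
    obtain ⟨⟨-, a', -, c', -, h1, h2⟩, h3⟩ := hx
    rwa [bundle_eq_of_pair_eq (h3.symm.trans h1)]

/-- Neighbours of `a` outside the core of the cluster are exceptional, or lie in light bundles, or
lie in heavy bundles leaving the cluster. -/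
lemma card_nbrIn_sdiff_clusterCore_le {τ : ℝ} {a : V} (ha : a ∈ A) (haB : a ∈ G.bigIn X D)
    (hpair : ∀ x ∈ Gd, (G.nbrIn (G.bigIn X D) x).card = 2 ∧ G.nbrIn (G.bigIn X D) x ⊆ B') :
    ((G.nbrIn (X \ G.clusterCore X D Gd τ A) a).card : ℝ) ≤ (G.nbrIn (X \ Gd) a).card +
      ∑ c ∈ B', (if τ ≤ (G.bundle X D Gd a c).card then 0
        else ((G.bundle X D Gd a c).card : ℝ)) +
      ∑ c ∈ B' \ A, G.heavyWeight X D Gd τ a c := by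
  have hsub : G.nbrIn (X \ G.clusterCore X D Gd τ A) a ⊆ (G.nbrIn (X \ Gd) a ∪
      (B'.filter fun c => ¬ τ ≤ (G.bundle X D Gd a c).card).biUnion fun c => G.bundle X D Gd a c) ∪
      ((B' \ A).filter fun c => τ ≤ (G.bundle X D Gd a c).card).biUnion
        fun c => G.bundle X D Gd a c := by
    intro x hx
    obtain ⟨hx, hax⟩ := mem_nbrIn.1 hx
    obtain ⟨hxX, hxR⟩ := Finset.mem_sdiff.1 hx
    by_cases hxG : x ∈ Gd
    · have hmem : a ∈ G.nbrIn (G.bigIn X D) x := mem_nbrIn.2 ⟨haB, hax.symm⟩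
      obtain ⟨h2, hB⟩ := hpair x hxG
      obtain ⟨c, hac, hc⟩ : ∃ c, a ≠ c ∧ G.nbrIn (G.bigIn X D) x = {a, c} := by
        obtain ⟨b, c, hbc, h⟩ := Finset.card_eq_two.1 h2
        rw [h, Finset.mem_insert, Finset.mem_singleton] at hmem
        rcases hmem with rfl | rfl
        · exact ⟨c, hbc, h⟩
        · exact ⟨b, hbc.symm, h.trans (Finset.pair_comm _ _)⟩
      have hcB : c ∈ B' := hB (by rw [hc]; simp)
      have hxb : x ∈ G.bundle X D Gd a c := mem_bundle.2 ⟨hxG, hc⟩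
      by_cases hτ : τ ≤ (G.bundle X D Gd a c).card
      · refine Finset.mem_union_right _ (Finset.mem_biUnion.2 ⟨c, Finset.mem_filter.2
          ⟨Finset.mem_sdiff.2 ⟨hcB, fun hcA => hxR ?_⟩, hτ⟩, hxb⟩)
        exact Finset.mem_filter.2 ⟨hxG, a, ha, c, hcA, hc, hτ⟩
      · exact Finset.mem_union_left _ (Finset.mem_union_right _ (Finset.mem_biUnion.2
          ⟨c, Finset.mem_filter.2 ⟨hcB, hτ⟩, hxb⟩))
    · exact Finset.mem_union_left _ (Finset.mem_union_left _
        (mem_nbrIn.2 ⟨Finset.mem_sdiff.2 ⟨hxX, hxG⟩, hax⟩))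
  have h := (Finset.card_le_card hsub).trans ((Finset.card_union_le _ _).trans
    (Nat.add_le_add ((Finset.card_union_le _ _).trans (Nat.add_le_add_left
      Finset.card_biUnion_le _)) Finset.card_biUnion_le))
  have h' : ((G.nbrIn (X \ G.clusterCore X D Gd τ A) a).card : ℝ) ≤
      (((G.nbrIn (X \ Gd) a).card + ∑ c ∈ B' with ¬ τ ≤ (G.bundle X D Gd a c).card,
        (G.bundle X D Gd a c).card + ∑ c ∈ B' \ A with τ ≤ (G.bundle X D Gd a c).card,
        (G.bundle X D Gd a c).card : ℕ) : ℝ) := by exact_mod_cast h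
  refine h'.trans_eq ?_
  push_cast
  rw [Finset.sum_filter, Finset.sum_filter]
  simp only [SimpleGraph.heavyWeight, ite_not]

end Reducible

section ReducibleExists

open scoped Classical

lemma card_eq_two_of_sum_gt {V : Type} {s : Finset V} {d : V → ℕ} {Δ : ℕ} (hs : s.card ≤ 2)
    (hd : ∀ w, d w ≤ Δ) (hsum : 3 / 2 * (Δ : ℝ) < ∑ w ∈ s, (d w : ℝ)) :
    s.card = 2 ∧ ∀ w ∈ s, Δ < 2 * d w := by
  have hd' : ∀ w, (d w : ℝ) ≤ Δ := fun w => by exact_mod_cast hd w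
  have hΔ : (0 : ℝ) ≤ Δ := by positivity
  have hcard : s.card = 2 := by
    by_contra hne
    have h1 : s.card ≤ 1 := by omega
    have h2 : ∑ w ∈ s, (d w : ℝ) ≤ s.card * Δ := by
      simpa using Finset.sum_le_card_nsmul s (fun w => (d w : ℝ)) Δ fun w _ => hd' w
    have h3 : (s.card : ℝ) * Δ ≤ 1 * Δ :=
      mul_le_mul_of_nonneg_right (by exact_mod_cast h1) hΔ
    linarith
  refine ⟨hcard, ?_⟩
  obtain ⟨a, b, hab, rfl⟩ := Finset.card_eq_two.1 hcard
  rw [Finset.sum_pair hab] at hsum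
  have key : ∀ w, (Δ : ℝ) / 2 < d w → Δ < 2 * d w := fun w hw => by
    have : (Δ : ℝ) < 2 * d w := by linarith
    exact_mod_cast this
  simp only [Finset.mem_insert, Finset.mem_singleton, forall_eq_or_imp, forall_eq]
  exact ⟨key a (by linarith [hd' b]), key b (by linarith [hd' a])⟩

/-- Either some vertex sees few vertices through big neighbours, or there is a bounded cluster of
big vertices that receives most of its neighbours from heavy bundles inside the cluster. -/
theorem exists_reducible (C : ℕ) (hC : 0 < C) {ε : ℝ} (hε0 : 0 < ε) (hε1 : ε ≤ 1) :
    ∃ (D K S N : ℕ) (κ : ℝ), 0 < κ ∧ ∀ Δ : ℕ, N ≤ Δ → ∀ (V : Type) [Fintype V]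
      (G : SimpleGraph V), G.MinorSparse C →
      ¬ (completeBipartiteGraph (Fin 3) (Fin 3)).IsMinor G → ∀ X : Finset V, X.Nonempty →
      (∀ w, (G.nbrIn X w).card ≤ Δ) →
      (∃ x, G.IsGood X D K x ∧
        ∑ w ∈ G.nbrIn (G.bigIn X D) x, ((G.nbrIn X w).card : ℝ) ≤ 3 / 2 * Δ) ∨
      ∃ R A : Finset V, R.Nonempty ∧ R ⊆ X ∧ A.card ≤ S ∧
        (∀ x ∈ R, G.nbrIn (G.bigIn X D) x ⊆ A ∧ (G.nbrIn (G.bigIn X D) x).card = 2 ∧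
          (G.smallConf X D x).card ≤ K) ∧
        (∀ a c, (G.bundle X D R a c).Nonempty → κ * Δ ≤ (G.bundle X D R a c).card) ∧
        ∀ Y ⊆ A, (∑ a ∈ Y, ((G.nbrIn (X \ R) a).card : ℝ)) ≤
          ∑ a ∈ Y, ∑ c ∈ A \ Y, ((G.bundle X D R a c).card : ℝ) + ε / 3 * Δ * Y.card := by
  have hC' : (1 : ℝ) ≤ C := by exact_mod_cast hC
  set δ : ℝ := ε / (36 * C) with hδ
  set κ : ℝ := ε / (12 * C) with hκ
  have hδ0 : 0 < δ := by positivity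
  have hκ0 : 0 < κ := by positivity
  have hδC : C * δ = ε / 36 := by rw [hδ]; field_simp
  have hκC : C * κ = ε / 12 := by rw [hκ]; field_simp
  have hδhalf : δ ≤ 1 / 2 := by nlinarith
  obtain ⟨D, K, -, hbad⟩ := exists_card_not_isGood_le C hδ0
  obtain ⟨S, hS⟩ := exists_bundle_clusters C hC hκ0 (η := ε / 12) (by positivity)
  refine ⟨D, K, S, ⌈1 / δ⌉₊ + 1, κ, hκ0, fun Δ hΔ V _ G hG hK33 X hX hdeg => ?_⟩
  have hΔ0 : 0 < Δ := by omega
  have hΔpos : (0 : ℝ) < Δ := by exact_mod_cast hΔ0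
  have hδΔ : 1 ≤ δ * Δ := by
    have h1 : 1 / δ ≤ Δ := (Nat.le_ceil _).trans (by exact_mod_cast (by omega))
    rw [div_le_iff₀ hδ0] at h1
    linarith
  rw [or_iff_not_imp_left]
  intro hno
  push Not at hno
  set Gd := X.filter fun x => G.IsGood X D K x with hGd
  have hGdX : Gd ⊆ X := Finset.filter_subset _ _
  have hgood : ∀ x ∈ Gd, G.IsGood X D K x := fun x hx => (Finset.mem_filter.1 hx).2
  have htwo : ∀ x ∈ Gd, (G.nbrIn (G.bigIn X D) x).card = 2 ∧
      ∀ w ∈ G.nbrIn (G.bigIn X D) x, Δ < 2 * (G.nbrIn X w).card := fun x hx =>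
    card_eq_two_of_sum_gt (d := fun w => (G.nbrIn X w).card) (hgood x hx).2.2.2 hdeg
      (hno x (hgood x hx))
  set B' := (G.bigIn X D).filter fun w => Δ < 2 * (G.nbrIn X w).card with hB'
  have hpair : ∀ x ∈ Gd, (G.nbrIn (G.bigIn X D) x).card = 2 ∧
      G.nbrIn (G.bigIn X D) x ⊆ B' := fun x hx => ⟨(htwo x hx).1, fun w hw =>
    Finset.mem_filter.2 ⟨(mem_nbrIn.1 hw).1, (htwo x hx).2 w hw⟩⟩
  have hB'sub : B' ⊆ G.bigIn X D := Finset.filter_subset _ _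
  have hGdcard : (Gd.card : ℝ) ≤ Δ * B'.card := by
    have h := (card_le_sum_card_nbrIn (G := G) (A := B') hGdX fun x hx => by
      obtain ⟨a, ha⟩ := Finset.card_pos.1 (two_pos.trans_eq (hpair x hx).1.symm)
      exact ⟨a, (hpair x hx).2 ha, (mem_nbrIn.1 ha).2.symm⟩).trans
      (Finset.sum_le_card_nsmul _ _ Δ fun w _ => hdeg w)
    rw [smul_eq_mul, mul_comm] at h
    exact_mod_cast h
  have hbad' : ((X \ Gd).card : ℝ) ≤ δ * X.card := by
    rw [hGd, ← Finset.filter_not]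
    exact hbad V G hG hK33 X
  have hXcard : (X.card : ℝ) ≤ 2 * (Δ * B'.card) := by
    have h : ((X \ Gd).card : ℝ) + Gd.card = X.card := by
      exact_mod_cast Finset.card_sdiff_add_card_eq_card hGdX
    have h' : δ * X.card ≤ 1 / 2 * X.card := mul_le_mul_of_nonneg_right hδhalf (by positivity)
    linarith
  have hXpos : (0 : ℝ) < X.card := by exact_mod_cast hX.card_pos
  have hB'pos : (0 : ℝ) < B'.card := by
    by_contra h
    have h0 : (B'.card : ℝ) = 0 := le_antisymm (not_lt.1 h) (by positivity)
    rw [h0] at hXcard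
    linarith
  have hexc : ∑ a ∈ B', ((G.nbrIn (X \ Gd) a).card : ℝ) ≤ ε / 12 * Δ * B'.card := by
    have h : ∑ a ∈ B', ((G.nbrIn (X \ Gd) a).card : ℝ) ≤ C * (B'.card + (X \ Gd).card) := by
      exact_mod_cast sum_card_nbrIn_le hG (X \ Gd) B'
    have h1 : δ * X.card ≤ δ * (2 * (Δ * B'.card)) := mul_le_mul_of_nonneg_left hXcard hδ0.le
    have h2 : 1 * (B'.card : ℝ) ≤ δ * Δ * B'.card := mul_le_mul_of_nonneg_right hδΔ hB'pos.le
    have h3 : C * ((B'.card : ℝ) + (X \ Gd).card) ≤ C * (3 * (δ * Δ * B'.card)) :=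
      mul_le_mul_of_nonneg_left (by linarith) (by linarith)
    have h4 : C * (3 * (δ * Δ * B'.card)) = 3 * (C * δ) * (Δ * B'.card) := by ring
    rw [h4, hδC] at h3
    linarith
  have hnotbig : ∀ x ∈ Gd, x ∉ G.bigIn X D := fun x hx => (hgood x hx).2.1
  have hlight := sum_light_bundles_le hG hB'sub hnotbig (fun x hx => (hpair x hx).1)
    (τ := κ * Δ) (by positivity)
  rw [← mul_assoc, hκC] at hlight
  obtain ⟨J, l, hl, hcut⟩ := hS Δ hΔ0 V G X Gd B' D hG hB'sub hnotbig
    (fun x hx => (hpair x hx).1) fun a _ =>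
      (Finset.card_le_card (Finset.filter_subset_filter _ hGdX)).trans (hdeg a)
  obtain ⟨A, hAB, hAne, hAS, hA⟩ := exists_dense_subcluster (B := B') (S := S)
    (μ := G.heavyWeight X D Gd (κ * Δ)) (θ := ε / 3 * Δ)
    (r := fun a => ((G.nbrIn (X \ Gd) a).card : ℝ) +
      ∑ c ∈ B', (if κ * Δ ≤ (G.bundle X D Gd a c).card then 0
        else ((G.bundle X D Gd a c).card : ℝ))) hl (by
      rw [Finset.sum_add_distrib]
      have : 0 < ε / 12 * Δ * B'.card := by positivity
      linarith)
  have hmain : ∀ Y ⊆ A, (∑ a ∈ Y, ((G.nbrIn (X \ G.clusterCore X D Gd (κ * Δ) A) a).card : ℝ)) ≤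
      ∑ a ∈ Y, ∑ c ∈ A \ Y, ((G.bundle X D (G.clusterCore X D Gd (κ * Δ) A) a c).card : ℝ) +
        ε / 3 * Δ * Y.card := by
    intro Y hY
    refine (Finset.sum_le_sum fun a ha => card_nbrIn_sdiff_clusterCore_le (hY ha)
      (hB'sub (hAB (hY ha))) hpair).trans ((hA Y hY).trans_eq ?_)
    congr 1
    refine Finset.sum_congr rfl fun a ha => Finset.sum_congr rfl fun c hc => ?_
    rw [bundle_comm, card_bundle_clusterCore (Finset.mem_sdiff.1 hc).1 (hY ha)]
  have hcore : ∀ x ∈ G.clusterCore X D Gd (κ * Δ) A, x ∈ Gd := fun x hx =>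
    (Finset.mem_filter.1 hx).1
  have hcoreA : ∀ x ∈ G.clusterCore X D Gd (κ * Δ) A, G.nbrIn (G.bigIn X D) x ⊆ A := by
    intro x hx
    obtain ⟨-, a, ha, c, hc, h, -⟩ := Finset.mem_filter.1 hx
    rw [h]
    exact Finset.insert_subset ha (Finset.singleton_subset_iff.2 hc)
  refine ⟨G.clusterCore X D Gd (κ * Δ) A, A, ?_, fun x hx => hGdX (hcore x hx), hAS,
    fun x hx => ⟨hcoreA x hx, (hpair x (hcore x hx)).1, (hgood x (hcore x hx)).2.2.1⟩, ?_, hmain⟩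
  · rw [Finset.nonempty_iff_ne_empty]
    intro hempty
    have h := hmain A subset_rfl
    rw [hempty, Finset.sdiff_empty, Finset.sdiff_self] at h
    simp only [Finset.sum_empty, Finset.sum_const_zero, zero_add] at h
    have h1 : ∑ a ∈ A, (Δ : ℝ) / 2 ≤ ∑ a ∈ A, ((G.nbrIn X a).card : ℝ) := by
      refine Finset.sum_le_sum fun a ha => ?_
      have h2 : (Δ : ℝ) < 2 * (G.nbrIn X a).card := by
        exact_mod_cast (Finset.mem_filter.1 (hAB ha)).2
      linarith
    rw [Finset.sum_const, nsmul_eq_mul] at h1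
    have h3 : (0 : ℝ) < A.card := by exact_mod_cast hAne.card_pos
    have h4 : 0 < A.card * (Δ : ℝ) := by positivity
    nlinarith
  · rintro a c ⟨x, hx⟩
    obtain ⟨hxR, hxe⟩ := mem_bundle.1 hx
    have hsub := hcoreA x hxR
    rw [hxe] at hsub
    obtain ⟨-, a', -, c', -, h1, h2⟩ := Finset.mem_filter.1 hxR
    rw [card_bundle_clusterCore (hsub (by simp)) (hsub (by simp)), SimpleGraph.heavyWeight]
    rw [bundle_eq_of_pair_eq (h1.symm.trans hxe)] at h2
    rwa [if_pos h2]

end ReducibleExists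

/-! ### Labelling the whole graph -/

section Assembly

open scoped Classical

lemma SimpleGraph.MinorSparse.mono {V : Type} {G : SimpleGraph V} {C C' : ℕ} (h : C ≤ C')
    (hG : G.MinorSparse C) : G.MinorSparse C' :=
  fun I _ Q hQ => (hG I Q hQ).trans (Nat.mul_le_mul_right _ h)

theorem exists_list_labelling_threshold {ε : ℝ} (hε0 : 0 < ε) (hε1 : ε ≤ 1) (k : ℕ) (hk : 1 ≤ k) :
    ∃ N : ℕ, ∀ Δ : ℕ, N ≤ Δ → ∀ (V : Type) [Fintype V] (G : SimpleGraph V), G.IsPlanar →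
      (∀ (X : Finset V) w, (G.nbrIn X w).card ≤ Δ) → ∀ L : V → Finset ℤ,
      (∀ v, (3 / 2 + 2 * ε) * Δ - 1 ≤ (L v).card) →
      ∀ X : Finset V, ∃ f : V → ℤ, G.ValidOn k f X ∧ ∀ x ∈ X, f x ∈ L x := by
  obtain ⟨C, hC⟩ := exists_minorSparse_of_isPlanar
  obtain ⟨D, K, S, N, κ, hκ, hred⟩ := exists_reducible (C + 1) (Nat.succ_pos C) hε0 hε1
  obtain ⟨M, hM⟩ := exists_cluster_threshold hε0 hε1 hκ S K k hk
  obtain ⟨T, hT⟩ := exists_nat_ge ((4 * k * K + 3) / ε)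
  refine ⟨max N (max M T), fun Δ hΔ V _ G hG hdeg L hL X => ?_⟩
  have hΔN : N ≤ Δ := (le_max_left _ _).trans hΔ
  have hΔM : M ≤ Δ := ((le_max_left _ _).trans (le_max_right _ _)).trans hΔ
  have hΔT : (4 * k * K + 3 : ℝ) ≤ ε * Δ := by
    have h : (T : ℝ) ≤ Δ := by
      exact_mod_cast ((le_max_right _ _).trans (le_max_right _ _)).trans hΔ
    have h' := hT.trans h
    rw [div_le_iff₀ hε0] at h'
    linarith
  have hkK : (0 : ℝ) ≤ k * K := by positivity
  induction X using Finset.strongInduction with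
  | H X ih =>
    rcases X.eq_empty_or_nonempty with rfl | hX
    · exact ⟨0, fun x hx => by simp at hx, fun x hx => by simp at hx⟩
    rcases hred Δ hΔN V G ((hC V G hG).mono (Nat.le_succ C)) hG.not_isMinor_K33 X hX (hdeg X) with
      ⟨x, hx, hsum⟩ | ⟨R, A, hRne, hRX, hAS, hR, hheavy, hcut⟩
    · obtain ⟨f, hf, hfL⟩ := ih (X \ {x}) (Finset.sdiff_ssubset
        (Finset.singleton_subset_iff.2 hx.1) (Finset.singleton_nonempty x))
      refine exists_validOn_extension_singleton (D := D) (K := K) hk hx.1 hf hfL hx.2.2.1 ?_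
      have h := hL x
      have hgoal : (∑ w ∈ G.nbrIn (G.bigIn X D) x, ((G.nbrIn X w).card : ℝ)) + 4 * k * K + 1 <
          (L x).card := by linarith
      exact_mod_cast hgoal
    · obtain ⟨f, hf, hfL⟩ := ih (X \ R) (Finset.sdiff_ssubset hRX hRne)
      refine hM Δ hΔM V G X R A D L f hAS (fun a _ => hdeg X a) hRX hR hheavy hcut
        (fun x _ => ?_) hf hfL
      have h := hL x
      linarith

end Assembly

/-- For each `ε > 0` and `k ≥ 1` there is `Δ_ε` such that every planar graph with
`Δ(G) ≥ max {Δ_ε, k⁴}` satisfies `λ^l_{k,1}(G) ≤ (3/2 + ε)Δ(G)`. -/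
theorem lambdaListNumber_planar_le (ε : ℝ) (hε : 0 < ε) (k : ℕ) (hk : 1 ≤ k) :
    ∃ Δε : ℕ, ∀ (V : Type) [Fintype V] (G : SimpleGraph V) [DecidableRel G.Adj],
      G.IsPlanar → max Δε (k ^ 4) ≤ G.maxDegree →
      (G.lambdaListNumber k 1 : ℝ) ≤ (3 / 2 + ε) * (G.maxDegree : ℝ) := by
  classical
  obtain ⟨N, hN⟩ := exists_list_labelling_threshold (ε := min (ε / 2) 1)
    (lt_min (by positivity) one_pos) (min_le_right _ _) k hk
  refine ⟨N, fun V _ G _ hG hΔ => ?_⟩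
  have hpos : 0 ≤ (3 / 2 + ε) * (G.maxDegree : ℝ) := by positivity
  refine le_trans ?_ (Nat.floor_le hpos)
  rw [Nat.cast_le]
  refine Nat.sInf_le fun L hL => ?_
  obtain ⟨f, hf, hfL⟩ := hN G.maxDegree ((le_max_left _ _).trans hΔ) V G hG (fun X w => by
      refine le_trans (Finset.card_le_card fun x hx => ?_) (G.degree_le_maxDegree w)
      exact (G.mem_neighborFinset w x).2 (mem_nbrIn.1 hx).2) L (fun v => by
      rw [hL v]
      have h1 := (Nat.sub_one_lt_floor ((3 / 2 + ε) * (G.maxDegree : ℝ))).le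
      have h2 : 2 * min (ε / 2) 1 * (G.maxDegree : ℝ) ≤ ε * G.maxDegree :=
        mul_le_mul_of_nonneg_right (by linarith [min_le_left (ε / 2) 1]) (by positivity)
      linarith) Finset.univ
  refine ⟨f, ⟨fun u v huv => (hf u (Finset.mem_univ _) v (Finset.mem_univ _) huv.ne).1 huv,
    fun u v huv _ hw => ?_⟩, fun v => hfL v (Finset.mem_univ _)⟩
  have h := (hf u (Finset.mem_univ _) v (Finset.mem_univ _) huv).2 hw
  have := abs_pos.2 (sub_ne_zero.2 h)
  push_cast
  omega
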